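/- arXiv:math/0503019 — 2 statements merged into one kernel-verified Lean document; each statement's English description precedes it below -/
import Mathlib

section
/- Let 𝔤 be a finite-dimensional complex simple Lie algebra of type G2, and let (e,h,f) be an sl2-triple in 𝔤 such that e is a distinguished nilpotent element which is not regular. Then e satisfies property (P). -/
open scoped ComplexOrder

/-- The centralizer `𝔤^e = {x ∈ 𝔤 : ⁅x, e⁆ = 0}` of an element `e`, as a Lie subalgebra. -/
def centralizer (L : Type*) [LieRing L] [LieAlgebra ℂ L] (e : L) : LieSubalgebra ℂ L where
  carrier := {x : L | ⁅x, e⁆ = 0}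
  add_mem' := fun {a b} ha hb => by
    simp only [Set.mem_setOf_eq] at *
    rw [add_lie, ha, hb, add_zero]
  zero_mem' := by simp
  smul_mem' := fun c a ha => by
    simp only [Set.mem_setOf_eq] at *
    rw [smul_lie, ha, smul_zero]
  lie_mem' := fun {a b} ha hb => by
    simp only [Set.mem_setOf_eq] at *
    simp [lie_lie, ha, hb]

/-- Membership in the centre `𝔷(𝔤^e)` of the centralizer of `e`:
`v` centralizes `e` and commutes with every element of `𝔤^e`. -/
def InCenterOfCentralizer (L : Type*) [LieRing L] [LieAlgebra ℂ L] (e v : L) : Prop :=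
  ⁅v, e⁆ = 0 ∧ ∀ y : L, ⁅y, e⁆ = 0 → ⁅v, y⁆ = 0

/-- The centre `𝔷(𝔤^e)` of the centralizer of `e`, as a subspace of `L`. -/
def zCenter (L : Type*) [LieRing L] [LieAlgebra ℂ L] (e : L) : Submodule ℂ L where
  carrier := {v : L | ⁅v, e⁆ = 0 ∧ ∀ y : L, ⁅y, e⁆ = 0 → ⁅v, y⁆ = 0}
  add_mem' := fun {a b} ha hb => ⟨by rw [add_lie, ha.1, hb.1, add_zero],
    fun y hy => by rw [add_lie, ha.2 y hy, hb.2 y hy, add_zero]⟩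
  zero_mem' := ⟨zero_lie e, fun y _ => zero_lie y⟩
  smul_mem' := fun c a ha => ⟨by rw [smul_lie, ha.1, smul_zero],
    fun y hy => by rw [smul_lie, ha.2 y hy, smul_zero]⟩

/-- Property (P) for an `sl₂`-triple `(e, h, f)`: for every nonzero `v ∈ 𝔷(𝔤^e)`, the
eigenspace `𝔷_max` of the restriction of `ad h` to `𝔷(𝔤^e)` for its largest eigenvalue is
contained in `[[f, 𝔤^e], v] = {⁅⁅f, x⁆, v⁆ : x ∈ 𝔤^e}`. -/
def PropertyP (L : Type*) [LieRing L] [LieAlgebra ℂ L] (e h f : L) : Prop :=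
  ∀ m : ℂ,
    (∃ z : L, z ≠ 0 ∧ InCenterOfCentralizer L e z ∧ ⁅h, z⁆ = m • z) →
    (∀ m' : ℂ, (∃ z : L, z ≠ 0 ∧ InCenterOfCentralizer L e z ∧ ⁅h, z⁆ = m' • z) → m' ≤ m) →
    ∀ v : L, InCenterOfCentralizer L e v → v ≠ 0 →
      ∀ z : L, InCenterOfCentralizer L e z → ⁅h, z⁆ = m • z →
        ∃ x : L, ⁅x, e⁆ = 0 ∧ ⁅⁅f, x⁆, v⁆ = z

/-- The stabilizer `{x ∈ 𝔮 : ξ(⁅x, y⁆) = 0 for all y ∈ 𝔮}` of a linear functional `ξ`. -/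
def coadStab (Q : Type*) [LieRing Q] [LieAlgebra ℂ Q] (ξ : Module.Dual ℂ Q) : Submodule ℂ Q where
  carrier := {x : Q | ∀ y : Q, ξ ⁅x, y⁆ = 0}
  add_mem' := fun {a b} ha hb y => by rw [add_lie, map_add, ha y, hb y, add_zero]
  zero_mem' := fun y => by rw [zero_lie, map_zero]
  smul_mem' := fun c a ha y => by rw [smul_lie, map_smul, ha y, smul_zero]

/-- The index of a complex Lie algebra:
`ind 𝔮 = min_{ξ ∈ 𝔮*} dim {x ∈ 𝔮 : ξ(⁅x, y⁆) = 0 for all y ∈ 𝔮}`. -/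
noncomputable def lieIndex (Q : Type*) [LieRing Q] [LieAlgebra ℂ Q] : ℕ :=
  ⨅ ξ : Module.Dual ℂ Q, Module.finrank ℂ ↥(coadStab Q ξ)

/-- A nilpotent element `e` is distinguished if the only `x ∈ 𝔤^e` such that `ad x` is a
semisimple endomorphism of `𝔤` is `x = 0`. -/
def IsDistinguished (L : Type*) [LieRing L] [LieAlgebra ℂ L] (e : L) : Prop :=
  ∀ x : L, ⁅x, e⁆ = 0 → (LieAlgebra.ad ℂ L x).IsSemisimple → x = 0

section Sl2Operators

open Polynomial

variable {V : Type*} [AddCommGroup V] [Module ℂ V] {E F H : Module.End ℂ V}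

lemma apply_pow_succ_e (hEF : ∀ v, E (F v) = F (E v) + H v)
    (hHE : ∀ v, H (E v) = E (H v) + (2 : ℂ) • E v) (k : ℕ) (v : V) :
    F ((E ^ (k + 1)) v) =
      (E ^ k) (F (E v) - (k : ℂ) • H v - ((k : ℂ) * (k + 1)) • v) := by
  induction k generalizing v with
  | zero => simp
  | succ k ih =>
    rw [pow_succ, Module.End.mul_apply, ih, pow_succ, Module.End.mul_apply]
    have h1 : F (E (E v)) = E (F (E v)) - H (E v) := by rw [hEF (E v)]; abel
    rw [h1, hHE]
    congr 1
    simp only [map_sub, map_smul]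
    push_cast
    module

lemma apply_pow_succ_f (hEF : ∀ v, E (F v) = F (E v) + H v)
    (hHF : ∀ v, H (F v) = F (H v) - (2 : ℂ) • F v) (k : ℕ) (v : V) :
    E ((F ^ (k + 1)) v) =
      (F ^ k) (F (E v) + ((k : ℂ) + 1) • H v - ((k : ℂ) * (k + 1)) • v) := by
  induction k generalizing v with
  | zero => simp [hEF]
  | succ k ih =>
    rw [pow_succ, Module.End.mul_apply, ih, pow_succ, Module.End.mul_apply, hEF, hHF]
    congr 1
    simp only [map_sub, map_smul, map_add]
    push_cast
    module

/-- An eigenvector of `[H, -]` with nonzero eigenvalue is nilpotent. -/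
lemma isNilpotent_of_comm_two_smul [FiniteDimensional ℂ V] {c : ℂ} (hc : c ≠ 0)
    (hHE : ∀ v, H (E v) = E (H v) + c • E v) : IsNilpotent E := by
  by_contra hE
  have key : ∀ k : ℕ, ∀ v, H ((E ^ k) v) = (E ^ k) (H v) + ((k : ℂ) * c) • (E ^ k) v := by
    intro k
    induction k with
    | zero => simp
    | succ k ih =>
      intro v
      rw [pow_succ, Module.End.mul_apply, ih, hHE]
      simp only [map_add, map_smul, Module.End.mul_apply]
      push_cast
      module
  let D : Module.End ℂ (Module.End ℂ V) := LinearMap.mulLeft ℂ H - LinearMap.mulRight ℂ H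
  have hD : ∀ k : ℕ, D.HasEigenvalue ((k : ℂ) * c) := by
    intro k
    refine Module.End.hasEigenvalue_of_hasEigenvector (x := E ^ k) ⟨?_, fun h => hE ⟨k, h⟩⟩
    rw [Module.End.mem_eigenspace_iff]
    ext v
    simp [D, key]
  refine Set.infinite_of_injective_forall_mem (f := fun k : ℕ => (k : ℂ) * c) ?_ hD
    (Module.End.finite_hasEigenvalue D)
  intro a b hab
  simpa [hc] using hab

/-- The polynomials `∏ j < k, (X - j(j+1))`. -/
noncomputable def sl2Poly (k : ℕ) : ℂ[X] := ∏ j ∈ Finset.range k, (X - C ((j : ℂ) * (j + 1)))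

lemma sl2Poly_succ (k : ℕ) : sl2Poly (k + 1) = sl2Poly k * (X - C ((k : ℂ) * (k + 1))) :=
  Finset.prod_range_succ _ _

/-- The polynomials `∑ j < k, (2 * j + 1) ∏ i ≠ j, (X - i(i+1))`. -/
noncomputable def sl2Aux : ℕ → ℂ[X]
  | 0 => 0
  | k + 1 => sl2Aux k * (X - C ((k : ℂ) * (k + 1))) + C (2 * (k : ℂ) + 1) * sl2Poly k

lemma isCoprime_X_sub_C_sl2Poly (k : ℕ) :
    IsCoprime (X - C ((k : ℂ) * (k + 1))) (sl2Poly k) := by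
  refine IsCoprime.prod_right fun j hj => ?_
  refine isCoprime_X_sub_C_of_isUnit_sub (IsUnit.mk0 _ ?_)
  rw [Finset.mem_range] at hj
  rw [sub_ne_zero]
  norm_cast
  nlinarith

lemma isCoprime_sl2Poly_sl2Aux (k : ℕ) : IsCoprime (sl2Poly k) (sl2Aux k) := by
  induction k with
  | zero => simpa [sl2Poly] using isCoprime_one_left
  | succ k ih =>
    have h := isCoprime_X_sub_C_sl2Poly k
    have hk : IsUnit (C (2 * (k : ℂ) + 1)) := by
      rw [isUnit_C]; exact IsUnit.mk0 _ (by norm_cast)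
    rw [sl2Poly_succ, sl2Aux]
    refine IsCoprime.mul_left ?_ ?_
    · exact (ih.mul_right h.symm).add_mul_right_right _
    · rw [add_comm (sl2Aux k * _)]
      exact ((isCoprime_mul_unit_left_right hk _ _).2 h).add_mul_right_right _

lemma exists_apply_pow_eq_aeval (hEF : ∀ v, E (F v) = F (E v) + H v)
    (hHE : ∀ v, H (E v) = E (H v) + (2 : ℂ) • E v)
    (hHF : ∀ v, H (F v) = F (H v) - (2 : ℂ) • F v) (k : ℕ) :
    ∃ a b : ℂ[X], a + b = sl2Aux k ∧ ∀ v, H (H v) = 0 →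
      (F ^ k) ((E ^ k) v) = aeval (F * E) (sl2Poly k) v - aeval (F * E) a (H v) ∧
      (E ^ k) ((F ^ k) v) = aeval (F * E) (sl2Poly k) v + aeval (F * E) b (H v) := by
  have hTH (v) : H ((F * E) v) = (F * E) (H v) := by
    simp only [Module.End.mul_apply]
    rw [hHF, hHE]
    simp
  induction k with
  | zero => exact ⟨0, 0, by simp [sl2Aux], fun v _ => by simp [sl2Poly]⟩
  | succ k ih =>
    obtain ⟨a, b, hab, h⟩ := ih
    set t : ℂ := (k : ℂ) * (k + 1) with ht
    refine ⟨a * (X - C t) + (k : ℂ) • sl2Poly k,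
      b * (X - C t) + ((k : ℂ) + 1) • sl2Poly k, ?_, fun v hv => ⟨?_, ?_⟩⟩
    · rw [sl2Aux, ← hab]; simp only [smul_eq_C_mul, map_add, map_mul, map_one, map_ofNat, ht]; ring
    · rw [pow_succ F, Module.End.mul_apply, apply_pow_succ_e hEF hHE, ← Module.End.mul_apply F E,
        (h _ _).1]
      · rw [sl2Poly_succ, ← ht]
        simp only [map_sub, map_smul, map_zero, hTH, hv, map_mul, map_add, aeval_X, aeval_C,
          Module.End.mul_apply (aeval (F * E) _), LinearMap.sub_apply, LinearMap.add_apply,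
          LinearMap.smul_apply, Module.algebraMap_end_apply]
        module
      · simp [hTH, hv, -Module.End.mul_apply]
    · rw [pow_succ E, Module.End.mul_apply, apply_pow_succ_f hEF hHF, ← Module.End.mul_apply F E,
        (h _ _).2]
      · rw [sl2Poly_succ, ← ht]
        simp only [map_sub, map_smul, map_zero, hTH, hv, map_mul, map_add, aeval_X, aeval_C,
          Module.End.mul_apply (aeval (F * E) _), LinearMap.sub_apply, LinearMap.add_apply,
          LinearMap.smul_apply, Module.algebraMap_end_apply]
        module
      · simp [hTH, hv, -Module.End.mul_apply]

lemma apply_eq_zero_of_apply_apply_eq_zero [FiniteDimensional ℂ V]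
    (hEF : ∀ v, E (F v) = F (E v) + H v)
    (hHE : ∀ v, H (E v) = E (H v) + (2 : ℂ) • E v)
    (hHF : ∀ v, H (F v) = F (H v) - (2 : ℂ) • F v) {x : V} (hx : H (H x) = 0) : H x = 0 := by
  obtain ⟨m, hm⟩ := isNilpotent_of_comm_two_smul (two_ne_zero) hHE
  obtain ⟨n, hn⟩ := isNilpotent_of_comm_two_smul (H := H) (E := F) (c := -2) (by norm_num)
    (fun v => by rw [hHF]; module)
  obtain ⟨a, b, hab, h⟩ := exists_apply_pow_eq_aeval hEF hHE hHF (m + n)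
  have hE : E ^ (m + n) = 0 := by rw [pow_add, hm, zero_mul]
  have hF : F ^ (m + n) = 0 := by rw [pow_add, hn, mul_zero]
  obtain ⟨u, v, huv⟩ := isCoprime_sl2Poly_sl2Aux (m + n)
  have h1 := h x hx
  have h2 := (h (H x) (by rw [hx, map_zero])).1
  simp only [hE, hF, LinearMap.zero_apply, hx, map_zero, sub_zero] at h1 h2
  have h3 : aeval (F * E) (sl2Aux (m + n)) (H x) = 0 := by
    rw [← hab, map_add, LinearMap.add_apply]
    have h4 := h1.2.symm.trans h1.1
    rw [sub_eq_add_neg, add_right_inj] at h4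
    rw [h4, add_neg_cancel]
  have := congrArg (fun p => aeval (F * E) p (H x)) huv
  simpa [Module.End.mul_apply, ← h2, h3] using this.symm

/-- A vector killed by `E` and with `H`-weight `c` vanishes unless `c` is a natural number. -/
lemma eq_zero_of_apply_eq_zero [FiniteDimensional ℂ V]
    (hEF : ∀ v, E (F v) = F (E v) + H v)
    (hHF : ∀ v, H (F v) = F (H v) - (2 : ℂ) • F v) {x : V} {c : ℂ} (hHx : H x = c • x)
    (hTx : F (E x) = 0) (hc : ∀ k : ℕ, c ≠ k) : x = 0 := by
  obtain ⟨n, hn⟩ := isNilpotent_of_comm_two_smul (H := H) (E := F) (c := -2) (by norm_num)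
    (fun v => by rw [hHF]; module)
  have key : ∀ k : ℕ, ∃ r : ℂ, r ≠ 0 ∧ (E ^ k) ((F ^ k) x) = r • x := by
    intro k
    induction k with
    | zero => exact ⟨1, one_ne_zero, by simp⟩
    | succ k ih =>
      obtain ⟨r, hr, hk⟩ := ih
      refine ⟨((k : ℂ) + 1) * (c - k) * r, ?_, ?_⟩
      · exact mul_ne_zero (mul_ne_zero (by norm_cast) (sub_ne_zero.2 (hc k))) hr
      · rw [pow_succ E, Module.End.mul_apply, apply_pow_succ_f hEF hHF, hTx, hHx]
        simp only [map_add, map_sub, map_smul, map_zero, hk]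
        module
  obtain ⟨r, hr, h⟩ := key n
  rw [hn] at h
  simpa [hr] using h.symm

end Sl2Operators

section Cartan
variable {L : Type*} [LieRing L] [LieAlgebra ℂ L] [FiniteDimensional ℂ L]

omit [FiniteDimensional ℂ L] in
lemma mem_centralizer {x e : L} : x ∈ centralizer L e ↔ ⁅x, e⁆ = 0 := Iff.rfl

lemma exists_isCartanSubalgebra_mem {h : L} (hh : ∀ x : L, ⁅h, ⁅h, x⁆⁆ = 0 → ⁅h, x⁆ = 0) :
    ∃ H : LieSubalgebra ℂ L, H.IsCartanSubalgebra ∧ h ∈ H := by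
  obtain ⟨x, hx⟩ := LieAlgebra.exists_isCartanSubalgebra_engel ℂ (centralizer L h)
  set K := LieSubalgebra.engel ℂ x
  have hhC : h ∈ centralizer L h := lie_self h
  have hhK : (⟨h, hhC⟩ : centralizer L h) ∈ K := by
    rw [← hx.self_normalizing, LieSubalgebra.mem_normalizer_iff]
    intro y _
    convert K.zero_mem
    ext
    have := mem_centralizer.1 y.2
    rw [← lie_skew, neg_eq_zero] at this
    simpa using this
  refine ⟨K.map (centralizer L h).incl, ⟨?_, le_antisymm (fun y hy => ?_) ?_⟩, ⟨_, hhK, rfl⟩⟩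
  · have e := LieSubalgebra.equivMapOfInjective (centralizer L h).incl K
      (by exact Subtype.val_injective)
    exact e.nilpotent_iff_equiv_nilpotent.1 hx.nilpotent
  · rw [LieSubalgebra.mem_normalizer_iff] at hy
    have hyC : y ∈ centralizer L h := by
      obtain ⟨z, -, hz⟩ := hy h ⟨_, hhK, rfl⟩
      have hz' := mem_centralizer.1 z.2
      change (z : L) = _ at hz
      rw [hz, ← lie_skew, neg_eq_zero, ← lie_skew y h, lie_neg, neg_eq_zero] at hz'
      rw [mem_centralizer, ← lie_skew, hh y hz', neg_zero]
    refine ⟨⟨y, hyC⟩, ?_, rfl⟩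
    change _ ∈ K
    rw [← hx.self_normalizing, LieSubalgebra.mem_normalizer_iff]
    intro z hz
    obtain ⟨w, hw, hw'⟩ := hy z ⟨_, hz, rfl⟩
    have hw'' : w = ⁅(⟨y, hyC⟩ : centralizer L h), z⁆ := Subtype.ext hw'
    rwa [← hw'']
  · exact LieSubalgebra.le_normalizer _

lemma exists_isCartanSubalgebra_finrank_eq_rank :
    ∃ H : LieSubalgebra ℂ L, H.IsCartanSubalgebra ∧ Module.finrank ℂ H = LieAlgebra.rank ℂ L := by
  obtain ⟨x, hx⟩ := LieAlgebra.exists_isRegular ℂ L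
  refine ⟨LieSubalgebra.engel ℂ x, ?_, (LieAlgebra.isRegular_iff_finrank_engel_eq_rank ℂ x).1 hx⟩
  refine ⟨?_, LieSubalgebra.normalizer_engel _ _⟩
  have hle : (Module.finrank ℂ L : Cardinal) ≤ Cardinal.mk ℂ :=
    Cardinal.natCast_le_aleph0.trans (Cardinal.infinite_iff.1 inferInstance)
  refine LieSubalgebra.isNilpotent_of_forall_le_engel _ fun y hy => ?_
  set Ex : {LieSubalgebra.engel ℂ z | z ∈ LieSubalgebra.engel ℂ x} :=
    ⟨LieSubalgebra.engel ℂ x, x, LieSubalgebra.self_mem_engel _ _, rfl⟩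
  suffices IsBot Ex from @this ⟨LieSubalgebra.engel ℂ y, y, hy, rfl⟩
  apply LieAlgebra.engel_isBot_of_isMin hle (LieSubalgebra.engel ℂ x) Ex le_rfl
  rintro ⟨_, y, hy, rfl⟩ hyx
  suffices Module.finrank ℂ (LieSubalgebra.engel ℂ x) ≤
      Module.finrank ℂ (LieSubalgebra.engel ℂ y) by
    suffices LieSubalgebra.engel ℂ y = LieSubalgebra.engel ℂ x from this.ge
    apply LieSubalgebra.toSubmodule_injective
    exact Submodule.eq_of_le_of_finrank_le hyx this
  rw [(LieAlgebra.isRegular_iff_finrank_engel_eq_rank ℂ x).mp hx]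
  apply LieAlgebra.rank_le_finrank_engel
end Cartan

section RootSystems
namespace RootPairing

/-- The possible values of `(⟨α, β^∨⟩, ⟨β, α^∨⟩)` in a root system other than `G₂`. -/
def smallPairs : Finset (ℤ × ℤ) :=
  {(0, 0), (1, 1), (-1, -1), (1, 2), (2, 1), (-1, -2), (-2, -1), (2, 2), (-2, -2)}

lemma mem_Icc_of_mem_smallPairs {x : ℤ × ℤ} (hx : x ∈ smallPairs) :
    x.1 ∈ Finset.Icc (-2) 2 ∧ x.2 ∈ Finset.Icc (-2) 2 := by
  revert x; decide

lemma eq_of_mem_smallPairs {x : ℤ × ℤ} (hx : x ∈ smallPairs) (h1 : x.1 < 0) (h2 : x ≠ (-2, -2)) :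
    x.swap = (-1, -1) ∨ x.swap = (-1, -2) ∨ x.swap = (-2, -1) := by
  revert x; decide

lemma exists_finset_card_lt_twelve {a b : ℤ}
    (hab : (a, b) = (-1, -1) ∨ (a, b) = (-1, -2) ∨ (a, b) = (-2, -1)) :
    ∃ S : Finset (ℤ × ℤ), S.card < 12 ∧ ∀ p q p' q' m n : ℤ, (p, p') ∈ smallPairs →
      (q, q') ∈ smallPairs → p = 2 * m + n * a → q = m * b + 2 * n → m * p' + n * q' = 2 →
      (p, q) ∈ S := by
  have key : ∀ S : Finset (ℤ × ℤ), (∀ m ∈ Finset.Icc (-4 : ℤ) 4, ∀ n ∈ Finset.Icc (-4 : ℤ) 4,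
      ∀ p' ∈ Finset.Icc (-2 : ℤ) 2, ∀ q' ∈ Finset.Icc (-2 : ℤ) 2,
      m * p' + n * q' = 2 → (2 * m + n * a, p') ∈ smallPairs → (m * b + 2 * n, q') ∈ smallPairs →
        (2 * m + n * a, m * b + 2 * n) ∈ S) →
      ∀ p q p' q' m n : ℤ, (p, p') ∈ smallPairs →
      (q, q') ∈ smallPairs → p = 2 * m + n * a → q = m * b + 2 * n → m * p' + n * q' = 2 →
      (p, q) ∈ S := by
    rintro S h p q p' q' m n hp hq rfl rfl h3
    have hp' := mem_Icc_of_mem_smallPairs hp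
    have hq' := mem_Icc_of_mem_smallPairs hq
    refine h m ?_ n ?_ p' hp'.2 q' hq'.2 h3 hp hq <;>
    · have h1 := hp'.1
      have h2 := hq'.1
      rw [Finset.mem_Icc] at h1 h2 ⊢
      rcases hab with h | h | h <;> obtain ⟨rfl, rfl⟩ := Prod.mk.inj h <;> omega
  rcases hab with h | h | h <;> obtain ⟨rfl, rfl⟩ := Prod.mk.inj h
  · exact ⟨{(1, 1), (-1, -1), (2, 2), (-2, -2), (1, -2), (-1, 2), (2, -1), (-2, 1)},
      by decide, key _ (by decide +kernel)⟩
  · exact ⟨{(1, 0), (-1, 0), (0, 2), (0, -2), (1, -2), (-1, 2), (2, -2), (-2, 2), (2, 0),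
      (-2, 0)}, by decide, key _ (by decide +kernel)⟩
  · exact ⟨{(0, 1), (0, -1), (2, 0), (-2, 0), (-2, 1), (2, -1), (-2, 2), (2, -2), (0, 2),
      (0, -2)}, by decide, key _ (by decide +kernel)⟩

variable {ι M N : Type*} [Fintype ι] [AddCommGroup M] [Module ℂ M] [AddCommGroup N] [Module ℂ N]
  {P : RootPairing ι ℂ M N} [P.IsCrystallographic]

omit [P.IsCrystallographic] in
open Classical in
lemma Base.card_eq_two_mul_card_pos (b : P.Base) :
    Fintype.card ι = 2 * (Finset.univ.filter b.IsPos).card := by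
  let := P.indexNeg
  rw [two_mul, ← Finset.card_univ,
    ← Finset.card_filter_add_card_filter_not (s := Finset.univ) b.IsPos]
  congr 1
  refine Finset.card_bij' (fun i _ => -i) (fun i _ => -i) ?_ ?_ ?_ ?_
  · intro i hi
    rw [Finset.mem_filter] at hi ⊢
    exact ⟨Finset.mem_univ _, (Base.IsPos.neg_iff_not b i).2 hi.2⟩
  · intro i hi
    rw [Finset.mem_filter] at hi ⊢
    exact ⟨Finset.mem_univ _, fun h => (Base.IsPos.neg_iff_not b i).1 h hi.2⟩
  · exact fun i _ => neg_neg i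
  · exact fun i _ => neg_neg i

variable [P.IsReduced] [P.IsIrreducible]

/-- Every simple root is linked to another one, as soon as there are two of them. -/
lemma Base.exists_pairingIn_lt_zero (b : P.Base) {i j : ι} (hi : i ∈ b.support)
    (hj : j ∈ b.support) (hij : i ≠ j) :
    ∃ k ∈ b.support, k ≠ i ∧ P.pairingIn ℤ i k < 0 := by
  by_contra! hcon
  refine hij ?_
  have := b.induction_on_cartanMatrix (fun k => (k : ι) = i) (i := ⟨i, hi⟩) (j := ⟨j, hj⟩) rfl ?_
  · exact this.symm
  · rintro k l rfl hkl
    by_contra hlk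
    refine hkl ?_
    rw [Base.cartanMatrix_apply_eq_zero_iff_symm]
    exact le_antisymm (b.pairingIn_le_zero_of_ne (Ne.symm hlk) k.2 l.2) (hcon l l.2 hlk)

lemma Base.card_support_ne_four (b : P.Base) (hcard : Fintype.card ι < 12) :
    b.support.card ≠ 4 := by
  classical
  intro h4
  have hinj := P.root.injective
  have key : ∀ i ∈ b.support, ∃ j ∈ b.support, j ≠ i ∧ ∃ k, P.root k = P.root i + P.root j := by
    intro i hi
    obtain ⟨l, hl, hli⟩ := Finset.exists_mem_ne (s := b.support) (by omega) i
    obtain ⟨j, hj, hji, hneg⟩ := b.exists_pairingIn_lt_zero hi hl hli.symm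
    obtain ⟨k, hk⟩ := P.root_add_root_mem_of_pairingIn_neg hneg
      (b.root_ne_neg_of_ne hi hj hji.symm)
    exact ⟨j, hj, hji, k, hk⟩
  obtain ⟨i, hi⟩ := Finset.card_pos.1 (by omega : 0 < b.support.card)
  obtain ⟨j, hj, hji, k, hk⟩ := key i hi
  obtain ⟨i', hi', hi'ij⟩ := Finset.exists_mem_notMem_of_card_lt_card (s := {i, j})
    (t := b.support) (by rw [h4]; exact Finset.card_le_two.trans_lt (by norm_num))
  simp only [Finset.mem_insert, Finset.mem_singleton, not_or] at hi'ij
  obtain ⟨j', hj', hji', k', hk'⟩ := key i' hi'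
  have hht : ∀ {i j k}, i ∈ b.support → j ∈ b.support → P.root k = P.root i + P.root j →
      b.height k = 2 := by
    intro i j k hi hj hk
    rw [b.height_add hk, b.height_one_of_mem_support hi, b.height_one_of_mem_support hj]; rfl
  have hkk' : k ≠ k' := by
    rintro rfl
    rw [hk] at hk'
    let w : ι → ℂ := fun l => if l = i' then 1 else 0
    have hli := b.linearIndepOn_root
    rw [linearIndepOn_finset_iff] at hli
    have h0 := hli (fun l => (if l = i then 1 else 0) + (if l = j then 1 else 0) -
      (if l = i' then 1 else 0) - (if l = j' then 1 else 0))
      (by simp [sub_smul, add_smul, Finset.sum_add_distrib, hi, hj, hi', hj', hk']) i' hi'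
    simp [hi'ij.1, hi'ij.2, hji'.symm] at h0
  have hsub : insert k (insert k' b.support) ⊆ Finset.univ.filter b.IsPos := by
    intro l hl
    simp only [Finset.mem_insert] at hl
    simp only [Finset.mem_filter, Finset.mem_univ, true_and, b.isPos_iff]
    rcases hl with rfl | rfl | hl
    · simp [hht hi hj hk]
    · simp [hht hi' hj' hk']
    · simp [b.height_one_of_mem_support hl]
  have := Finset.card_le_card hsub
  have hn : ∀ l ∈ b.support, b.height l ≠ 2 := fun l hl => by
    simp [b.height_one_of_mem_support hl]
  rw [Finset.card_insert_of_notMem, Finset.card_insert_of_notMem, h4] at this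
  · have := b.card_eq_two_mul_card_pos
    omega
  · exact fun h => hn k' h (hht hi' hj' hk')
  · simp only [Finset.mem_insert, not_or]
    exact ⟨hkk', fun h => hn k h (hht hi hj hk)⟩

omit [Fintype ι] [P.IsReduced] [P.IsIrreducible] in
lemma pairingIn_eq_of_root_eq {i j k : ι} {m n : ℤ} (hk : P.root k = m • P.root i + n • P.root j)
    (l : ι) : P.pairingIn ℤ k l = m * P.pairingIn ℤ i l + n * P.pairingIn ℤ j l := by
  have h := congrArg (P.coroot' l) hk
  simp only [map_add, map_zsmul, root_coroot'_eq_pairing, zsmul_eq_mul] at h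
  simp only [← P.algebraMap_pairingIn ℤ, algebraMap_int_eq, eq_intCast] at h
  exact_mod_cast h

omit [Fintype ι] [P.IsReduced] [P.IsIrreducible] in
lemma pairingIn_eq_of_root_eq' {i j k : ι} {m n : ℤ} (hk : P.root k = m • P.root i + n • P.root j) :
    m * P.pairingIn ℤ i k + n * P.pairingIn ℤ j k = 2 := by
  rw [← pairingIn_eq_of_root_eq hk, pairingIn_same]

lemma Base.card_lt_twelve_of_not_isG2 (b : P.Base) (h2 : b.support.card = 2) (hG : ¬ P.IsG2) :
    Fintype.card ι < 12 := by
  classical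
  rw [not_isG2_iff_isNotG2, isNotG2_iff] at hG
  obtain ⟨i, j, hij, hb⟩ := Finset.card_eq_two.1 h2
  have hi : i ∈ b.support := by simp [hb]
  have hj : j ∈ b.support := by simp [hb]
  have hlt : P.pairingIn ℤ i j < 0 := by
    obtain ⟨k, hk, hki, hlt⟩ := b.exists_pairingIn_lt_zero hi hj hij
    have : k = j := by simpa [hb, hki] using hk
    rwa [← this]
  have hmem : ∀ k l, P.pairingIn ℤ k l ∈ Finset.Icc (-2 : ℤ) 2 := by
    intro k l
    have := hG k l
    simp only [Set.mem_insert_iff, Set.mem_singleton_iff] at this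
    rw [Finset.mem_Icc]
    omega
  have hroot : ∀ k, ∃ m n : ℤ, P.root k = m • P.root i + n • P.root j := by
    intro k
    obtain ⟨f, -, -, hf⟩ := b.exists_root_eq_sum_int k
    exact ⟨f i, f j, by rw [hf, hb, Finset.sum_pair hij]⟩
  have hpair : ∀ k l, (P.pairingIn ℤ k l, P.pairingIn ℤ l k) ∈ smallPairs := by
    intro k l
    have h1 := P.pairingIn_pairingIn_mem_set_of_isCrystal_of_isRed k l
    have h2 := hmem k l
    have h3 := hmem l k
    rcases h1 with h | h | h | h | h | h | h | h | h | h | h | h | h <;>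
    · obtain ⟨h4, h5⟩ := Prod.mk.inj h
      rw [h4] at h2
      rw [h5] at h3
      rw [h4, h5]
      revert h2 h3
      decide
  have hgij : (P.pairingIn ℤ j i, P.pairingIn ℤ i j) = (-1, -1) ∨
      (P.pairingIn ℤ j i, P.pairingIn ℤ i j) = (-1, -2) ∨
      (P.pairingIn ℤ j i, P.pairingIn ℤ i j) = (-2, -1) := by
    refine eq_of_mem_smallPairs (hpair i j) hlt fun h => b.root_ne_neg_of_ne hi hj hij ?_
    exact (P.pairingIn_neg_two_neg_two_iff ℤ i j).1 (Prod.mk.inj h)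
  let g : ι → ℤ × ℤ := fun k => (P.pairingIn ℤ k i, P.pairingIn ℤ k j)
  have hinj : Function.Injective g := by
    intro k l hkl
    obtain ⟨m, n, hk⟩ := hroot k
    obtain ⟨m', n', hl⟩ := hroot l
    simp only [g, Prod.mk.injEq, pairingIn_eq_of_root_eq hk, pairingIn_eq_of_root_eq hl,
      pairingIn_same] at hkl
    have hmn : m = m' ∧ n = n' := by
      simp only [Prod.mk.injEq] at hgij
      rcases hgij with h | h | h <;> rw [h.1, h.2] at hkl <;> omega
    exact P.root.injective (by rw [hk, hl, hmn.1, hmn.2])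
  obtain ⟨S, hS, hgS⟩ := exists_finset_card_lt_twelve hgij
  have hgS' : ∀ k, g k ∈ S := by
    intro k
    obtain ⟨m, n, hk⟩ := hroot k
    refine hgS _ _ (P.pairingIn ℤ i k) (P.pairingIn ℤ j k) m n (hpair k i) (hpair k j) ?_ ?_
      (pairingIn_eq_of_root_eq' hk)
    · rw [pairingIn_eq_of_root_eq hk, pairingIn_same, mul_comm m]
    · rw [pairingIn_eq_of_root_eq hk, pairingIn_same, mul_comm n]
  calc Fintype.card ι = (Finset.univ.image g).card := by
        rw [Finset.card_image_of_injective _ hinj, Finset.card_univ]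
    _ ≤ S.card := Finset.card_le_card (by simpa [Finset.subset_iff] using hgS')
    _ < 12 := hS

lemma isG2_of_card_add_finrank [P.IsRootSystem]
    (h : Fintype.card ι + Module.finrank ℂ M = 14) : P.IsG2 := by
  by_contra hG
  obtain ⟨b⟩ := nonempty_base (P := P)
  have hr : Module.finrank ℂ M = b.support.card := by
    rw [Module.finrank_eq_card_basis b.toWeightBasis, Fintype.card_coe]
  classical
  have hpos := b.card_eq_two_mul_card_pos
  have hle : b.support.card ≤ (Finset.univ.filter b.IsPos).card := by
    refine Finset.card_le_card fun i hi => ?_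
    simp [b.isPos_iff, b.height_one_of_mem_support hi]
  rw [hr] at h
  have h0 : b.support.card ≠ 0 := by
    intro h0
    have : Nonempty ι := Fintype.card_pos_iff.1 (by omega)
    exact (Finset.card_pos.2 b.support_nonempty).ne' h0
  have h4 := b.card_support_ne_four
  have h2 := fun h => b.card_lt_twelve_of_not_isG2 h hG
  omega

end RootPairing
end RootSystems

section SerreGenerators

open Module LieAlgebra CartanMatrix

variable {L : Type*} [LieRing L] [LieAlgebra ℂ L]

/-- The quotient map of a Lie algebra by an ideal, as a morphism of Lie algebras. -/
def lieQuotientMk (I : LieIdeal ℂ L) : L →ₗ⁅ℂ⁆ L ⧸ I where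
  toLinearMap := (LieSubmodule.Quotient.mk' I : L →ₗ[ℂ] L ⧸ I)
  map_lie' {x y} := LieSubmodule.Quotient.mk_bracket I x y

/-- The quotient map from a free Lie algebra to a Lie algebra defined by a Cartan matrix. -/
noncomputable def serreMk {B : Type*} [DecidableEq B] (A : Matrix B B ℤ) :
    FreeLieAlgebra ℂ (Generators B) →ₗ⁅ℂ⁆ Matrix.ToLieAlgebra ℂ A :=
  lieQuotientMk (Relations.toIdeal ℂ A)

lemma serreMk_surjective {B : Type*} [DecidableEq B] (A : Matrix B B ℤ) :
    Function.Surjective (serreMk A) :=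
  LieSubmodule.Quotient.surjective_mk' (Relations.toIdeal ℂ A)

lemma serreMk_eq_zero {B : Type*} [DecidableEq B] {A : Matrix B B ℤ}
    {x : FreeLieAlgebra ℂ (Generators B)} (hx : x ∈ Relations.toSet ℂ A) : serreMk A x = 0 :=
  (LieSubmodule.Quotient.mk_eq_zero (Relations.toIdeal ℂ A)).2 (LieSubmodule.subset_lieSpan hx)

lemma exists_serre_generators {B : Type*} [DecidableEq B] {A : Matrix B B ℤ}
    (φ : L ≃ₗ⁅ℂ⁆ Matrix.ToLieAlgebra ℂ A) :
    ∃ h e f : B → L, (∀ i j, ⁅h i, h j⁆ = 0) ∧ (∀ i, ⁅e i, f i⁆ = h i) ∧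
      (∀ i j, i ≠ j → ⁅e i, f j⁆ = 0) ∧ (∀ i j, ⁅h i, e j⁆ = A i j • e j) ∧
      (∀ i j, ⁅h i, f j⁆ = -A i j • f j) ∧
      LieSubalgebra.lieSpan ℂ L (Set.range e ∪ Set.range f) = ⊤ := by
  let π : FreeLieAlgebra ℂ (Generators B) →ₗ⁅ℂ⁆ L := φ.symm.toLieHom.comp (serreMk A)
  have hπ : Function.Surjective π := φ.symm.surjective.comp (serreMk_surjective A)
  have hπ0 : ∀ x ∈ Relations.toSet ℂ A, π x = 0 := fun x hx => by
    change φ.symm (serreMk A x) = 0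
    rw [serreMk_eq_zero hx, map_zero]
  let h := fun i => π (FreeLieAlgebra.of ℂ (Generators.H i))
  let e := fun i => π (FreeLieAlgebra.of ℂ (Generators.E i))
  let f := fun i => π (FreeLieAlgebra.of ℂ (Generators.F i))
  have hef : ∀ i, ⁅e i, f i⁆ = h i := fun i => by
    have := hπ0 (Relations.EF ℂ (i, i)) (by simp [Relations.toSet])
    simpa [Relations.EF, sub_eq_zero] using this
  refine ⟨h, e, f, fun i j => ?_, hef, fun i j hij => ?_, fun i j => ?_, fun i j => ?_, ?_⟩
  · have := hπ0 (Relations.HH ℂ (i, j)) (by simp [Relations.toSet])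
    simpa [Relations.HH] using this
  · have := hπ0 (Relations.EF ℂ (i, j)) (by simp [Relations.toSet])
    simpa [Relations.EF, hij] using this
  · have := hπ0 (Relations.HE ℂ A (i, j)) (by simp [Relations.toSet])
    simpa [Relations.HE, sub_eq_zero] using this
  · have := hπ0 (Relations.HF ℂ A (i, j)) (by simp [Relations.toSet])
    simpa [Relations.HF, add_eq_zero_iff_eq_neg] using this
  · set S := LieSubalgebra.lieSpan ℂ L (Set.range e ∪ Set.range f)
    have hgen : ∀ x, π (FreeLieAlgebra.of ℂ x) ∈ S := by
      have he : ∀ i, e i ∈ S := fun i => LieSubalgebra.subset_lieSpan (Or.inl ⟨i, rfl⟩)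
      have hf : ∀ i, f i ∈ S := fun i => LieSubalgebra.subset_lieSpan (Or.inr ⟨i, rfl⟩)
      rintro (i | i | i)
      · change h i ∈ S
        rw [← hef]
        exact S.lie_mem (he i) (hf i)
      · exact he i
      · exact hf i
    have hcomp : S.incl.comp (FreeLieAlgebra.lift ℂ fun x => (⟨_, hgen x⟩ : S)) = π := by
      ext x
      simp
    refine eq_top_iff.2 fun x _ => ?_
    obtain ⟨y, rfl⟩ := hπ x
    rw [← hcomp]
    exact Subtype.prop _

lemma exists_basis_of_g₂ [Nontrivial L] (φ : L ≃ₗ⁅ℂ⁆ LieAlgebra.g₂ ℂ) :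
    ∃ (H : LieSubalgebra ℂ L) (b : LieAlgebra.Basis (Fin 2) H), b.A 1 0 = -3 := by
  obtain ⟨h, e, f, hhh, hef, hef', hhe, hhf, hspan⟩ := exists_serre_generators φ
  have hA : ∀ i j, (CartanMatrix.G₂ i j : ℂ) ≠ 0 := by
    intro i j
    fin_cases i <;> fin_cases j <;> simp [CartanMatrix.G₂]
  have he : ∀ i, e i ≠ 0 := by
    intro i hi
    have hi' : h i = 0 := by rw [← hef, hi, zero_lie]
    have he' : ∀ j, e j = 0 := fun j => by
      have := hhe i j
      rw [hi', zero_lie, ← Int.cast_smul_eq_zsmul ℂ] at this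
      exact (smul_eq_zero.1 this.symm).resolve_left (hA i j)
    have hf' : ∀ j, f j = 0 := fun j => by
      have := hhf i j
      rw [hi', zero_lie, neg_smul, zero_eq_neg, ← Int.cast_smul_eq_zsmul ℂ] at this
      exact (smul_eq_zero.1 this).resolve_left (hA i j)
    have hbot : LieSubalgebra.lieSpan ℂ L (Set.range e ∪ Set.range f) ≤ ⊥ := by
      rw [LieSubalgebra.lieSpan_le]
      rintro _ (⟨j, rfl⟩ | ⟨j, rfl⟩)
      · simp [he']
      · simp [hf']
    rw [hspan] at hbot
    obtain ⟨x, hx⟩ := exists_ne (0 : L)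
    exact hx (by simpa using hbot (LieSubalgebra.mem_top x))
  refine ⟨LieSubalgebra.lieSpan ℂ L (Set.range h), {
    A := CartanMatrix.G₂.transpose
    h := h
    e := e
    f := f
    cartan_eq_lieSpan := rfl
    span_ef := hspan
    linInd := ?_
    nondegen := Matrix.nondegenerate_of_det_ne_zero (by simp [CartanMatrix.G₂_det])
    sl2 := fun i => ⟨?_, hef i, ?_, ?_⟩
    lie_h_h := hhh
    lie_h_e := fun i j => hhe j i
    lie_h_f := fun i j => hhf j i
    lie_e_f_ne := hef' }, rfl⟩
  · rw [Fintype.linearIndependent_iff]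
    intro g hg
    rw [Fin.sum_univ_two] at hg
    have key : ∀ j, g 0 * CartanMatrix.G₂ 0 j + g 1 * CartanMatrix.G₂ 1 j = 0 := by
      intro j
      have := congrArg (⁅·, e j⁆) hg
      simp only [add_lie, smul_lie, hhe, zero_lie, ← Int.cast_smul_eq_zsmul ℂ, smul_smul,
        ← add_smul] at this
      exact (smul_eq_zero.1 this).resolve_right (he j)
    have h0 := key 0
    have h1 := key 1
    simp [CartanMatrix.G₂] at h0 h1
    have hg0 : g 0 = 0 := by linear_combination 2 * h0 + h1
    have hg1 : g 1 = 0 := by linear_combination 3 * h0 + 2 * h1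
    intro i
    fin_cases i
    exacts [hg0, hg1]
  · intro hi
    have := hhe i i
    rw [hi, zero_lie, ← Int.cast_smul_eq_zsmul ℂ] at this
    exact (smul_eq_zero.1 this.symm).elim (hA i i) (he i)
  · rw [hhe]
    fin_cases i <;> simp [CartanMatrix.G₂, two_smul]
  · rw [hhf]
    fin_cases i <;> simp [CartanMatrix.G₂, two_smul]
end SerreGenerators

section EigenspaceDimensions

open Module LieAlgebra LieModule

open Classical in
lemma finrank_eigenspace_eq_card {V κ : Type*} [AddCommGroup V] [Module ℂ V] [Fintype κ]
    (b : Basis κ ℂ V) {T : Module.End ℂ V} {μ : κ → ℂ} (hT : ∀ k, T (b k) = μ k • b k) (c : ℂ) :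
    finrank ℂ (T.eigenspace c) = (Finset.univ.filter fun k => μ k = c).card := by
  have hrepr : ∀ x k, b.repr (T x) k = μ k * b.repr x k := by
    intro x k
    have : b.coord k ∘ₗ T = μ k • b.coord k := b.ext fun l => by
      by_cases hkl : l = k
      · simp [hT, hkl]
      · simp [hT, Finsupp.single_eq_of_ne' hkl]
    simpa using LinearMap.congr_fun this x
  have hspan : T.eigenspace c = Submodule.span ℂ (Set.range fun k : {k // μ k = c} => b k) := by
    have : (Set.range fun k : {k // μ k = c} => b k) = b '' {k | μ k = c} := by
      ext x; simp
    rw [this]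
    ext x
    rw [b.mem_span_image, Module.End.mem_eigenspace_iff]
    refine ⟨fun hx k hk => ?_, fun hx => ?_⟩
    · have h := hrepr x k
      rw [hx, map_smul, Finsupp.smul_apply, smul_eq_mul] at h
      exact (mul_right_cancel₀ (Finsupp.mem_support_iff.1 hk) h).symm
    · refine b.repr.injective (Finsupp.ext fun k => ?_)
      rw [hrepr, map_smul, Finsupp.smul_apply, smul_eq_mul]
      by_cases hk : b.repr x k = 0
      · simp [hk]
      · rw [show μ k = c from hx (Finsupp.mem_support_iff.2 hk)]
  have hli : LinearIndependent ℂ fun k : {k // μ k = c} => b k :=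
    b.linearIndependent.comp _ Subtype.val_injective
  rw [hspan, finrank_span_eq_card hli, Fintype.card_subtype]

variable {L : Type*} [LieRing L] [LieAlgebra ℂ L] [FiniteDimensional ℂ L] [IsKilling ℂ L]
  (H : LieSubalgebra ℂ L) [H.IsCartanSubalgebra]

omit [IsKilling ℂ L] in
open Classical in
lemma isInternal_rootSpace :
    DirectSum.IsInternal fun χ : Weight ℂ H L => (rootSpace H χ).toSubmodule := by
  exact DirectSum.isInternal_submodule_of_iSupIndep_of_iSup_eq_top
    (LieSubmodule.iSupIndep_toSubmodule.mpr <| iSupIndep_genWeightSpace' ℂ H L)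
    (LieSubmodule.iSup_toSubmodule_eq_top.mpr <| iSup_genWeightSpace_eq_top' ℂ H L)

open Classical in
lemma sum_finrank_rootSpace [Nontrivial L] (p : Weight ℂ H L → Prop) :
    ∑ χ : Weight ℂ H L with p χ, finrank ℂ (rootSpace H χ) =
      (H.root.filter p).card + if p 0 then finrank ℂ H else 0 := by
  have hzero : finrank ℂ (rootSpace H ((0 : Weight ℂ H L) : H → ℂ)) = finrank ℂ H := by
    have : (rootSpace H ((0 : Weight ℂ H L) : H → ℂ)) = H.toLieSubmodule := rootSpace_zero_eq ℂ L H
    rw [this]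
    rfl
  have huniv : (Finset.univ : Finset (Weight ℂ H L)) = insert 0 H.root := by
    ext χ
    have : χ = 0 ∨ χ.IsNonZero := by
      rw [Weight.isNonZero_iff_ne_zero]; tauto
    simpa using this
  have h0 : (0 : Weight ℂ H L) ∉ H.root := by simp [Weight.isZero_zero]
  rw [huniv, Finset.filter_insert]
  have hroot : ∑ χ ∈ H.root.filter p, finrank ℂ (rootSpace H χ) = (H.root.filter p).card := by
    rw [Finset.card_eq_sum_ones]
    refine Finset.sum_congr rfl fun χ hχ => IsKilling.finrank_rootSpace_eq_one χ ?_
    simpa using (Finset.mem_filter.1 hχ).1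
  split_ifs with hp
  · rw [Finset.sum_insert (by simp [h0]), hroot, hzero, add_comm]
  · rw [hroot, add_zero]

open Classical in
lemma finrank_eigenspace_ad [Nontrivial L] (h : H) (c : ℂ) :
    finrank ℂ ((ad ℂ L h).eigenspace c) =
      (H.root.filter fun α => α h = c).card + if c = 0 then finrank ℂ H else 0 := by
  let b := (isInternal_rootSpace H).collectedBasis fun χ => finBasis ℂ (rootSpace H χ)
  have hb : ∀ k, ad ℂ L h (b k) = k.1 h • b k := fun k => by
    have := (isInternal_rootSpace H).collectedBasis_mem (fun χ => finBasis ℂ (rootSpace H χ)) k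
    exact IsKilling.lie_eq_smul_of_mem_rootSpace this h
  have h0 : (((0 : Weight ℂ H L) : H → ℂ) h = c) ↔ c = 0 := eq_comm
  have hsum := sum_finrank_rootSpace H fun χ => χ h = c
  simp only [h0] at hsum
  rw [finrank_eigenspace_eq_card b hb, ← hsum]
  rw [Finset.card_filter, ← Finset.univ_sigma_univ, Finset.sum_sigma, Finset.sum_filter]
  refine Finset.sum_congr rfl fun χ _ => ?_
  split_ifs <;> simp

lemma finrank_eq_card_root_add [Nontrivial L] :
    finrank ℂ L = H.root.card + finrank ℂ H := by
  classical
  have := sum_finrank_rootSpace H fun _ => True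
  simp only [Finset.filter_true, if_true] at this
  rw [← this, finrank_eq_card_basis
    ((isInternal_rootSpace H).collectedBasis fun χ => finBasis ℂ (rootSpace H χ))]
  simp

end EigenspaceDimensions

section TypeG2

open Module LieAlgebra LieAlgebra.IsKilling

variable {L : Type*} [LieRing L] [LieAlgebra ℂ L] [FiniteDimensional ℂ L] [LieAlgebra.IsSimple ℂ L]

omit [FiniteDimensional ℂ L] in
variable (L) in
lemma nontrivial_of_isSimple : Nontrivial L := by
  by_contra hL
  have := not_nontrivial_iff_subsingleton.1 hL
  exact LieAlgebra.IsSimple.non_abelian ℂ (L := L) ⟨fun x y => Subsingleton.elim _ _⟩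

lemma card_root_eq_twelve_and_finrank_eq_two (H : LieSubalgebra ℂ L) [H.IsCartanSubalgebra]
    [hG : (rootSystem H).IsG2] : H.root.card = 12 ∧ finrank ℂ H = 2 := by
  let := RootPairing.IsG2.toEmbeddedG2 (rootSystem H)
  refine ⟨?_, ?_⟩
  · rw [← RootPairing.EmbeddedG2.card_index_eq_twelve (rootSystem H), Nat.card_eq_fintype_card,
      Fintype.card_coe]
  · rw [← Subspace.dual_finrank_eq,
      finrank_eq_card_basis (RootPairing.EmbeddedG2.basis (rootSystem H)), Fintype.card_fin]

lemma finrank_eq_fourteen (φ : L ≃ₗ⁅ℂ⁆ LieAlgebra.g₂ ℂ) : finrank ℂ L = 14 := by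
  have : Nontrivial L := nontrivial_of_isSimple L
  obtain ⟨H, b, hb⟩ := exists_basis_of_g₂ φ
  have := b.isCartanSubalgebra
  have hG : (rootSystem H).IsG2 := by
    rw [RootPairing.isG2_iff]
    refine ⟨b.baseSupportEquiv 1, b.baseSupportEquiv 0, ?_⟩
    have := congrFun (congrFun b.cartanMatrix_base_eq (b.baseSupportEquiv 1)) (b.baseSupportEquiv 0)
    exact this.trans (by simp [hb])
  have := card_root_eq_twelve_and_finrank_eq_two H
  rw [finrank_eq_card_root_add H]
  omega

lemma isG2_rootSystem (hL : finrank ℂ L = 14) (H : LieSubalgebra ℂ L) [H.IsCartanSubalgebra] :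
    (rootSystem H).IsG2 := by
  have : Nontrivial L := nontrivial_of_isSimple L
  refine RootPairing.isG2_of_card_add_finrank ?_
  rw [Fintype.card_coe, Subspace.dual_finrank_eq, ← finrank_eq_card_root_add H, hL]

lemma rank_eq_two (hL : finrank ℂ L = 14) : LieAlgebra.rank ℂ L = 2 := by
  obtain ⟨H, hH, hr⟩ := exists_isCartanSubalgebra_finrank_eq_rank (L := L)
  have := isG2_rootSystem hL H
  rw [← hr, (card_root_eq_twelve_and_finrank_eq_two H).2]

end TypeG2

section RootCounting

open Module LieAlgebra LieAlgebra.IsKilling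

variable {L : Type*} [LieRing L] [LieAlgebra ℂ L] [FiniteDimensional ℂ L] [LieAlgebra.IsSimple ℂ L]

open Classical in
lemma exists_card_root_filter_eq_length (H : LieSubalgebra ℂ L) [H.IsCartanSubalgebra]
    [hG : (rootSystem H).IsG2] (h : H) : ∃ s l : ℂ, ∀ c : ℂ,
      (H.root.filter fun α => α h = c).card =
        (RootPairing.EmbeddedG2.allCoeffs.filter fun v => v 0 * s + v 1 * l = c).length := by
  let := RootPairing.IsG2.toEmbeddedG2 (rootSystem H)
  let P := rootSystem H
  refine ⟨RootPairing.EmbeddedG2.shortRoot P h, RootPairing.EmbeddedG2.longRoot P h, fun c => ?_⟩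
  have h1 : (H.root.filter fun α => α h = c).card =
      ((RootPairing.EmbeddedG2.allRoots P).toFinset.filter fun φ => φ h = c).card := by
    refine Finset.card_bij (fun α _ => α.toLinear) ?_ ?_ ?_
    · intro α hα
      rw [Finset.mem_filter] at hα ⊢
      exact ⟨List.mem_toFinset.2 (RootPairing.EmbeddedG2.mem_allRoots P ⟨α, hα.1⟩), hα.2⟩
    · intro α _ β _ hαβ
      exact LieModule.Weight.ext fun x => LinearMap.congr_fun hαβ x
    · intro φ hφ
      rw [Finset.mem_filter] at hφ
      obtain ⟨i, rfl⟩ := RootPairing.EmbeddedG2.allRoots_subset_range_root P hφ.1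
      exact ⟨i, Finset.mem_filter.2 ⟨i.2, hφ.2⟩, rfl⟩
  have h2 : ((RootPairing.EmbeddedG2.allRoots P).toFinset.filter fun φ => φ h = c) =
      ((RootPairing.EmbeddedG2.allRoots P).filter fun φ => φ h = c).toFinset := by
    ext φ
    simp only [Finset.mem_filter, List.mem_toFinset, List.mem_filter, decide_eq_true_eq]
  rw [h1, h2,
    List.toFinset_card_of_nodup ((RootPairing.EmbeddedG2.allRoots_nodup P).filter _),
    RootPairing.EmbeddedG2.allRoots_eq_map_allCoeffs, List.filter_map, List.length_map]
  congr 1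
  refine List.filter_congr fun v _ => ?_
  simp [Fintype.linearCombination_apply, P]

/-- The number of roots `u₀ α + u₁ β` of the `G₂` root system with simple roots `α`, `β` on which
the linear form with values `s`, `l` on `α`, `β` takes the value `c`. -/
def countRoots (s l c : ℤ) : ℕ :=
  (RootPairing.EmbeddedG2.allCoeffs.filter fun u => u 0 * s + u 1 * l = c).length

lemma det_ne_zero_of_mem_allCoeffs : ∀ v ∈ RootPairing.EmbeddedG2.allCoeffs,
    ∀ w ∈ RootPairing.EmbeddedG2.allCoeffs, v ≠ w → v ≠ -w → v 0 * w 1 - v 1 * w 0 ≠ 0 := by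
  decide +kernel

/-- If a linear form takes the same value on distinct roots `v`, `w`, then it is determined up to
scalar by Cramer's rule, and a finite check gives all the possibilities. -/
lemma countRoots_cases : ∀ v ∈ RootPairing.EmbeddedG2.allCoeffs,
    ∀ w ∈ RootPairing.EmbeddedG2.allCoeffs, v ≠ w → v ≠ -w →
    ∀ D s l : ℤ, D = v 0 * w 1 - v 1 * w 0 → s = 2 * (w 1 - v 1) → l = 2 * (v 0 - w 0) →
    countRoots s l (2 * D) = countRoots s l (0 * D) + 2 →
    (countRoots s l (0 * D) = 0 ∧ countRoots s l (2 * D) = 2 ∧ countRoots s l (4 * D) = 1 ∧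
      countRoots s l (6 * D) = 1 ∧ countRoots s l (8 * D) = 1 ∧ countRoots s l (10 * D) = 1 ∧
      ∀ u ∈ RootPairing.EmbeddedG2.allCoeffs, ∃ k ∈ [-10, -8, -6, -4, -2, 2, 4, 6, 8, 10],
        u 0 * s + u 1 * l = k * D) ∨
    (countRoots s l (0 * D) = 2 ∧ countRoots s l (2 * D) = 4 ∧ countRoots s l (4 * D) = 1 ∧
      ∀ u ∈ RootPairing.EmbeddedG2.allCoeffs, ∃ k ∈ [-4, -2, 0, 2, 4],
        u 0 * s + u 1 * l = k * D) := by
  unfold countRoots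
  intro v hv w hw hvw hvw' D s l rfl rfl rfl
  revert v w
  decide +kernel

open Classical in
lemma countRoots_eq_of_mul_eq {s l D : ℤ} {s' l' : ℂ} (hD : D ≠ 0) (hs : D * s' = s)
    (hl : D * l' = l) (k : ℤ) :
    (RootPairing.EmbeddedG2.allCoeffs.filter fun v => v 0 * s' + v 1 * l' = k).length =
      countRoots s l (k * D) := by
  have hDℂ : (D : ℂ) ≠ 0 := by exact_mod_cast hD
  unfold countRoots
  congr 1
  refine List.filter_congr fun v _ => ?_
  rw [decide_eq_decide, ← @Int.cast_inj ℂ, ← mul_right_inj' hDℂ]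
  push_cast
  rw [← hs, ← hl]
  constructor <;> intro h <;> linear_combination h

/-- The dimensions of the eigenspaces of `ad h` on the `G₂` Lie algebra when the eigenspaces for
the eigenvalues `0` and `2` have the same dimension: the weighted Dynkin diagram is that of the
regular or of the subregular nilpotent orbit. -/
lemma finrank_eigenspace_ad_cases (hL : finrank ℂ L = 14) {H : LieSubalgebra ℂ L}
    [H.IsCartanSubalgebra] (h : H)
    (h2 : finrank ℂ ((ad ℂ L h).eigenspace 2) = finrank ℂ ((ad ℂ L h).eigenspace 0)) :
    (finrank ℂ ((ad ℂ L h).eigenspace 0) = 2 ∧ finrank ℂ ((ad ℂ L h).eigenspace 2) = 2 ∧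
      finrank ℂ ((ad ℂ L h).eigenspace 4) = 1 ∧ finrank ℂ ((ad ℂ L h).eigenspace 6) = 1 ∧
      finrank ℂ ((ad ℂ L h).eigenspace 8) = 1 ∧ finrank ℂ ((ad ℂ L h).eigenspace 10) = 1 ∧
      ∀ c, (ad ℂ L h).eigenspace c ≠ ⊥ →
        ∃ k ∈ [-10, -8, -6, -4, -2, 0, 2, 4, 6, 8, (10 : ℤ)], c = k) ∨
    (finrank ℂ ((ad ℂ L h).eigenspace 0) = 4 ∧ finrank ℂ ((ad ℂ L h).eigenspace 2) = 4 ∧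
      finrank ℂ ((ad ℂ L h).eigenspace 4) = 1 ∧
      ∀ c, (ad ℂ L h).eigenspace c ≠ ⊥ → ∃ k ∈ [-4, -2, 0, 2, (4 : ℤ)], c = k) := by
  classical
  have := nontrivial_of_isSimple L
  have := isG2_rootSystem hL H
  obtain ⟨-, hH⟩ := card_root_eq_twelve_and_finrank_eq_two H
  obtain ⟨s, l, hsl⟩ := exists_card_root_filter_eq_length H h
  have hrank : ∀ c : ℂ, finrank ℂ ((ad ℂ L h).eigenspace c) =
      (RootPairing.EmbeddedG2.allCoeffs.filter fun v => v 0 * s + v 1 * l = c).length +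
        if c = 0 then 2 else 0 := fun c => by
    rw [finrank_eigenspace_ad, ← hsl, hH]
  have hcard := h2
  rw [hrank, hrank, if_neg two_ne_zero, if_pos rfl, add_zero] at hcard
  obtain ⟨v, hv, w, hw, hvw⟩ : ∃ v ∈ RootPairing.EmbeddedG2.allCoeffs.filter
      (fun v => v 0 * s + v 1 * l = (2 : ℂ)), ∃ w ∈ RootPairing.EmbeddedG2.allCoeffs.filter
      (fun v => v 0 * s + v 1 * l = (2 : ℂ)), v ≠ w := by
    have hnd : (RootPairing.EmbeddedG2.allCoeffs.filter
      (fun v => v 0 * s + v 1 * l = (2 : ℂ))).Nodup := List.Nodup.filter _ (by decide)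
    have := List.toFinset_card_of_nodup hnd
    obtain ⟨v, hv, w, hw, hvw⟩ :=
      Finset.one_lt_card.1 ((Nat.le_add_left 2 _).trans_eq (this.trans hcard).symm)
    exact ⟨v, List.mem_toFinset.1 hv, w, List.mem_toFinset.1 hw, hvw⟩
  rw [List.mem_filter, decide_eq_true_eq] at hv hw
  have hvw' : v ≠ -w := by
    rintro rfl
    have h1 := hv.2
    have h2 := hw.2
    push_cast [Pi.neg_apply] at h1
    have h4 : (4 : ℂ) = 0 := by linear_combination -h1 - h2
    norm_num at h4
  have hD := det_ne_zero_of_mem_allCoeffs v hv.1 w hw.1 hvw hvw'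
  have key := countRoots_cases v hv.1 w hw.1 hvw hvw' _ _ _ rfl rfl rfl
  set D := v 0 * w 1 - v 1 * w 0 with hDdef
  have hDℂ : (D : ℂ) ≠ 0 := by exact_mod_cast hD
  have hs : D * s = (2 * (w 1 - v 1) : ℤ) := by
    rw [hDdef]; push_cast
    linear_combination (w 1 : ℂ) * hv.2 - (v 1 : ℂ) * hw.2
  have hl : D * l = (2 * (v 0 - w 0) : ℤ) := by
    rw [hDdef]; push_cast
    linear_combination (v 0 : ℂ) * hw.2 - (w 0 : ℂ) * hv.2
  have hcount := countRoots_eq_of_mul_eq hD hs hl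
  have hrank' : ∀ (k : ℤ) (c : ℂ), c = k → finrank ℂ ((ad ℂ L h).eigenspace c) =
      countRoots (2 * (w 1 - v 1)) (2 * (v 0 - w 0)) (k * D) + if k = 0 then 2 else 0 := by
    rintro k _ rfl
    rw [hrank, hcount]
    simp
  have hvalue : ∀ c, (ad ℂ L h).eigenspace c ≠ ⊥ → c = 0 ∨
      ∃ u ∈ RootPairing.EmbeddedG2.allCoeffs, u 0 * s + u 1 * l = c := fun c hc => by
    by_contra! hcon
    refine hc (Submodule.finrank_eq_zero.1 ?_)
    rw [hrank, if_neg hcon.1, add_zero, List.length_eq_zero_iff, List.filter_eq_nil_iff]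
    simpa using hcon.2
  have hvalue' : ∀ c, ∀ u ∈ RootPairing.EmbeddedG2.allCoeffs, u 0 * s + u 1 * l = c → ∀ k : ℤ,
      u 0 * (2 * (w 1 - v 1)) + u 1 * (2 * (v 0 - w 0)) = k * D → c = k := by
    rintro _ u - rfl k hk
    refine mul_left_cancel₀ hDℂ ?_
    have hk' := congrArg (Int.cast : ℤ → ℂ) hk
    push_cast at hk' hs hl
    linear_combination (u 0 : ℂ) * hs + (u 1 : ℂ) * hl + hk'
  have r0 := hrank' 0 0 (by simp)
  have r2 := hrank' 2 2 (by simp)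
  have r4 := hrank' 4 4 (by simp)
  have r6 := hrank' 6 6 (by simp)
  have r8 := hrank' 8 8 (by simp)
  have r10 := hrank' 10 10 (by simp)
  simp only [if_true, OfNat.ofNat_ne_zero, if_false,
    add_zero] at r0 r2 r4 r6 r8 r10
  rw [r0, r2, r4, r6, r8, r10]
  rw [r0, r2] at h2
  rcases key h2 with ⟨k0, k2, k4, k6, k8, k10, hk⟩ | ⟨k0, k2, k4, hk⟩
  · refine .inl ⟨by rw [k0], k2, k4, k6, k8, k10, fun c hc => ?_⟩
    obtain rfl | ⟨u, hu, huc⟩ := hvalue c hc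
    · exact ⟨0, by simp, by simp⟩
    · obtain ⟨k, hk, huk⟩ := hk u hu
      refine ⟨k, ?_, hvalue' c u hu huc k huk⟩
      exact (by decide : [-10, -8, -6, -4, -2, 2, 4, 6, 8, (10 : ℤ)] ⊆ _) hk
  · refine .inr ⟨by rw [k0], k2, k4, fun c hc => ?_⟩
    obtain rfl | ⟨u, hu, huc⟩ := hvalue c hc
    · exact ⟨0, by simp, by simp⟩
    · obtain ⟨k, hk, huk⟩ := hk u hu
      exact ⟨k, hk, hvalue' c u hu huc k huk⟩

end RootCounting

section Sl2Eigenspaces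

open Module

variable {V : Type*} [AddCommGroup V] [Module ℂ V] {E F H : Module.End ℂ V}

lemma apply_mem_eigenspace_add (hHE : ∀ v, H (E v) = E (H v) + (2 : ℂ) • E v) {c : ℂ} {x : V}
    (hx : x ∈ H.eigenspace c) : E x ∈ H.eigenspace (c + 2) := by
  rw [End.mem_eigenspace_iff] at hx ⊢
  rw [hHE, hx, map_smul, add_smul]

lemma apply_mem_eigenspace_sub (hHF : ∀ v, H (F v) = F (H v) - (2 : ℂ) • F v) {c : ℂ} {x : V}
    (hx : x ∈ H.eigenspace c) : F x ∈ H.eigenspace (c - 2) := by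
  rw [End.mem_eigenspace_iff] at hx ⊢
  rw [hHF, hx, map_smul, sub_smul]

variable [FiniteDimensional ℂ V]
  (hEF : ∀ v, E (F v) = F (E v) + H v) (hHE : ∀ v, H (E v) = E (H v) + (2 : ℂ) • E v)
  (hHF : ∀ v, H (F v) = F (H v) - (2 : ℂ) • F v)

include hEF hHF

lemma ker_inf_eigenspace_eq_bot {c : ℂ} (hc : ∀ k : ℕ, c ≠ k) :
    LinearMap.ker E ⊓ H.eigenspace c = ⊥ := by
  rw [eq_bot_iff]
  rintro x ⟨hx, hxc⟩
  exact eq_zero_of_apply_eq_zero hEF hHF (End.mem_eigenspace_iff.1 hxc)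
    (by rw [LinearMap.mem_ker.1 hx, map_zero]) hc

include hHE

lemma exists_apply_apply_eq {c : ℂ} (hc : ∀ k : ℕ, c ≠ k) {x : V} (hx : x ∈ H.eigenspace c) :
    ∃ y ∈ H.eigenspace c, F (E y) = x := by
  have hmaps : ∀ y ∈ H.eigenspace c, (F ∘ₗ E) y ∈ H.eigenspace c := fun y hy => by
    simpa using apply_mem_eigenspace_sub hHF (apply_mem_eigenspace_add hHE hy)
  have hinj : Function.Injective ((F ∘ₗ E).restrict hmaps) := by
    rw [← LinearMap.ker_eq_bot, LinearMap.ker_eq_bot']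
    rintro ⟨y, hy⟩ h0
    rw [Subtype.ext_iff] at h0
    exact Subtype.ext (eq_zero_of_apply_eq_zero hEF hHF (End.mem_eigenspace_iff.1 hy) h0 hc)
  obtain ⟨y, hy⟩ := LinearMap.injective_iff_surjective.1 hinj ⟨x, hx⟩
  exact ⟨y, y.2, congrArg Subtype.val hy⟩

omit [FiniteDimensional ℂ V] in
/-- The lowering operator version of the hypotheses, obtained by exchanging `E` and `F`. -/
lemma sl2_swap :
    (∀ v, F (E v) = E (F v) + (-H) v) ∧ (∀ v, (-H) (F v) = F ((-H) v) + (2 : ℂ) • F v) ∧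
    ∀ v, (-H) (E v) = E ((-H) v) - (2 : ℂ) • E v := by
  refine ⟨fun v => ?_, fun v => ?_, fun v => ?_⟩
  · simp [hEF]
  · simp only [LinearMap.neg_apply, hHF, map_neg]; abel
  · simp only [LinearMap.neg_apply, hHE, map_neg]; abel

lemma eq_zero_of_raise_lower_eq_zero {c : ℂ} (hc : ∀ k : ℕ, c ≠ -k) {x : V}
    (hx : x ∈ H.eigenspace c) (h0 : E (F x) = 0) : x = 0 := by
  obtain ⟨h1, -, h3⟩ := sl2_swap hEF hHE hHF
  refine eq_zero_of_apply_eq_zero h1 h3 (c := -c) ?_ h0 fun k hk => hc k ?_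
  · simp [End.mem_eigenspace_iff.1 hx]
  · rw [← hk, neg_neg]

lemma exists_raise_eq {c : ℂ} (hc : ∀ k : ℕ, c + 2 ≠ -k) {x : V} (hx : x ∈ H.eigenspace (c + 2)) :
    ∃ y ∈ H.eigenspace c, E y = x := by
  obtain ⟨h1, h2, h3⟩ := sl2_swap hEF hHE hHF
  obtain ⟨y, hy, hyx⟩ := exists_apply_apply_eq h1 h2 h3 (c := -(c + 2)) (x := x)
    (fun k hk => hc k (by rw [← hk, neg_neg]))
    (by rw [End.mem_eigenspace_iff, LinearMap.neg_apply, End.mem_eigenspace_iff.1 hx, neg_smul])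
  refine ⟨F y, ?_, hyx⟩
  have : y ∈ H.eigenspace (c + 2) := by
    rw [End.mem_eigenspace_iff, LinearMap.neg_apply, neg_smul, neg_inj] at hy
    exact End.mem_eigenspace_iff.2 hy
  simpa using apply_mem_eigenspace_sub hHF this

lemma finrank_eigenspace_eq_add {c : ℂ} (hc : ∀ k : ℕ, c + 2 ≠ -k) :
    finrank ℂ (H.eigenspace c) =
      finrank ℂ (LinearMap.ker E ⊓ H.eigenspace c : Submodule ℂ V) +
        finrank ℂ (H.eigenspace (c + 2)) := by
  let T : H.eigenspace c →ₗ[ℂ] H.eigenspace (c + 2) :=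
    E.restrict fun x hx => apply_mem_eigenspace_add hHE hx
  have hT : LinearMap.range T = ⊤ := by
    rw [LinearMap.range_eq_top]
    rintro ⟨x, hx⟩
    obtain ⟨y, hy, rfl⟩ := exists_raise_eq hEF hHE hHF hc hx
    exact ⟨⟨y, hy⟩, rfl⟩
  have hker : (LinearMap.ker T).map (H.eigenspace c).subtype =
      LinearMap.ker E ⊓ H.eigenspace c := by
    ext x
    simp [T, Subtype.ext_iff, and_comm]
  rw [← LinearMap.finrank_range_add_finrank_ker T, hT, finrank_top, ← hker, add_comm,
    (Submodule.equivMapOfInjective _ (Submodule.subtype_injective _) _).finrank_eq]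

end Sl2Eigenspaces

section Distinguished

open Module LieAlgebra

variable {L : Type*} [LieRing L] [LieAlgebra ℂ L] [FiniteDimensional ℂ L] [IsKilling ℂ L]

/-- The semisimple part of `ad x` is inner. -/
lemma exists_isSemisimple_ad_isNilpotent_sub (x : L) :
    ∃ s : L, (ad ℂ L s).IsSemisimple ∧ IsNilpotent (ad ℂ L x - ad ℂ L s) ∧
      ∀ y : L, ⁅x, y⁆ = 0 → ⁅s, y⁆ = 0 := by
  obtain ⟨N, -, S, hS₀, hN, hS, hSN⟩ := (ad ℂ L x).exists_isNilpotent_isSemisimple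
  replace hS₀ : Commute (ad ℂ L x) S := Algebra.commute_of_mem_adjoin_self hS₀
  rw [eq_sub_of_add_eq hSN.symm] at hN
  have aux {a : ℂ} {y : L} (hy : y ∈ (ad ℂ L x).maxGenEigenspace a) : S y = a • y :=
    End.apply_eq_of_mem_of_comm_of_isFinitelySemisimple_of_isNil hy hS₀ hS.isFinitelySemisimple hN
  have h_der (y z : L) : S ⁅y, z⁆ = ⁅S y, z⁆ + ⁅y, S z⁆ := by
    have htop (y : L) : y ∈ ⨆ a, (ad ℂ L x).maxGenEigenspace a := by
      simp [End.iSup_maxGenEigenspace_eq_top]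
    induction htop y using Submodule.iSup_induction' with
    | mem a y hy =>
      induction htop z using Submodule.iSup_induction' with
      | mem b z hz =>
        have hyz : ⁅y, z⁆ ∈ (ad ℂ L x).maxGenEigenspace (a + b) :=
          LieModule.lie_mem_maxGenEigenspace_toEnd hy hz
        rw [aux hy, aux hz, aux hyz, smul_lie, lie_smul, ← add_smul]
      | zero => simp
      | add _ _ _ _ h h' => simp only [lie_add, map_add, h, h']; abel
    | zero => simp
    | add _ _ _ _ h h' => simp only [add_lie, map_add, h, h']; abel
  replace h_der : ∀ y z : L, S ⁅y, z⁆ = ⁅y, S z⁆ - ⁅z, S y⁆ := by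
    simp_rw [← lie_skew (S _) _, add_comm, ← sub_eq_add_neg] at h_der; assumption
  let S' : LieDerivation ℂ L L := ⟨S, h_der⟩
  obtain ⟨s, hs⟩ := LieDerivation.IsKilling.exists_eq_ad S'
  have hsS : ad ℂ L s = S := by
    rw [← LieDerivation.coe_ad_apply_eq_ad_apply, hs]
  refine ⟨s, hsS ▸ hS, hsS ▸ hN, fun y hy => ?_⟩
  rw [← ad_apply (R := ℂ), hsS, aux (a := 0) (End.mem_maxGenEigenspace _ _ _ |>.2 ⟨1, by simpa⟩),
    zero_smul]

lemma isNilpotent_ad_of_isDistinguished {e x : L} (he : IsDistinguished L e) (hx : ⁅x, e⁆ = 0) :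
    IsNilpotent (ad ℂ L x) := by
  obtain ⟨s, hs, hN, hsx⟩ := exists_isSemisimple_ad_isNilpotent_sub x
  have hs0 : s = 0 := he s (hsx e hx) hs
  simpa [hs0] using hN

lemma killingForm_eq_zero_of_isDistinguished {e x y : L} (he : IsDistinguished L e)
    (hx : ⁅x, e⁆ = 0) (hy : ⁅y, e⁆ = 0) : killingForm ℂ L x y = 0 := by
  have h0 : ∀ z : L, ⁅z, e⁆ = 0 → killingForm ℂ L z z = 0 := fun z hz => by
    have := isNilpotent_ad_of_isDistinguished he hz
    rw [killingForm_apply_apply, ← End.mul_eq_comp]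
    exact (LinearMap.isNilpotent_trace_of_isNilpotent
      ((Commute.refl _).isNilpotent_mul_right this)).eq_zero
  have hxy := h0 (x + y) (by rw [add_lie, hx, hy, add_zero])
  simp only [map_add, LinearMap.add_apply, h0 x hx, h0 y hy,
    LieModule.traceForm_comm ℂ L L y x] at hxy
  linear_combination hxy / 2

omit [FiniteDimensional ℂ L] [IsKilling ℂ L] in
/-- Distinct eigenspaces of `ad h` whose eigenvalues do not cancel are orthogonal. -/
lemma killingForm_eq_zero_of_lie_eq_smul {h x y : L} {a b : ℂ} (hx : ⁅h, x⁆ = a • x)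
    (hy : ⁅h, y⁆ = b • y) (hab : a + b ≠ 0) : killingForm ℂ L x y = 0 := by
  have := LieModule.traceForm_apply_lie_apply ℂ L L x h y
  rw [hy, ← lie_skew, hx] at this
  simp only [map_neg, map_smul, LinearMap.neg_apply, LinearMap.smul_apply, smul_eq_mul] at this
  have hmul : (a + b) * LieModule.traceForm ℂ L L x y = 0 := by linear_combination -this
  exact (mul_eq_zero.1 hmul).resolve_left hab

end Distinguished

section DistinguishedSl2Triple

open Module LieAlgebra

variable {L : Type*} [LieRing L] [LieAlgebra ℂ L] {h e f : L} (t : IsSl2Triple h e f)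

include t

lemma ad_e_ad_f_apply (v : L) :
    ad ℂ L e (ad ℂ L f v) = ad ℂ L f (ad ℂ L e v) + ad ℂ L h v := by
  simp only [ad_apply, ← t.lie_e_f, lie_lie]; abel

lemma ad_h_ad_e_apply (v : L) :
    ad ℂ L h (ad ℂ L e v) = ad ℂ L e (ad ℂ L h v) + (2 : ℂ) • ad ℂ L e v := by
  have := lie_lie h e v
  rw [t.lie_h_e_smul ℂ, smul_lie] at this
  simp only [ad_apply, this]; abel

lemma ad_h_ad_f_apply (v : L) :
    ad ℂ L h (ad ℂ L f v) = ad ℂ L f (ad ℂ L h v) - (2 : ℂ) • ad ℂ L f v := by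
  have := lie_lie h f v
  rw [t.lie_lie_smul_f ℂ, neg_lie, smul_lie] at this
  simp only [ad_apply]
  rw [sub_eq_add_neg, this]; abel

variable [FiniteDimensional ℂ L] [IsKilling ℂ L]

omit [IsKilling ℂ L] in
lemma exists_isCartanSubalgebra_mem_of_isSl2Triple :
    ∃ H : LieSubalgebra ℂ L, H.IsCartanSubalgebra ∧ h ∈ H :=
  exists_isCartanSubalgebra_mem fun _ hx =>
    apply_eq_zero_of_apply_apply_eq_zero (ad_e_ad_f_apply t) (ad_h_ad_e_apply t)
      (ad_h_ad_f_apply t) hx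

lemma iSup_eigenspace_ad_h_eq_top : ⨆ c, (ad ℂ L h).eigenspace c = ⊤ := by
  obtain ⟨H, hH, hmem⟩ := exists_isCartanSubalgebra_mem_of_isSl2Triple t
  rw [← End.iSup_maxGenEigenspace_eq_top (ad ℂ L h)]
  have := (IsKilling.isSemisimple_ad_of_mem_isCartanSubalgebra hmem).isFinitelySemisimple
  exact iSup_congr fun c => (this.maxGenEigenspace_eq_eigenspace c).symm

lemma eq_zero_of_isDistinguished (he : IsDistinguished L e) {x : L} (hxe : ⁅x, e⁆ = 0)
    (hhx : ⁅h, x⁆ = 0) : x = 0 := by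
  have hEF := ad_e_ad_f_apply t
  have hHE := ad_h_ad_e_apply t
  have hHF := ad_h_ad_f_apply t
  have hneg : ∀ k : ℕ, (-2 : ℂ) ≠ k := fun k hk => by
    have : (-2 : ℝ) = k := by exact_mod_cast hk
    linarith [k.cast_nonneg (α := ℝ)]
  have hpos : ∀ k : ℕ, (2 : ℂ) ≠ -k := fun k hk => hneg k (by rw [hk, neg_neg])
  suffices x ∈ LinearMap.ker (killingForm ℂ L) by
    rwa [IsKilling.ker_killingForm_eq_bot, Submodule.mem_bot] at this
  rw [LinearMap.mem_ker]
  ext y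
  have hy : y ∈ ⨆ c, (ad ℂ L h).eigenspace c := by simp [iSup_eigenspace_ad_h_eq_top t]
  induction hy using Submodule.iSup_induction' with
  | zero => simp
  | add _ _ _ _ h h' => rw [map_add, h, h', map_add]
  | mem c y hy =>
    by_cases hc : c = 0
    · subst hc
      obtain ⟨w, hw, hfw⟩ := exists_apply_apply_eq hEF hHE hHF hneg
        (x := ad ℂ L f y) (by simpa using apply_mem_eigenspace_sub hHF hy)
      have hew : ad ℂ L e w ∈ (ad ℂ L h).eigenspace 0 := by
        simpa using apply_mem_eigenspace_add hHE hw
      set r := y - ad ℂ L e w with hr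
      have hr0 : r ∈ (ad ℂ L h).eigenspace 0 := sub_mem hy hew
      have hfr : ad ℂ L f r = 0 := by rw [hr, map_sub, hfw, sub_self]
      have hre : ad ℂ L e r = 0 := by
        refine eq_zero_of_raise_lower_eq_zero hEF hHE hHF hpos
          (by simpa using apply_mem_eigenspace_add hHE hr0) ?_
        have := hEF r
        rw [hfr, End.mem_eigenspace_iff.1 hr0, zero_smul, add_zero, map_zero] at this
        rw [← this, map_zero]
      have hxr := killingForm_eq_zero_of_isDistinguished he hxe
        (y := r) (by rw [← lie_skew, ← ad_apply (R := ℂ), hre, neg_zero])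
      have hxew := LieModule.traceForm_apply_lie_apply ℂ L L x e w
      rw [hxe, map_zero, LinearMap.zero_apply] at hxew
      rw [show y = r + ⁅e, w⁆ by simp [hr], map_add, hxr, zero_add, LinearMap.zero_apply]
      exact hxew.symm
    · exact killingForm_eq_zero_of_lie_eq_smul (a := 0) (by simpa using hhx)
        (End.mem_eigenspace_iff.1 hy) (by simpa using hc)

lemma finrank_eigenspace_two_eq_finrank_eigenspace_zero (he : IsDistinguished L e) :
    finrank ℂ ((ad ℂ L h).eigenspace 2) = finrank ℂ ((ad ℂ L h).eigenspace 0) := by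
  have hadd := finrank_eigenspace_eq_add (ad_e_ad_f_apply t) (ad_h_ad_e_apply t)
    (ad_h_ad_f_apply t) (c := 0) fun k hk => by
      have : (0 : ℝ) + 2 = -k := by exact_mod_cast hk
      linarith [k.cast_nonneg (α := ℝ)]
  have hbot : LinearMap.ker (ad ℂ L e) ⊓ (ad ℂ L h).eigenspace 0 = ⊥ := by
    rw [eq_bot_iff]
    rintro x ⟨hx, hx0⟩
    refine eq_zero_of_isDistinguished t he ?_ (by simpa using hx0)
    rw [← lie_skew, neg_eq_zero]
    simpa using hx
  rw [hbot, finrank_bot, zero_add, zero_add] at hadd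
  exact hadd.symm

end DistinguishedSl2Triple

section Grading

open Module LieAlgebra

variable {L : Type*} [LieRing L] [LieAlgebra ℂ L]

lemma mem_eigenspace_ad_iff {h x : L} {c : ℂ} : x ∈ (ad ℂ L h).eigenspace c ↔ ⁅h, x⁆ = c • x := by
  rw [End.mem_eigenspace_iff, ad_apply]

lemma lie_mem_eigenspace_ad {h x y : L} {a b c : ℂ} (hx : x ∈ (ad ℂ L h).eigenspace a)
    (hy : y ∈ (ad ℂ L h).eigenspace b) (hc : c = a + b) : ⁅x, y⁆ ∈ (ad ℂ L h).eigenspace c := by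
  rw [mem_eigenspace_ad_iff] at *
  rw [leibniz_lie, hx, hy, smul_lie, lie_smul, hc, add_smul]

variable [FiniteDimensional ℂ L] [IsKilling ℂ L]

lemma eq_zero_of_killingForm_eigenspace_eq_zero {h e f : L} (t : IsSl2Triple h e f) {a : ℂ} {x : L}
    (hx : x ∈ (ad ℂ L h).eigenspace a)
    (h0 : ∀ y ∈ (ad ℂ L h).eigenspace (-a), killingForm ℂ L x y = 0) : x = 0 := by
  suffices x ∈ LinearMap.ker (killingForm ℂ L) by
    rwa [IsKilling.ker_killingForm_eq_bot, Submodule.mem_bot] at this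
  rw [LinearMap.mem_ker]
  ext y
  have hy : y ∈ ⨆ c, (ad ℂ L h).eigenspace c := by simp [iSup_eigenspace_ad_h_eq_top t]
  induction hy using Submodule.iSup_induction' with
  | zero => simp
  | add _ _ _ _ h h' => rw [map_add, h, h', map_add]
  | mem c y hy =>
    by_cases hc : a + c = 0
    · exact h0 y (by rwa [neg_eq_of_add_eq_zero_right hc])
    · exact killingForm_eq_zero_of_lie_eq_smul (mem_eigenspace_ad_iff.1 hx)
        (mem_eigenspace_ad_iff.1 hy) hc

/-- In rank two, the centre of a non-abelian centralizer of a semisimple element `h` is the line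
spanned by `h`. -/
lemma exists_eq_smul_of_lie_eigenspace_zero [Nontrivial L] {H : LieSubalgebra ℂ L}
    [H.IsCartanSubalgebra] (hH : finrank ℂ H = 2) {h : H} (hh : h ≠ 0)
    (h0 : 2 < finrank ℂ ((ad ℂ L h).eigenspace 0)) {a : L}
    (ha : ∀ y ∈ (ad ℂ L h).eigenspace 0, ⁅a, y⁆ = 0) : ∃ r : ℂ, a = r • (h : L) := by
  classical
  have haH : a ∈ H := by
    suffices a ∈ H.normalizer by rwa [LieSubalgebra.IsCartanSubalgebra.self_normalizing] at this
    refine (H.mem_normalizer_iff a).mpr fun z hz ↦ ?_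
    rw [ha z]
    · exact H.zero_mem
    · rw [mem_eigenspace_ad_iff, zero_smul]
      exact congrArg Subtype.val (trivial_lie_zero H H h ⟨z, hz⟩)
  lift a to H using haH
  rw [finrank_eigenspace_ad, if_pos rfl, hH] at h0
  obtain ⟨α, hα⟩ := Finset.card_pos.1 (by omega : 0 < (H.root.filter fun α => α h = 0).card)
  rw [Finset.mem_filter] at hα
  obtain ⟨x, hx, hx0⟩ := α.exists_ne_zero
  have hlie : ∀ y : H, ⁅(y : L), x⁆ = α y • x := fun y => IsKilling.lie_eq_smul_of_mem_rootSpace hx y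
  have hαa : α a = 0 := by
    have := ha x (by rw [mem_eigenspace_ad_iff, hlie, hα.2])
    rw [hlie] at this
    exact (smul_eq_zero.1 this).resolve_right hx0
  have hker : finrank ℂ (LinearMap.ker α.toLinear) = 1 := by
    have h1 := LinearMap.finrank_range_add_finrank_ker α.toLinear
    have h2 : finrank ℂ (LinearMap.range α.toLinear) = 1 := by
      rw [LinearMap.range_eq_top.2 (LinearMap.surjective ?_), finrank_top, finrank_self]
      intro h0
      have := hα.1
      simp at this
      exact this (funext fun y => LinearMap.congr_fun h0 y)
    omega
  obtain ⟨r, hr⟩ := exists_smul_eq_of_finrank_eq_one hker (x := ⟨h, hα.2⟩)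
    (fun h' => hh (congrArg Subtype.val h')) ⟨a, hαa⟩
  exact ⟨r, congrArg H.subtype (congrArg Subtype.val hr.symm)⟩

end Grading
section Subregular

open Module LieAlgebra

variable {L : Type*} [LieRing L] [LieAlgebra ℂ L] [FiniteDimensional ℂ L] [IsKilling ℂ L]
  {h e f : L} (t : IsSl2Triple h e f)

include t

/-- An element annihilating the line `𝔤₄` is orthogonal to `h`, provided the centre of `𝔤₀` is
spanned by `h`. -/
lemma killingForm_eq_zero_of_lie_eigenspace_four_eq_zero
    (hcenter : ∀ a : L, (∀ y ∈ (ad ℂ L h).eigenspace 0, ⁅a, y⁆ = 0) → ∃ r : ℂ, a = r • h)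
    {z : L} (hz : z ∈ (ad ℂ L h).eigenspace 4) (hz0 : z ≠ 0)
    (hspan : ∀ y ∈ (ad ℂ L h).eigenspace 4, ∃ r : ℂ, y = r • z)
    {x : L} (hxz : ⁅x, z⁆ = 0) : killingForm ℂ L h x = 0 := by
  obtain ⟨w, hw, hzw⟩ : ∃ w ∈ (ad ℂ L h).eigenspace (-4), killingForm ℂ L z w ≠ 0 := by
    by_contra! hcon
    exact hz0 (eq_zero_of_killingForm_eigenspace_eq_zero t hz hcon)
  have hinv : ∀ a b c : L, killingForm ℂ L ⁅a, b⁆ c = killingForm ℂ L a ⁅b, c⁆ :=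
    LieModule.traceForm_apply_lie_apply ℂ L L
  have hcomm : ∀ a b : L, killingForm ℂ L a b = killingForm ℂ L b a :=
    LieModule.traceForm_comm ℂ L L
  have hzwx : ∀ y, killingForm ℂ L ⁅z, w⁆ y = killingForm ℂ L ⁅y, z⁆ w := fun y => by
    rw [hcomm, ← hinv]
  have hzw0 : ⁅z, w⁆ ∈ (ad ℂ L h).eigenspace 0 := lie_mem_eigenspace_ad hz hw (by ring)
  obtain ⟨r, hr⟩ := hcenter ⁅z, w⁆ fun a ha => by
    refine eq_zero_of_killingForm_eigenspace_eq_zero t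
      (lie_mem_eigenspace_ad hzw0 ha (add_zero 0).symm) fun b hb => ?_
    rw [neg_zero] at hb
    obtain ⟨p, hp⟩ := hspan _ (lie_mem_eigenspace_ad ha hz (zero_add 4).symm)
    obtain ⟨q, hq⟩ := hspan _ (lie_mem_eigenspace_ad hb hz (zero_add 4).symm)
    rw [hinv, hzwx, lie_lie, hp, hq, lie_smul, lie_smul, hp, hq, smul_smul, smul_smul,
      mul_comm, sub_self, map_zero, LinearMap.zero_apply]
  have hh := hzwx h
  have hx := hzwx x
  rw [hr, map_smul, LinearMap.smul_apply, smul_eq_mul] at hh hx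
  rw [mem_eigenspace_ad_iff.1 hz, map_smul, LinearMap.smul_apply, smul_eq_mul] at hh
  rw [hxz, map_zero, LinearMap.zero_apply] at hx
  refine (mul_eq_zero.1 hx).resolve_left ?_
  rintro rfl
  rw [zero_mul, eq_comm, mul_eq_zero] at hh
  exact hh.elim (by norm_num) hzw

/-- The bracket `𝔤₂ × 𝔤₂ → 𝔤₄` is nondegenerate. -/
lemma eq_zero_of_lie_eigenspace_two_eq_zero
    (hcenter : ∀ a : L, (∀ y ∈ (ad ℂ L h).eigenspace 0, ⁅a, y⁆ = 0) → ∃ r : ℂ, a = r • h)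
    (h6 : (ad ℂ L h).eigenspace 6 = ⊥)
    {z : L} (hz : z ∈ (ad ℂ L h).eigenspace 4) (hz0 : z ≠ 0)
    (hspan : ∀ y ∈ (ad ℂ L h).eigenspace 4, ∃ r : ℂ, y = r • z)
    {u : L} (hu : u ∈ (ad ℂ L h).eigenspace 2)
    (hu2 : ∀ y ∈ (ad ℂ L h).eigenspace 2, ⁅u, y⁆ = 0) : u = 0 := by
  have hinv : ∀ a b c : L, killingForm ℂ L ⁅a, b⁆ c = killingForm ℂ L a ⁅b, c⁆ :=
    LieModule.traceForm_apply_lie_apply ℂ L L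
  have hcomm : ∀ a b : L, killingForm ℂ L a b = killingForm ℂ L b a :=
    LieModule.traceForm_comm ℂ L L
  have hf : f ∈ (ad ℂ L h).eigenspace (-2) := by
    rw [mem_eigenspace_ad_iff, t.lie_lie_smul_f ℂ, neg_smul]
  have hker : ∀ v ∈ (ad ℂ L h).eigenspace 2, (∀ y ∈ (ad ℂ L h).eigenspace 2, ⁅v, y⁆ = 0) →
      killingForm ℂ L v f = 0 := fun v hv hv2 => by
    have hvz : ⁅v, z⁆ = 0 := by
      rw [← Submodule.mem_bot ℂ, ← h6]
      exact lie_mem_eigenspace_ad hv hz (by norm_num)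
    have hvfz : ⁅⁅v, f⁆, z⁆ = 0 := by
      rw [lie_lie, hvz, lie_zero, sub_zero, hv2]
      exact lie_mem_eigenspace_ad hf hz (by norm_num)
    have := killingForm_eq_zero_of_lie_eigenspace_four_eq_zero t hcenter hz hz0 hspan hvfz
    rw [← hinv, mem_eigenspace_ad_iff.1 hv, map_smul, LinearMap.smul_apply, smul_eq_mul] at this
    exact (mul_eq_zero.1 this).resolve_left two_ne_zero
  refine eq_zero_of_killingForm_eigenspace_eq_zero t hu fun y hy => ?_
  obtain ⟨h1, h2, h3⟩ := sl2_swap (ad_e_ad_f_apply t) (ad_h_ad_e_apply t) (ad_h_ad_f_apply t)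
  obtain ⟨a, ha, rfl⟩ := exists_raise_eq h1 h2 h3 (c := 0) (x := y)
    (fun k hk => by
      have : (0 : ℝ) + 2 = -k := by exact_mod_cast hk
      linarith [k.cast_nonneg (α := ℝ)])
    (by
      rw [End.mem_eigenspace_iff] at hy ⊢
      rw [LinearMap.neg_apply, hy]; module)
  replace ha : a ∈ (ad ℂ L h).eigenspace 0 := by
    rw [End.mem_eigenspace_iff] at ha ⊢
    rwa [LinearMap.neg_apply, zero_smul, neg_eq_zero, ← zero_smul ℂ a] at ha
  have hua : ⁅u, a⁆ ∈ (ad ℂ L h).eigenspace 2 := lie_mem_eigenspace_ad hu ha (by ring)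
  have := hker _ hua fun y hy => by
    rw [lie_lie, hu2 y hy, lie_zero, sub_zero, hu2]
    exact lie_mem_eigenspace_ad ha hy (by ring)
  rw [hinv, ← lie_skew, map_neg, neg_eq_zero] at this
  exact this

end Subregular

section CentralizerDimensions

open Module LieAlgebra

variable {L : Type*} [LieRing L] [LieAlgebra ℂ L] [FiniteDimensional ℂ L] [IsKilling ℂ L]
  {h e f : L} (t : IsSl2Triple h e f)

omit [FiniteDimensional ℂ L] [IsKilling ℂ L] in
lemma mem_ker_ad_iff {x : L} : x ∈ LinearMap.ker (ad ℂ L e) ↔ ⁅x, e⁆ = 0 := by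
  rw [LinearMap.mem_ker, ad_apply, ← lie_skew, neg_eq_zero]

omit [FiniteDimensional ℂ L] [IsKilling ℂ L] in
lemma centralizer_toSubmodule_eq_ker : (centralizer L e).toSubmodule = LinearMap.ker (ad ℂ L e) :=
  Submodule.ext fun _ => mem_ker_ad_iff.symm

include t

lemma ker_ad_le_of_forall {p : Submodule ℂ L}
    (hp : ∀ c, LinearMap.ker (ad ℂ L e) ⊓ (ad ℂ L h).eigenspace c ≤ p) :
    LinearMap.ker (ad ℂ L e) ≤ p := by
  have hstable : ∀ x ∈ LinearMap.ker (ad ℂ L e), ad ℂ L h x ∈ LinearMap.ker (ad ℂ L e) := by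
    intro x hx
    have := ad_h_ad_e_apply t x
    rw [LinearMap.mem_ker] at hx ⊢
    rwa [hx, map_zero, smul_zero, add_zero, eq_comm] at this
  exact (Submodule.eq_iSup_inf_genEigenspace 1 hstable (iSup_eigenspace_ad_h_eq_top t)).le.trans
    (iSup_le hp)

omit [IsKilling ℂ L] in
lemma finrank_eigenspace_eq_finrank_ker_ad_inf_add (n : ℕ) {c d : ℂ} (hc : c = n) (hd : d = c + 2) :
    finrank ℂ ((ad ℂ L h).eigenspace c) =
      finrank ℂ (LinearMap.ker (ad ℂ L e) ⊓ (ad ℂ L h).eigenspace c : Submodule ℂ L) +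
        finrank ℂ ((ad ℂ L h).eigenspace d) := by
  subst hd hc
  refine finrank_eigenspace_eq_add (ad_e_ad_f_apply t) (ad_h_ad_e_apply t) (ad_h_ad_f_apply t)
    fun l hl => ?_
  have : (n : ℝ) + 2 = -l := by exact_mod_cast hl
  linarith [n.cast_nonneg (α := ℝ), l.cast_nonneg (α := ℝ)]

omit [IsKilling ℂ L] in
lemma ker_ad_inf_eigenspace_eq_bot (n : ℕ) {c d : ℂ} (hc : c = n) (hd : d = c + 2)
    (h2 : finrank ℂ ((ad ℂ L h).eigenspace c) = finrank ℂ ((ad ℂ L h).eigenspace d)) :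
    LinearMap.ker (ad ℂ L e) ⊓ (ad ℂ L h).eigenspace c = ⊥ := by
  have := finrank_eigenspace_eq_finrank_ker_ad_inf_add t n hc hd
  exact Submodule.finrank_eq_zero.1 (by omega)

omit [IsKilling ℂ L] in
lemma ker_ad_inf_eigenspace_intCast_eq_bot {k : ℤ} (hk : k < 0) :
    LinearMap.ker (ad ℂ L e) ⊓ (ad ℂ L h).eigenspace k = ⊥ := by
  refine ker_inf_eigenspace_eq_bot (ad_e_ad_f_apply t) (ad_h_ad_f_apply t) fun l hl => ?_
  have : k = l := by exact_mod_cast hl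
  omega

end CentralizerDimensions

section CentralizerDimensionsTypeG2

open Module LieAlgebra

variable {L : Type*} [LieRing L] [LieAlgebra ℂ L] [FiniteDimensional ℂ L] [IsKilling ℂ L]
  {h e f : L} (t : IsSl2Triple h e f)

include t

lemma finrank_centralizer_of_regular
    (h0 : finrank ℂ ((ad ℂ L h).eigenspace 0) = 2)
    (h2 : finrank ℂ ((ad ℂ L h).eigenspace 2) = 2) (h4 : finrank ℂ ((ad ℂ L h).eigenspace 4) = 1)
    (h6 : finrank ℂ ((ad ℂ L h).eigenspace 6) = 1) (h8 : finrank ℂ ((ad ℂ L h).eigenspace 8) = 1)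
    (h10 : finrank ℂ ((ad ℂ L h).eigenspace 10) = 1)
    (hc : ∀ c, (ad ℂ L h).eigenspace c ≠ ⊥ →
      ∃ k ∈ [-10, -8, -6, -4, -2, 0, 2, 4, 6, 8, (10 : ℤ)], c = k) :
    finrank ℂ (centralizer L e) = 2 := by
  set W := LinearMap.ker (ad ℂ L e) with hW
  have h12 : (ad ℂ L h).eigenspace 12 = ⊥ := by
    by_contra hne
    obtain ⟨k, hk, h12⟩ := hc _ hne
    have : 12 = k := by exact_mod_cast h12
    subst this
    simp at hk
  have hW2 : finrank ℂ (W ⊓ (ad ℂ L h).eigenspace 2 : Submodule ℂ L) = 1 := by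
    have := finrank_eigenspace_eq_finrank_ker_ad_inf_add t 2 (c := 2) (d := 4) rfl (by norm_num)
    rw [h2, h4] at this
    exact (Nat.succ.inj this).symm
  have hW10 : finrank ℂ (W ⊓ (ad ℂ L h).eigenspace 10 : Submodule ℂ L) = 1 := by
    have := finrank_eigenspace_eq_finrank_ker_ad_inf_add t 10 (c := 10) (d := 12) rfl (by norm_num)
    rw [h10, h12, finrank_bot] at this
    exact this.symm
  have hsup : W = W ⊓ (ad ℂ L h).eigenspace 2 ⊔ W ⊓ (ad ℂ L h).eigenspace 10 := by
    refine le_antisymm (ker_ad_le_of_forall t fun c => ?_) (sup_le inf_le_left inf_le_left)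
    rw [← hW]
    by_cases hcb : (ad ℂ L h).eigenspace c = ⊥
    · simp [hcb]
    have hbot : W ⊓ (ad ℂ L h).eigenspace c = ⊥ →
      W ⊓ (ad ℂ L h).eigenspace c ≤
        W ⊓ (ad ℂ L h).eigenspace 2 ⊔ W ⊓ (ad ℂ L h).eigenspace 10 := fun h => h ▸ bot_le
    obtain ⟨k, hk, hck⟩ := hc c hcb
    by_cases hk0 : k < 0
    · subst hck
      exact hbot (ker_ad_inf_eigenspace_intCast_eq_bot t hk0)
    simp only [List.mem_cons, List.not_mem_nil, or_false] at hk
    obtain rfl | rfl | rfl | rfl | rfl | rfl : c = 0 ∨ c = 2 ∨ c = 4 ∨ c = 6 ∨ c = 8 ∨ c = 10 := by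
      obtain rfl | rfl | rfl | rfl | rfl | rfl :
        k = 0 ∨ k = 2 ∨ k = 4 ∨ k = 6 ∨ k = 8 ∨ k = 10 := by omega
      all_goals simp [hck]
    · exact hbot (ker_ad_inf_eigenspace_eq_bot t 0 (by simp) (d := 2) (by norm_num)
        (h0.trans h2.symm))
    · exact le_sup_left
    · exact hbot (ker_ad_inf_eigenspace_eq_bot t 4 (by simp) (d := 6) (by norm_num)
        (h4.trans h6.symm))
    · exact hbot (ker_ad_inf_eigenspace_eq_bot t 6 (by simp) (d := 8) (by norm_num)
        (h6.trans h8.symm))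
    · exact hbot (ker_ad_inf_eigenspace_eq_bot t 8 (by simp) (d := 10) (by norm_num)
        (h8.trans h10.symm))
    · exact le_sup_right
  have hinf : W ⊓ (ad ℂ L h).eigenspace 2 ⊓ (W ⊓ (ad ℂ L h).eigenspace 10) = ⊥ := by
    rw [eq_bot_iff]
    exact (inf_le_inf inf_le_right inf_le_right).trans
      ((End.disjoint_genEigenspace _ (by norm_num : (2 : ℂ) ≠ 10) 1 1).le_bot)
  have key := Submodule.finrank_sup_add_finrank_inf_eq
    (W ⊓ (ad ℂ L h).eigenspace 2) (W ⊓ (ad ℂ L h).eigenspace 10)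
  rw [← hsup, hinf, finrank_bot, hW2, hW10] at key
  change finrank ℂ (centralizer L e).toSubmodule = 2
  rw [centralizer_toSubmodule_eq_ker, ← hW]
  omega

lemma propertyP_of_subregular
    (hcenter : ∀ a : L, (∀ y ∈ (ad ℂ L h).eigenspace 0, ⁅a, y⁆ = 0) → ∃ r : ℂ, a = r • h)
    (h0 : finrank ℂ ((ad ℂ L h).eigenspace 0) = 4)
    (h2 : finrank ℂ ((ad ℂ L h).eigenspace 2) = 4) (h4 : finrank ℂ ((ad ℂ L h).eigenspace 4) = 1)
    (hc : ∀ c, (ad ℂ L h).eigenspace c ≠ ⊥ → ∃ k ∈ [-4, -2, 0, 2, (4 : ℤ)], c = k) :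
    PropertyP L e h f := by
  have hempty : ∀ n : ℤ, 4 < n → (ad ℂ L h).eigenspace n = ⊥ := fun n hn => by
    by_contra hne
    obtain ⟨k, hk, hnk⟩ := hc _ hne
    have : n = k := by exact_mod_cast hnk
    subst this
    simp at hk
    omega
  have h6 : (ad ℂ L h).eigenspace 6 = ⊥ := by simpa using hempty 6 (by norm_num)
  have hbot : ∀ {c : ℂ} {x : L}, x ∈ (ad ℂ L h).eigenspace c → (ad ℂ L h).eigenspace c = ⊥ →
      x = 0 := fun hx hb => (Submodule.mem_bot ℂ).1 (hb ▸ hx)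
  have he : e ∈ (ad ℂ L h).eigenspace 2 := mem_eigenspace_ad_iff.2 (t.lie_h_e_smul ℂ)
  obtain ⟨⟨z, hz⟩, hz0, hspan⟩ := finrank_eq_one_iff'.1 h4
  replace hz0 : z ≠ 0 := fun h => hz0 (Subtype.ext h)
  replace hspan : ∀ y ∈ (ad ℂ L h).eigenspace 4, ∃ r : ℂ, y = r • z := fun y hy => by
    obtain ⟨r, hr⟩ := hspan ⟨y, hy⟩
    exact ⟨r, congrArg Subtype.val hr.symm⟩
  have hhz := mem_eigenspace_ad_iff.1 hz
  have hze : ⁅z, e⁆ = 0 := hbot (lie_mem_eigenspace_ad hz he rfl) (by norm_num [h6])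
  have hweight : ∀ c, LinearMap.ker (ad ℂ L e) ⊓ (ad ℂ L h).eigenspace c ≠ ⊥ → c = 2 ∨ c = 4 := by
    intro c hcb
    obtain ⟨k, hk, hck⟩ := hc c fun hb => hcb (by rw [hb, inf_bot_eq])
    by_cases hk0 : k < 0
    · subst hck
      exact (hcb (ker_ad_inf_eigenspace_intCast_eq_bot t hk0)).elim
    simp only [List.mem_cons, List.not_mem_nil, or_false] at hk
    obtain rfl | rfl | rfl : c = 0 ∨ c = 2 ∨ c = 4 := by
      obtain rfl | rfl | rfl : k = 0 ∨ k = 2 ∨ k = 4 := by omega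
      all_goals simp [hck]
    · exact (hcb (ker_ad_inf_eigenspace_eq_bot t 0 (by simp) (d := 2) (by norm_num)
        (h0.trans h2.symm))).elim
    · simp
    · simp
  have hsup : LinearMap.ker (ad ℂ L e) ≤
      LinearMap.ker (ad ℂ L e) ⊓ (ad ℂ L h).eigenspace 2 ⊔ (ad ℂ L h).eigenspace 4 := by
    refine ker_ad_le_of_forall t fun c => ?_
    by_cases hcb : LinearMap.ker (ad ℂ L e) ⊓ (ad ℂ L h).eigenspace c = ⊥
    · simp [hcb]
    · obtain rfl | rfl := hweight c hcb
      · exact le_sup_left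
      · exact le_sup_of_le_right inf_le_right
  have hdecomp : ∀ v : L, ⁅v, e⁆ = 0 → ∃ v₂ ∈ (ad ℂ L h).eigenspace 2, ⁅v₂, e⁆ = 0 ∧
      ∃ r : ℂ, v = v₂ + r • z := fun v hv => by
    obtain ⟨v₂, hv₂, v₄, hv₄, rfl⟩ := Submodule.mem_sup.1 (hsup (mem_ker_ad_iff.2 hv))
    obtain ⟨r, rfl⟩ := hspan v₄ hv₄
    exact ⟨v₂, hv₂.2, mem_ker_ad_iff.1 hv₂.1, r, rfl⟩
  have hz2 : ∀ y ∈ (ad ℂ L h).eigenspace 2, ⁅z, y⁆ = 0 := fun y hy =>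
    hbot (lie_mem_eigenspace_ad hz hy rfl) (by norm_num [h6])
  have hzcentral : InCenterOfCentralizer L e z := by
    refine ⟨hze, fun y hy => ?_⟩
    obtain ⟨y₂, hy₂, -, r, rfl⟩ := hdecomp y hy
    rw [lie_add, hz2 y₂ hy₂, lie_smul, lie_self, smul_zero, add_zero]
  have hv₂eq : ∀ u ∈ (ad ℂ L h).eigenspace 2, InCenterOfCentralizer L e u → ∃ r : ℂ, u = r • e := by
    intro u hu hucentral
    obtain ⟨p, hp, hep⟩ := exists_raise_eq (ad_e_ad_f_apply t) (ad_h_ad_e_apply t)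
      (ad_h_ad_f_apply t) (c := 2) (x := z) (fun k hk => by
        have : (2 : ℝ) + 2 = -k := by exact_mod_cast hk
        linarith [k.cast_nonneg (α := ℝ)]) (by norm_num; exact hhz)
    rw [ad_apply] at hep
    obtain ⟨r, hr⟩ := hspan _ (lie_mem_eigenspace_ad hu hp (by norm_num))
    refine ⟨r, sub_eq_zero.1 (eq_zero_of_lie_eigenspace_two_eq_zero t hcenter h6 hz hz0 hspan
      (sub_mem hu (Submodule.smul_mem _ r he)) fun y hy => ?_)⟩
    obtain ⟨q, hq⟩ := hspan _ (lie_mem_eigenspace_ad he hy (by norm_num))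
    have hyp : ⁅y - q • p, e⁆ = 0 := by
      rw [← lie_skew, lie_sub, lie_smul, hq, hep, sub_self, neg_zero]
    have := hucentral.2 _ hyp
    rw [lie_sub, lie_smul, hr, sub_eq_zero] at this
    rw [sub_lie, smul_lie, this, hq, smul_comm, sub_self]
  intro m ⟨w, hw0, hwcentral, hw⟩ hmax v hvcentral hv0 y hycentral hy
  obtain rfl : m = 4 := by
    obtain rfl | rfl := hweight m fun hb => hw0 ((Submodule.mem_bot ℂ).1
      (hb ▸ ⟨mem_ker_ad_iff.2 hwcentral.1, mem_eigenspace_ad_iff.2 hw⟩))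
    · have := (Complex.le_def.1 (hmax 4 ⟨z, hz0, hzcentral, hhz⟩)).1
      norm_num at this
    · rfl
  obtain ⟨c, rfl⟩ := hspan y (mem_eigenspace_ad_iff.2 hy)
  obtain ⟨v₂, hv₂, hv₂e, b, rfl⟩ := hdecomp v hvcentral.1
  obtain ⟨a, rfl⟩ := hv₂eq v₂ hv₂ ⟨hv₂e, fun y hy => by
    have := hvcentral.2 y hy
    rwa [add_lie, smul_lie, hzcentral.2 y hy, smul_zero, add_zero] at this⟩
  have hfe : ⁅f, e⁆ = -h := by rw [← lie_skew, t.lie_e_f]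
  by_cases ha : a = 0
  · subst ha
    rw [zero_smul, zero_add] at hv0 ⊢
    have hb : b ≠ 0 := fun hb => hv0 (by rw [hb, zero_smul])
    refine ⟨(-c / (4 * b)) • e, by rw [smul_lie, lie_self, smul_zero], ?_⟩
    rw [lie_smul, lie_smul, smul_lie, hfe, neg_lie, hhz, ← neg_smul, smul_smul, smul_smul]
    congr 1
    field_simp
  · have hfz : ⁅f, z⁆ ∈ (ad ℂ L h).eigenspace 2 := lie_mem_eigenspace_ad (a := -2)
      (by rw [mem_eigenspace_ad_iff, t.lie_lie_smul_f ℂ, neg_smul]) hz (by norm_num)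
    have hfzz : ⁅⁅f, z⁆, z⁆ = 0 := by rw [← lie_skew, hz2 _ hfz, neg_zero]
    have hfze : ⁅⁅f, z⁆, e⁆ = (-4 : ℂ) • z := by
      rw [lie_lie, hze, lie_zero, zero_sub, hfe, lie_neg, neg_neg, ← lie_skew, hhz, neg_smul]
    refine ⟨(-c / (4 * a)) • z, by rw [smul_lie, hze, smul_zero], ?_⟩
    rw [lie_smul, smul_lie, lie_add, lie_smul, lie_smul, hfzz, hfze, smul_zero, add_zero, smul_smul,
      smul_smul]
    congr 1
    field_simp

end CentralizerDimensionsTypeG2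

/-- Distinguished non-regular nilpotent elements of the complex simple
Lie algebra of type corresponding to `LieAlgebra.g₂` satisfy property (P). -/
theorem propertyP_of_type_9
    (L : Type*) [LieRing L] [LieAlgebra ℂ L] [FiniteDimensional ℂ L]
    [LieAlgebra.IsSimple ℂ L]
    (htype : Nonempty (L ≃ₗ⁅ℂ⁆ LieAlgebra.g₂ ℂ))
    (e h f : L) (ht : IsSl2Triple h e f) (he : IsNilpotent (LieAlgebra.ad ℂ L e))
    (hdist : IsDistinguished L e)
    (hnonreg : Module.finrank ℂ ↥(centralizer L e) ≠ LieAlgebra.rank ℂ L) :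
    PropertyP L e h f := by
  obtain ⟨φ⟩ := htype
  have hL := finrank_eq_fourteen φ
  have := nontrivial_of_isSimple L
  obtain ⟨H, hH, hmem⟩ := exists_isCartanSubalgebra_mem_of_isSl2Triple ht
  have h2 := finrank_eigenspace_two_eq_finrank_eigenspace_zero ht hdist
  rcases finrank_eigenspace_ad_cases hL (⟨h, hmem⟩ : H) h2 with
    ⟨h0, h2, h4, h6, h8, h10, hc⟩ | ⟨h0, h2, h4, hc⟩
  · exact (hnonreg ((finrank_centralizer_of_regular ht h0 h2 h4 h6 h8 h10 hc).trans
      (rank_eq_two hL).symm)).elim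
  · have := isG2_rootSystem hL H
    have hh : (⟨h, hmem⟩ : H) ≠ 0 := fun hh => ht.h_ne_zero (congrArg Subtype.val hh)
    refine propertyP_of_subregular ht (fun a ha => ?_) h0 h2 h4 hc
    exact exists_eq_smul_of_lie_eigenspace_zero (card_root_eq_twelve_and_finrank_eq_two H).2 hh
      (by rw [h0]; norm_num) ha
end

section
/- Let 𝔤 be a finite-dimensional complex semisimple Lie algebra and (e,h,f) an sl2-triple in 𝔤 with e a distinguished nilpotent element. Then every eigenvalue of the restriction of ad h to the centralizer 𝔤^e is a nonnegative even integer, and 2 is an eigenvalue (with eigenvector e); moreover 2 is the smallest eigenvalue of the restriction of ad h to 𝔤^e. -/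
open scoped ComplexOrder

section WeakDerivatives

open Filter Topology

/-- `f : ℂ → W` has derivative `w` at `0` when tested against linear functionals. -/
def HasWeakDerivAtZero {W : Type*} [AddCommGroup W] [Module ℂ W] (f : ℂ → W) (w : W) : Prop :=
  ∀ ξ : Module.Dual ℂ W, HasDerivAt (fun t ↦ ξ (f t)) (ξ w) 0

section WeakDeriv

variable {V W : Type*} [AddCommGroup V] [Module ℂ V] [AddCommGroup W] [Module ℂ W]

lemma HasWeakDerivAtZero.const (w : W) : HasWeakDerivAtZero (fun _ ↦ w) 0 := fun ξ ↦ by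
  simpa using hasDerivAt_const (0 : ℂ) (ξ w)

lemma HasWeakDerivAtZero.map {f : ℂ → V} {v : V} (h : HasWeakDerivAtZero f v) (N : V →ₗ[ℂ] W) :
    HasWeakDerivAtZero (fun t ↦ N (f t)) (N v) := fun ξ ↦ h (ξ ∘ₗ N)

lemma HasWeakDerivAtZero.add {f g : ℂ → V} {v w : V} (hf : HasWeakDerivAtZero f v)
    (hg : HasWeakDerivAtZero g w) : HasWeakDerivAtZero (fun t ↦ f t + g t) (v + w) := fun ξ ↦ by
  simpa using (hf ξ).fun_add (hg ξ)

lemma HasWeakDerivAtZero.sum {ι : Type*} (s : Finset ι) {f : ι → ℂ → V} {v : ι → V}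
    (hf : ∀ i ∈ s, HasWeakDerivAtZero (f i) (v i)) :
    HasWeakDerivAtZero (fun t ↦ ∑ i ∈ s, f i t) (∑ i ∈ s, v i) := fun ξ ↦ by
  simpa using HasDerivAt.fun_sum (fun i hi ↦ hf i hi ξ)

lemma HasWeakDerivAtZero.smul_id {f : ℂ → V} {v : V} (hf : HasWeakDerivAtZero f v) :
    HasWeakDerivAtZero (fun t ↦ t • f t) (f 0) := fun ξ ↦ by
  simpa using (hasDerivAt_id' (0 : ℂ)).fun_mul (hf ξ)

lemma HasWeakDerivAtZero.prodMk {f : ℂ → V} {g : ℂ → W} {v : V} {w : W}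
    (hf : HasWeakDerivAtZero f v) (hg : HasWeakDerivAtZero g w) :
    HasWeakDerivAtZero (fun t ↦ (f t, g t)) (v, w) := by
  simpa using (hf.map (LinearMap.inl ℂ V W)).add (hg.map (LinearMap.inr ℂ V W))

lemma HasWeakDerivAtZero.pi {ι : Type*} [Fintype ι] [DecidableEq ι] {f : ι → ℂ → V} {v : ι → V}
    (hf : ∀ i, HasWeakDerivAtZero (f i) (v i)) :
    HasWeakDerivAtZero (fun t i ↦ f i t) v := by
  have := HasWeakDerivAtZero.sum Finset.univ
    (fun i _ ↦ (hf i).map (LinearMap.single ℂ (fun _ : ι ↦ V) i))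
  simpa only [LinearMap.coe_single, Finset.univ_sum_single] using this

lemma HasWeakDerivAtZero.pencil {f : ℂ → V} {v : V} (hf : HasWeakDerivAtZero f v)
    (N M : V →ₗ[ℂ] W) :
    HasWeakDerivAtZero (fun t ↦ (N + t • M) (f t)) (N v + M (f 0)) := by
  simpa using (hf.map N).add (hf.map M).smul_id

/-- If the rank of `A t` is maximal at `t = 0`, then the derivative of `A` at `0` maps the kernel
of `A 0` into its range. -/
lemma mem_range_of_hasWeakDerivAtZero [FiniteDimensional ℂ W]
    (A : ℂ → V →ₗ[ℂ] W) {c : V} {w : W} (hd : ∀ v, ∃ w, HasWeakDerivAtZero (fun t ↦ A t v) w)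
    (hr : ∀ t, Module.finrank ℂ (LinearMap.range (A t)) ≤
      Module.finrank ℂ (LinearMap.range (A 0)))
    (hc : A 0 c = 0) (hw : HasWeakDerivAtZero (fun t ↦ A t c) w) : w ∈ LinearMap.range (A 0) := by
  by_contra hmem
  set R := Module.finrank ℂ (LinearMap.range (A 0))
  let b := Module.finBasis ℂ (LinearMap.range (A 0))
  choose v hv using fun i ↦ (b i).2
  have hb : LinearIndependent ℂ (fun i ↦ A 0 (v i)) := by
    simp only [hv]
    exact b.linearIndependent.map' (LinearMap.range (A 0)).subtype (Submodule.ker_subtype _)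
  have hu : LinearIndependent ℂ (Fin.cons w (fun i ↦ A 0 (v i)) : Fin (R + 1) → W) := by
    rw [linearIndependent_finCons]
    refine ⟨hb, fun h ↦ hmem ?_⟩
    refine Submodule.span_le.2 ?_ h
    rintro _ ⟨i, rfl⟩
    exact ⟨v i, rfl⟩
  obtain ⟨φ, hφ⟩ := LinearMap.exists_leftInverse_of_injective
    (Fintype.linearCombination ℂ (Fin.cons w (fun i ↦ A 0 (v i)) : Fin (R + 1) → W))
    (LinearMap.ker_eq_bot.2 (linearIndependent_iff_injective_fintypeLinearCombination.1 hu))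
  let u : ℂ → Fin (R + 1) → W := fun t ↦ Fin.cons (t⁻¹ • A t c) (fun i ↦ A t (v i))
  have hφu : ∀ i, φ ((Fin.cons w (fun i ↦ A 0 (v i)) : Fin (R + 1) → W) i) = Pi.single i 1 := by
    intro i
    have := LinearMap.congr_fun hφ (Pi.single i 1)
    simpa using this
  have hlim : Tendsto (fun t ↦ Matrix.of fun i j ↦ φ (u t i) j) (𝓝[≠] 0)
      (𝓝 (1 : Matrix (Fin (R + 1)) (Fin (R + 1)) ℂ)) := by
    refine tendsto_pi_nhds.2 fun i ↦ tendsto_pi_nhds.2 fun j ↦ ?_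
    have hij : (1 : Matrix (Fin (R + 1)) (Fin (R + 1)) ℂ) i j =
        φ ((Fin.cons w (fun i ↦ A 0 (v i)) : Fin (R + 1) → W) i) j := by
      rw [hφu, Matrix.one_apply, Pi.single_apply]
      simp [eq_comm]
    rw [hij]
    let ξ : Module.Dual ℂ W := LinearMap.proj j ∘ₗ φ
    refine Fin.cases ?_ (fun i ↦ ?_) i
    · have := (hasDerivAt_iff_tendsto_slope.1 (hw ξ))
      refine this.congr (fun t ↦ ?_)
      simp [slope, hc, u, ξ]
    · obtain ⟨w', hw'⟩ := hd (v i)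
      have := (hw' ξ).continuousAt.tendsto.mono_left (nhdsWithin_le_nhds (s := {0}ᶜ))
      simpa [u, ξ] using this
  have hdet : Tendsto (fun t ↦ (Matrix.of fun i j ↦ φ (u t i) j).det) (𝓝[≠] 0) (𝓝 (1 : ℂ)) := by
    have := ((continuous_id.matrix_det (A := fun M : Matrix (Fin (R + 1)) (Fin (R + 1)) ℂ ↦ M)
      ).tendsto 1).comp hlim
    simpa [Function.comp_def] using this
  obtain ⟨t, ht⟩ := (hdet.eventually_ne one_ne_zero).exists
  have hli : LinearIndependent ℂ (u t) := by
    refine LinearIndependent.of_comp φ ?_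
    have := Matrix.linearIndependent_rows_of_det_ne_zero ht
    exact this
  have hmem' : ∀ i, u t i ∈ LinearMap.range (A t) := by
    intro i
    refine Fin.cases ?_ (fun i ↦ ?_) i
    · exact Submodule.smul_mem _ _ ⟨c, rfl⟩
    · exact ⟨v i, rfl⟩
  have hli' : LinearIndependent ℂ (fun i ↦ (⟨u t i, hmem' i⟩ : LinearMap.range (A t))) :=
    LinearIndependent.of_comp (LinearMap.range (A t)).subtype hli
  have h1 := hli'.fintype_card_le_finrank
  have h2 := hr t
  simp only [Fintype.card_fin] at h1
  omega

end WeakDeriv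

end WeakDerivatives

section EndLemmas

variable {R : Type*} [Ring R]

lemma pow_succ_mul_eq_of_lie_eq {N Y H : R} (hH : N * Y - Y * N = H) (hN : H * N - N * H = 2 * N)
    (k : ℕ) : N ^ (k + 1) * Y = Y * N ^ (k + 1) + ((k : R) + 1) * ((H - k) * N ^ k) := by
  induction k with
  | zero => simp [← hH]
  | succ k ih =>
    have h1 : N * Y = Y * N + H := by rw [← hH]; abel
    have h2 : N * H = H * N - 2 * N := by rw [← hN]; abel
    have h3 : N * (k : R) = k * N := (Nat.cast_commute k N).symm
    rw [pow_succ' N (k + 1), mul_assoc, ih, mul_add, ← mul_assoc, h1]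
    have h4 : N * (((k : R) + 1) * ((H - k) * N ^ k)) = ((k : R) + 1) * ((H - 2 - k) *
        N ^ (k + 1)) := by
      rw [← mul_assoc, mul_add, h3, mul_one, pow_succ']
      have : ((k : R) * N + N) = ((k : R) + 1) * N := by rw [add_mul, one_mul]
      rw [this, mul_assoc, ← mul_assoc N, ← mul_assoc _ N]
      congr 2
      rw [mul_sub, h2, h3, sub_mul, sub_mul]
    rw [h4, add_mul, mul_assoc, ← pow_succ']
    generalize N ^ (k + 1 + 1) = N'
    generalize N ^ (k + 1) = M
    push_cast
    rw [show ((k : R) + 1 + 1) * ((H - (k + 1)) * M) =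
      H * M + ((k : R) + 1) * ((H - 2 - k) * M) by noncomm_ring, add_assoc]

lemma pow_succ_mul_eq_of_commute {N C Z : R} (hZ : N * C - C * N = Z) (hc : Commute Z N)
    (k : ℕ) : N ^ (k + 1) * C = C * N ^ (k + 1) + ((k : R) + 1) * (Z * N ^ k) := by
  induction k with
  | zero => simp [← hZ]
  | succ k ih =>
    have h1 : N * C = C * N + Z := by rw [← hZ]; abel
    have h3 : N * ((k : R) + 1) = (k + 1) * N := by
      simpa using (Nat.cast_commute (k + 1) N).symm.eq
    rw [pow_succ' N (k + 1), mul_assoc, ih, mul_add, ← mul_assoc, h1, ← mul_assoc N, h3,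
      mul_assoc _ N, ← mul_assoc N Z, ← hc.eq, mul_assoc Z N, ← pow_succ' N k, add_mul, mul_assoc,
      add_assoc]
    push_cast
    congr 1
    noncomm_ring

/-- A form of Jacobson's lemma. -/
lemma isNilpotent_of_lie_eq_of_commute [Algebra ℂ R] {N C Z : R} (hZ : N * C - C * N = Z)
    (hc : Commute Z N) (hN : IsNilpotent N) : IsNilpotent Z := by
  obtain ⟨n, hn⟩ := hN
  suffices h : ∀ k ≤ n, ∃ m, Z ^ m * N ^ (n - k) = 0 by
    obtain ⟨m, hm⟩ := h n le_rfl
    exact ⟨m, by simpa using hm⟩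
  intro k
  induction k with
  | zero => exact fun _ ↦ ⟨0, by simp [hn]⟩
  | succ k ih =>
    intro hk
    obtain ⟨m, hm⟩ := ih (by omega)
    obtain ⟨j, hj⟩ : ∃ j, n - k = j + 1 := ⟨n - k - 1, by omega⟩
    have hj' : n - (k + 1) = j := by omega
    rw [hj] at hm
    rw [hj']
    refine ⟨m + 1 + m, ?_⟩
    have h1 : Z ^ m * (N ^ (j + 1) * C) * Z ^ m = 0 := by
      rw [← mul_assoc, hm, zero_mul, zero_mul]
    have h2 : N ^ (j + 1) * Z ^ m = 0 := by
      rw [← (hc.pow_pow m (j + 1)).eq, hm]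
    have h3 : Commute (Z ^ m) ((j : R) + 1) := by
      simpa using (Nat.cast_commute (j + 1) (Z ^ m)).symm
    rw [pow_succ_mul_eq_of_commute hZ hc, mul_add, add_mul, mul_assoc, mul_assoc, h2, mul_zero,
      mul_zero, zero_add, ← mul_assoc, h3.eq, mul_assoc, mul_assoc, mul_assoc Z,
      ← (hc.pow_pow m j).eq, ← mul_assoc Z, ← mul_assoc, ← pow_succ', mul_assoc _ (Z ^ m),
      ← mul_assoc (Z ^ m), ← pow_add] at h1
    have h4 : ((j : ℂ) + 1) • (Z ^ (m + 1 + m) * N ^ j) = 0 := by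
      rw [← h1, Algebra.smul_def]
      have : m + (m + 1) = m + 1 + m := by ring
      simp [this]
    exact (smul_eq_zero_iff_right (Nat.cast_add_one_ne_zero j)).1 h4

variable {V : Type*} [AddCommGroup V] [Module ℂ V]

lemma isNilpotent_mul_of_lie_eq_of_commute {N C Z : Module.End ℂ V}
    (hZ : N * C - C * N = Z) (hc : Commute Z N) (hN : IsNilpotent N) : IsNilpotent (N * C) := by
  obtain ⟨r, hr⟩ := isNilpotent_of_lie_eq_of_commute hZ hc hN
  have key : ∀ j (v : V), (N ^ j) v = 0 → (((N * C) ^ r) ^ j) v = 0 := by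
    intro j
    induction j with
    | zero => intro v hv; simpa using hv
    | succ j ih =>
      intro v hv
      rw [pow_succ, Module.End.mul_apply]
      apply ih
      have hk : ∀ s : ℕ, (N ^ (j + 1)) (((N * C) ^ s) v) = 0 ∧
          (N ^ j) (((N * C) ^ s) v) = (((j : ℂ) + 1) ^ s) • ((Z ^ s) ((N ^ j) v)) := by
        intro s
        induction s with
        | zero => exact ⟨by simpa using hv, by simp⟩
        | succ s ihs =>
          have e1 := LinearMap.congr_fun (pow_succ_mul_eq_of_commute hZ hc j) (((N * C) ^ s) v)
          have e2 : (N ^ j) (((N * C) ^ (s + 1)) v) =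
              ((j : ℂ) + 1) • Z ((N ^ j) (((N * C) ^ s) v)) := by
            rw [pow_succ', Module.End.mul_apply, ← Module.End.mul_apply, ← mul_assoc,
              ← pow_succ, e1]
            simp [ihs.1, Module.End.mul_apply, add_smul, Nat.cast_smul_eq_nsmul]
          refine ⟨?_, ?_⟩
          · rw [pow_succ' N, Module.End.mul_apply, e2, map_smul, ← Module.End.mul_apply N, ← hc.eq,
              Module.End.mul_apply, ← Module.End.mul_apply N, ← pow_succ', ihs.1]
            simp
          · rw [e2, ihs.2, map_smul, smul_smul, pow_succ' _ s, pow_succ' Z, Module.End.mul_apply]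
      rw [(hk r).2, hr]
      simp
  obtain ⟨n, hn⟩ := hN
  refine ⟨r * n, ?_⟩
  ext v
  rw [pow_mul]
  exact key n v (by simp [hn])

end EndLemmas

section Auxiliary

open Module Module.End LieAlgebra

section Weights

variable {V : Type*} [AddCommGroup V] [Module ℂ V] {N Y H : Module.End ℂ V}

lemma mem_maxGenEigenspace_add_two (hN : H * N - N * H = 2 * N) {μ : ℂ} {z : V}
    (hz : z ∈ H.maxGenEigenspace μ) : N z ∈ H.maxGenEigenspace (μ + 2) := by
  rw [mem_maxGenEigenspace] at hz ⊢
  obtain ⟨k, hk⟩ := hz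
  refine ⟨k, ?_⟩
  have h1 : SemiconjBy N (H - μ • 1) (H - (μ + 2) • 1) := by
    have h2 : N * H = H * N - 2 * N := by rw [← hN]; abel
    rw [SemiconjBy, mul_sub, sub_mul, h2]
    simp only [mul_smul_comm, smul_mul_assoc, mul_one, one_mul, add_smul, add_mul]
    rw [two_smul ℂ N, two_mul]
    abel
  have h3 := LinearMap.congr_fun (h1.pow_right k).eq z
  simp only [Module.End.mul_apply, hk, map_zero] at h3
  exact h3.symm

lemma pow_mem_maxGenEigenspace (hN : H * N - N * H = 2 * N) {μ : ℂ} {z : V}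
    (hz : z ∈ H.maxGenEigenspace μ) (k : ℕ) :
    (N ^ k) z ∈ H.maxGenEigenspace (μ + 2 * k) := by
  induction k with
  | zero => simpa using hz
  | succ k ih =>
    rw [pow_succ', Module.End.mul_apply]
    convert mem_maxGenEigenspace_add_two hN ih using 2
    push_cast
    ring

lemma sub_smul_mem_of_mem_range_pow (hH : N * Y - Y * N = H) (hN : H * N - N * H = 2 * N)
    {k : ℕ} {z : V} (hz : N z = 0) (hk : z ∈ LinearMap.range (N ^ k)) :
    N (H z - (k : ℂ) • z) = 0 ∧ H z - (k : ℂ) • z ∈ LinearMap.range (N ^ (k + 1)) := by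
  refine ⟨?_, ?_⟩
  · have := LinearMap.congr_fun hN z
    simp only [LinearMap.sub_apply, Module.End.mul_apply, hz, map_zero, zero_sub,
      neg_eq_zero] at this
    simp [this, hz]
  · obtain ⟨w, rfl⟩ := hk
    have h1 := LinearMap.congr_fun (pow_succ_mul_eq_of_lie_eq hH hN k) w
    have h2 : (N ^ (k + 1)) w = 0 := by rw [pow_succ', Module.End.mul_apply, hz]
    refine ⟨((k : ℂ) + 1)⁻¹ • Y w, ?_⟩
    have h3 : (N ^ (k + 1)) (Y w) = ((k : ℂ) + 1) • (H ((N ^ k) w) - (k : ℂ) • (N ^ k) w) := by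
      rw [← Module.End.mul_apply, h1]
      simp [h2, add_smul, Nat.cast_smul_eq_nsmul]
    rw [map_smul, h3, smul_smul, inv_mul_cancel₀ (Nat.cast_add_one_ne_zero k), one_smul]

lemma sub_smul_mem_maxGenEigenspace {μ c : ℂ} {z : V} (hz : z ∈ H.maxGenEigenspace μ) :
    H z - c • z ∈ H.maxGenEigenspace μ :=
  sub_mem (mapsTo_maxGenEigenspace_of_comm (Commute.refl H) μ hz) (Submodule.smul_mem _ _ hz)

lemma eq_zero_of_sub_smul_eq_zero {μ c : ℂ} (hμ : μ ≠ c) {z : V}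
    (hz : z ∈ H.maxGenEigenspace μ) (h0 : H z - c • z = 0) : z = 0 := by
  have h1 : z ∈ H.maxGenEigenspace c := by
    rw [mem_maxGenEigenspace]
    exact ⟨1, by simpa using h0⟩
  exact (Submodule.disjoint_def.1 (H.disjoint_genEigenspace hμ ⊤ ⊤)) z hz h1

/-- The weights on `ker N ∩ range N ^ k` are natural numbers `≥ k`. -/
lemma exists_nat_of_mem_maxGenEigenspace (hH : N * Y - Y * N = H) (hN : H * N - N * H = 2 * N)
    (hnil : IsNilpotent N) {k : ℕ} {μ : ℂ} {z : V} (hz : N z = 0)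
    (hk : z ∈ LinearMap.range (N ^ k)) (hμ : z ∈ H.maxGenEigenspace μ) (h0 : z ≠ 0) :
    ∃ m : ℕ, k ≤ m ∧ μ = m := by
  obtain ⟨n, hn⟩ := hnil
  by_contra! hcon
  have key : ∀ d, ∃ z' ≠ 0, N z' = 0 ∧ z' ∈ LinearMap.range (N ^ (k + d)) ∧
      z' ∈ H.maxGenEigenspace μ := by
    intro d
    induction d with
    | zero => exact ⟨z, h0, hz, hk, hμ⟩
    | succ d ih =>
      obtain ⟨z', h1, h2, h3, h4⟩ := ih
      obtain ⟨h5, h6⟩ := sub_smul_mem_of_mem_range_pow hH hN h2 h3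
      exact ⟨_, fun h ↦ h1 (eq_zero_of_sub_smul_eq_zero (hcon _ (by omega)) h4 h), h5, h6,
        sub_smul_mem_maxGenEigenspace h4⟩
  obtain ⟨z', h1, -, ⟨w, rfl⟩, -⟩ := key n
  exact h1 (by rw [pow_add, hn]; simp)

/-- A vector of `ker N` of weight `n` is in the range of `N ^ n`. -/
lemma mem_range_pow_of_mem_maxGenEigenspace [FiniteDimensional ℂ V] (hH : N * Y - Y * N = H)
    (hN : H * N - N * H = 2 * N) {n : ℕ} {z : V} (hz : N z = 0)
    (hμ : z ∈ H.maxGenEigenspace (n : ℂ)) : z ∈ LinearMap.range (N ^ n) := by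
  have key : ∀ k ≤ n, ∀ z, N z = 0 → z ∈ H.maxGenEigenspace (n : ℂ) →
      z ∈ LinearMap.range (N ^ k) := by
    intro k
    induction k with
    | zero => intro _ z _ _; simp [Module.End.one_eq_id]
    | succ k ih =>
      intro hk z hz hμ
      let P : Submodule ℂ V := LinearMap.ker N ⊓ H.maxGenEigenspace (n : ℂ)
      have hPk : ∀ z ∈ P, z ∈ LinearMap.range (N ^ k) := fun z hz ↦ ih (by omega) z hz.1 hz.2
      have hmaps : ∀ z ∈ P, (H - (k : ℂ) • 1) z ∈ P := fun z hz ↦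
        ⟨(sub_smul_mem_of_mem_range_pow hH hN hz.1 (hPk z hz)).1,
          sub_smul_mem_maxGenEigenspace hz.2⟩
      have hinj : Function.Injective ((H - (k : ℂ) • 1).restrict hmaps) := by
        rw [← LinearMap.ker_eq_bot, LinearMap.ker_eq_bot']
        rintro ⟨z, hz⟩ h
        have h' : H z - (k : ℂ) • z = 0 := congrArg Subtype.val h
        exact Subtype.ext (eq_zero_of_sub_smul_eq_zero
          (by exact_mod_cast (by omega : n ≠ k)) hz.2 h')
      obtain ⟨⟨w, hw⟩, hwz⟩ := LinearMap.injective_iff_surjective.1 hinj ⟨z, hz, hμ⟩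
      have h' : H w - (k : ℂ) • w = z := congrArg Subtype.val hwz
      rw [← h']
      exact (sub_smul_mem_of_mem_range_pow hH hN hw.1 (hPk w hw)).2
  exact key n le_rfl z hz hμ

/-- The weights on `ker (N ^ j)` are integers `> -j`. -/
lemma exists_int_of_mem_maxGenEigenspace (hH : N * Y - Y * N = H) (hN : H * N - N * H = 2 * N)
    (hnil : IsNilpotent N) {j : ℕ} {μ : ℂ} {z : V} (hz : (N ^ j) z = 0)
    (hμ : z ∈ H.maxGenEigenspace μ) (h0 : z ≠ 0) :
    ∃ i : ℤ, -(j : ℤ) < i ∧ μ = i := by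
  induction j with
  | zero => exact absurd (by simpa using hz) h0
  | succ j ih =>
    by_cases hj : (N ^ j) z = 0
    · obtain ⟨i, hi, rfl⟩ := ih hj
      exact ⟨i, by push_cast; omega, rfl⟩
    · obtain ⟨m, hm, hm'⟩ := exists_nat_of_mem_maxGenEigenspace hH hN hnil
        (by rwa [pow_succ', Module.End.mul_apply] at hz) ⟨z, rfl⟩
        (pow_mem_maxGenEigenspace hN hμ j) hj
      refine ⟨m - 2 * j, by push_cast; omega, ?_⟩
      push_cast
      rw [← hm']
      ring

end Weights

section Jordan

variable {L : Type*} [LieRing L] [LieAlgebra ℂ L] [FiniteDimensional ℂ L]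

/-- Existence of the semisimple part of an element, with eigenspaces described. -/
lemma exists_semisimple_part [IsKilling ℂ L] (z : L) : ∃ s : L, (ad ℂ L s).IsSemisimple ∧
    IsNilpotent (ad ℂ L z - ad ℂ L s) ∧
    ∀ (μ : ℂ) (v : L), ⁅s, v⁆ = μ • v ↔ v ∈ (ad ℂ L z).maxGenEigenspace μ := by
  obtain ⟨N, -, S, hS₀, hN, hS, hSN⟩ := (ad ℂ L z).exists_isNilpotent_isSemisimple
  replace hS₀ : Commute (ad ℂ L z) S := Algebra.commute_of_mem_adjoin_self hS₀
  have hN' : ad ℂ L z - S = N := by rw [hSN]; abel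
  have aux (μ : ℂ) (v : L) : v ∈ (ad ℂ L z).maxGenEigenspace μ ↔ S v = μ • v := by
    constructor
    · intro hv
      rw [maxGenEigenspace_eq] at hv
      exact apply_eq_of_mem_of_comm_of_isFinitelySemisimple_of_isNil hv hS₀ hS.isFinitelySemisimple
        (by rwa [hN'])
    · intro hv
      have hc : Commute N S := by
        rw [← hN']
        exact hS₀.sub_left (Commute.refl S)
      have h1 := genEigenspace_inf_le_add N S 0 μ ⊤ ⊤ hc
      rw [← hSN, zero_add] at h1
      refine h1 ⟨?_, ?_⟩
      · obtain ⟨n, hn⟩ := hN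
        refine (mem_maxGenEigenspace N 0 v).2 ⟨n, ?_⟩
        simp [hn]
      · refine (mem_maxGenEigenspace S μ v).2 ⟨1, ?_⟩
        simp [hv]
  have h_der (x y : L) : S ⁅x, y⁆ = ⁅S x, y⁆ + ⁅x, S y⁆ := by
    have hx : x ∈ ⨆ μ, (ad ℂ L z).maxGenEigenspace μ := by
      simp [iSup_maxGenEigenspace_eq_top]
    have hy : y ∈ ⨆ μ, (ad ℂ L z).maxGenEigenspace μ := by
      simp [iSup_maxGenEigenspace_eq_top]
    induction hx using Submodule.iSup_induction' with
    | mem μ x hx =>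
      induction hy using Submodule.iSup_induction' with
      | mem ν y hy =>
        have h := LieModule.lie_mem_maxGenEigenspace_toEnd hx hy
        rw [(aux _ _).1 h, (aux _ _).1 hx, (aux _ _).1 hy, smul_lie, lie_smul, ← add_smul]
      | zero => simp
      | add _ _ _ _ h h' => simp only [lie_add, map_add, h, h']; abel
    | zero => simp
    | add _ _ _ _ h h' => simp only [add_lie, map_add, h, h']; abel
  let S' : LieDerivation ℂ L L := ⟨S, fun x y ↦ by
    rw [h_der, ← lie_skew (S x) y]
    abel⟩
  obtain ⟨s, hs⟩ := LieDerivation.IsKilling.exists_eq_ad S'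
  have hs' : ad ℂ L s = S := by
    rw [← LieDerivation.coe_ad_apply_eq_ad_apply s, hs]
  refine ⟨s, by rwa [hs'], by rwa [hs', hN'], fun μ v ↦ ?_⟩
  rw [aux, ← hs', ad_apply]

end Jordan

section Killing

variable {L : Type*} [LieRing L] [LieAlgebra ℂ L]

lemma killingForm_lie_left (x y z : L) :
    killingForm ℂ L ⁅x, y⁆ z = killingForm ℂ L x ⁅y, z⁆ :=
  LieModule.traceForm_apply_lie_apply ℂ L L x y z

lemma killingForm_symm (x y : L) : killingForm ℂ L x y = killingForm ℂ L y x :=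
  LieModule.traceForm_comm ℂ L L x y

lemma ad_mul_sub_ad_mul (x y : L) :
    ad ℂ L x * ad ℂ L y - ad ℂ L y * ad ℂ L x = ad ℂ L ⁅x, y⁆ := by
  ext v
  simp [Module.End.mul_apply]

lemma commute_ad_of_lie_eq_zero {x y : L} (h : ⁅x, y⁆ = 0) : Commute (ad ℂ L x) (ad ℂ L y) := by
  rw [Commute, SemiconjBy, ← sub_eq_zero, ad_mul_sub_ad_mul, h, map_zero]

lemma killingForm_eq_zero_of_isNilpotent_mul {x y : L}
    (h : IsNilpotent (ad ℂ L x * ad ℂ L y)) : killingForm ℂ L x y = 0 := by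
  rw [killingForm_apply_apply]
  exact (LinearMap.isNilpotent_trace_of_isNilpotent h).eq_zero

lemma eq_zero_of_killingForm_eq_zero [IsKilling ℂ L] {x : L}
    (h : ∀ y, killingForm ℂ L y x = 0) : x = 0 := by
  have : x ∈ LinearMap.ker (killingForm ℂ L) := by
    rw [LinearMap.mem_ker]
    ext y
    rw [killingForm_symm, h, LinearMap.zero_apply]
  simpa [IsKilling.ker_killingForm_eq_bot] using this

lemma killingForm_eq_zero_of_lie_eq_zero {x y : L} (h : ⁅x, y⁆ = 0)
    (hx : IsNilpotent (ad ℂ L x)) : killingForm ℂ L x y = 0 :=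
  killingForm_eq_zero_of_isNilpotent_mul
    ((commute_ad_of_lie_eq_zero h).isNilpotent_mul_right hx)

lemma killingForm_eq_zero_of_lie_lie_eq_zero {x c : L} (hx : IsNilpotent (ad ℂ L x))
    (hc : ⁅x, ⁅x, c⁆⁆ = 0) : killingForm ℂ L x c = 0 := by
  refine killingForm_eq_zero_of_isNilpotent_mul
    (isNilpotent_mul_of_lie_eq_of_commute (ad_mul_sub_ad_mul x c)
      (commute_ad_of_lie_eq_zero hc).symm hx)

variable [FiniteDimensional ℂ L] [IsKilling ℂ L]

lemma mem_of_killingForm_eq_zero (W : Submodule ℂ L) {v : L}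
    (h : ∀ w, (∀ a ∈ W, killingForm ℂ L a w = 0) → killingForm ℂ L v w = 0) : v ∈ W := by
  have hrefl : (killingForm ℂ L).IsRefl := fun x y hxy ↦ by rw [killingForm_symm, hxy]
  rw [← LinearMap.BilinForm.orthogonal_orthogonal
    (IsKilling.killingForm_nondegenerate ℂ L) hrefl W, LinearMap.BilinForm.mem_orthogonal_iff]
  intro w hw
  rw [LinearMap.BilinForm.mem_orthogonal_iff] at hw
  exact hrefl _ _ (h w hw)

lemma exists_lie_eq_of_killingForm_eq_zero {x v : L}
    (h : ∀ c, ⁅x, c⁆ = 0 → killingForm ℂ L v c = 0) : ∃ y, ⁅x, y⁆ = v := by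
  refine mem_of_killingForm_eq_zero (LinearMap.range (ad ℂ L x)) (v := v) fun w hw ↦ h w ?_
  refine eq_zero_of_killingForm_eq_zero fun y ↦ ?_
  rw [← killingForm_lie_left, ← lie_skew y x, map_neg, LinearMap.neg_apply, neg_eq_zero]
  exact hw _ ⟨y, rfl⟩

/-- A weak form of the Jacobson–Morozov theorem. -/
lemma exists_lie_lie_eq_two_smul {x : L} (hx : IsNilpotent (ad ℂ L x)) :
    ∃ y : L, ⁅⁅x, y⁆, x⁆ = (2 : ℂ) • x := by
  obtain ⟨w, hw⟩ : x ∈ LinearMap.range (ad ℂ L x ∘ₗ ad ℂ L x) := by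
    refine mem_of_killingForm_eq_zero _ fun w hw ↦
      killingForm_eq_zero_of_lie_lie_eq_zero hx (eq_zero_of_killingForm_eq_zero fun y ↦ ?_)
    have := hw _ ⟨y, rfl⟩
    simp only [LinearMap.comp_apply, ad_apply] at this
    rw [← killingForm_lie_left, ← killingForm_lie_left, ← lie_skew ⁅y, x⁆ x, ← lie_skew y x,
      lie_neg, neg_neg,
      this]
  refine ⟨(-2 : ℂ) • w, ?_⟩
  simp only [LinearMap.comp_apply, ad_apply] at hw
  rw [lie_smul, smul_lie, ← lie_skew, hw]
  simp

end Killing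

/-- An eigenspace decomposition of a Lie algebra under `ad d`, with integral eigenvalues. -/
structure IntegralGrading {L : Type*} [LieRing L] [LieAlgebra ℂ L] (d : L) where
  /-- A bound on the absolute values of the weights. -/
  bound : ℕ
  /-- The projection onto the `i`-eigenspace. -/
  proj : ℤ → Module.End ℂ L
  lie_proj : ∀ i v, ⁅d, proj i v⁆ = (i : ℂ) • proj i v
  sum_proj : ∀ v, ∑ i ∈ Finset.Icc (-(bound : ℤ)) bound, proj i v = v
  proj_of_lie_eq : ∀ {i : ℤ} {v : L}, ⁅d, v⁆ = (i : ℂ) • v → ∀ j, proj j v = if j = i then v else 0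
  proj_eq_zero : ∀ {i}, i ∉ Finset.Icc (-(bound : ℤ)) bound → proj i = 0

lemma exists_integralGrading {L : Type*} [LieRing L] [LieAlgebra ℂ L] [FiniteDimensional ℂ L]
    {d : L} (h : ⨆ i : ℤ, (ad ℂ L d).eigenspace (i : ℂ) = ⊤) : Nonempty (IntegralGrading d) := by
  classical
  have hind : iSupIndep fun i : ℤ ↦ (ad ℂ L d).eigenspace (i : ℂ) :=
    (ad ℂ L d).eigenspaces_iSupIndep.comp Int.cast_injective
  have hint : DirectSum.IsInternal fun i : ℤ ↦ (ad ℂ L d).eigenspace (i : ℂ) :=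
    DirectSum.isInternal_submodule_of_iSupIndep_of_iSup_eq_top hind h
  let _ := hint.chooseDecomposition
  have hfin : {i : ℤ | (ad ℂ L d).eigenspace (i : ℂ) ≠ ⊥}.Finite :=
    WellFoundedGT.finite_ne_bot_of_iSupIndep hind
  obtain ⟨M, hM⟩ : ∃ M : ℕ, ∀ i ∈ hfin.toFinset, i.natAbs ≤ M :=
    ⟨hfin.toFinset.sup Int.natAbs, fun i hi ↦ Finset.le_sup (f := Int.natAbs) hi⟩
  let G : ℤ → Submodule ℂ L := fun i ↦ (ad ℂ L d).eigenspace (i : ℂ)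
  let π : ℤ → Module.End ℂ L := fun i ↦ (G i).subtype ∘ₗ
    DirectSum.component ℂ ℤ (fun i ↦ G i) i ∘ₗ (DirectSum.decomposeLinearEquiv G).toLinearMap
  have hG {i v} : ⁅d, v⁆ = (i : ℂ) • v ↔ v ∈ (ad ℂ L d).eigenspace i := by
    rw [mem_eigenspace_iff, ad_apply]
  have hmem (i v) : π i v ∈ G i := (G i).coe_mem _
  have hπ {i : ℤ} {v} (hv : v ∈ G i) (j) : π j v = if j = i then v else 0 := by
    split_ifs with hj
    · subst hj
      exact DirectSum.decompose_of_mem_same G hv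
    · exact DirectSum.decompose_of_mem_ne G hv (Ne.symm hj)
  have hzero {i : ℤ} (hi : i ∉ Finset.Icc (-(M : ℤ)) M) : G i = ⊥ := by
    by_contra hne
    have := hM i (by simpa using hne)
    exact hi (by rw [Finset.mem_Icc]; omega)
  refine ⟨⟨M, π, fun i v ↦ hG.2 (hmem i v), fun v ↦ ?_, fun hv ↦ hπ (hG.1 hv), fun {i} hi ↦ ?_⟩⟩
  · have hv : v ∈ ⨆ i, G i := h ▸ Submodule.mem_top
    induction hv using Submodule.iSup_induction' with
    | mem i v hv =>
      simp only [hπ hv, Finset.sum_ite_eq']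
      split_ifs with hi
      · rfl
      · exact ((Submodule.mem_bot ℂ).1 (hzero hi ▸ hv)).symm
    | zero => simp
    | add _ _ _ _ h h' => simp only [map_add, Finset.sum_add_distrib, h, h']
  · ext v
    exact (Submodule.mem_bot ℂ).1 (hzero hi ▸ hmem i v)

namespace IntegralGrading

variable {L : Type*} [LieRing L] [LieAlgebra ℂ L] {d : L}

lemma lie_lie_eq {a b : L} {i j : ℤ} (ha : ⁅d, a⁆ = (i : ℂ) • a) (hb : ⁅d, b⁆ = (j : ℂ) • b) :
    ⁅d, ⁅a, b⁆⁆ = ((i + j : ℤ) : ℂ) • ⁅a, b⁆ := by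
  rw [leibniz_lie, ha, hb, smul_lie, lie_smul, ← add_smul]
  push_cast
  rfl

lemma killingForm_eq_zero_of_lie_eq {a b : L} {i j : ℤ} (ha : ⁅d, a⁆ = (i : ℂ) • a)
    (hb : ⁅d, b⁆ = (j : ℂ) • b) (hij : i + j ≠ 0) : killingForm ℂ L a b = 0 := by
  have h := killingForm_lie_left a d b
  rw [← lie_skew, ha, hb, map_neg, map_smul, map_smul, LinearMap.neg_apply,
    LinearMap.smul_apply, neg_eq_iff_add_eq_zero, ← add_smul, smul_eq_zero] at h
  exact h.resolve_left (by exact_mod_cast hij)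

variable (I : IntegralGrading d)

lemma proj_map {T : Module.End ℂ L} {s : ℤ}
    (hT : ∀ (i : ℤ) (v : L), ⁅d, v⁆ = (i : ℂ) • v → ⁅d, T v⁆ = ((i + s : ℤ) : ℂ) • T v)
    (i : ℤ) (v : L) : I.proj (i + s) (T v) = T (I.proj i v) := by
  conv_lhs => rw [← I.sum_proj v]
  rw [map_sum, map_sum]
  simp only [I.proj_of_lie_eq (hT _ _ (I.lie_proj _ v)), add_left_inj, Finset.sum_ite_eq]
  split_ifs with hi
  · rfl
  · simp [I.proj_eq_zero hi]

lemma proj_lie {a : L} {s : ℤ} (ha : ⁅d, a⁆ = (s : ℂ) • a) (i : ℤ) (v : L) :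
    I.proj (i + s) ⁅a, v⁆ = ⁅a, I.proj i v⁆ :=
  I.proj_map (T := ad ℂ L a) (fun i v hv ↦ by
    rw [ad_apply, lie_lie_eq ha hv, add_comm]) i v

/-- The decreasing filtration by weights `≥ j`. -/
def fil (j : ℤ) : Submodule ℂ L := ⨅ i, ⨅ (_ : i < j), LinearMap.ker (I.proj i)

variable {I}

lemma mem_fil {j : ℤ} {v : L} : v ∈ I.fil j ↔ ∀ i < j, I.proj i v = 0 := by
  simp [fil]

lemma fil_anti {i j : ℤ} (h : i ≤ j) : I.fil j ≤ I.fil i := fun _ hv ↦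
  mem_fil.2 fun k hk ↦ mem_fil.1 hv k (hk.trans_le h)

variable (I) in
lemma mem_fil_of_lie_eq {v : L} {i j : ℤ} (hv : ⁅d, v⁆ = (i : ℂ) • v) (h : j ≤ i) :
    v ∈ I.fil j :=
  mem_fil.2 fun k hk ↦ by rw [I.proj_of_lie_eq hv, if_neg (by omega)]

lemma fil_le {j : ℤ} {P : Submodule ℂ L}
    (h : ∀ i ≥ j, ∀ v : L, ⁅d, v⁆ = (i : ℂ) • v → v ∈ P) : I.fil j ≤ P := by
  intro v hv
  rw [← I.sum_proj v]
  refine sum_mem fun i _ ↦ ?_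
  by_cases hi : i < j
  · rw [mem_fil.1 hv i hi]
    exact zero_mem P
  · exact h i (by omega) _ (I.lie_proj i v)

lemma lie_mem_fil {i j : ℤ} {a b : L} (ha : a ∈ I.fil i) (hb : b ∈ I.fil j) :
    ⁅a, b⁆ ∈ I.fil (i + j) := by
  have h1 : ∀ k ≥ i, ∀ a : L, ⁅d, a⁆ = (k : ℂ) • a → I.fil j ≤ (I.fil (i + j)).comap (ad ℂ L a) :=
    fun k hk a ha ↦ fil_le fun l hl b hb ↦ I.mem_fil_of_lie_eq (lie_lie_eq ha hb) (by omega)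
  have h2 : I.fil i ≤ (I.fil (i + j)).comap (ad ℂ L b) := fil_le fun k hk a ha ↦ by
    have := h1 k hk a ha hb
    rw [Submodule.mem_comap, ad_apply] at this ⊢
    rw [← lie_skew]
    exact neg_mem this
  have := h2 ha
  rw [Submodule.mem_comap, ad_apply] at this
  rw [← lie_skew]
  exact neg_mem this

variable (I) in
lemma self_mem_fil_zero : d ∈ I.fil 0 := I.mem_fil_of_lie_eq (i := 0) (by simp) le_rfl

variable (I) in
lemma fil_bound_add_one : I.fil (I.bound + 1) = ⊥ := by
  rw [eq_bot_iff]
  refine fil_le fun i hi v hv ↦ ?_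
  have h1 := I.proj_of_lie_eq hv i
  rw [if_pos rfl, I.proj_eq_zero (by rw [Finset.mem_Icc]; omega)] at h1
  exact h1.symm

variable (I) in
lemma fil_neg_bound : I.fil (-I.bound) = ⊤ := by
  rw [eq_top_iff]
  intro v _
  refine mem_fil.2 fun i hi ↦ ?_
  rw [I.proj_eq_zero (by rw [Finset.mem_Icc]; omega), LinearMap.zero_apply]

lemma sub_proj_mem_fil {j : ℤ} {v : L} (hv : v ∈ I.fil j) : v - I.proj j v ∈ I.fil (j + 1) := by
  refine mem_fil.2 fun i hi ↦ ?_
  rw [map_sub, I.proj_of_lie_eq (I.lie_proj j v)]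
  split_ifs with hij
  · rw [hij, sub_self]
  · rw [mem_fil.1 hv i (by omega), sub_zero]

lemma killingForm_eq_zero_of_mem_fil {i j : ℤ} {a b : L} (ha : a ∈ I.fil i) (hb : b ∈ I.fil j)
    (hij : 0 < i + j) : killingForm ℂ L a b = 0 := by
  have h1 : ∀ k ≥ i, ∀ a : L, ⁅d, a⁆ = (k : ℂ) • a →
      I.fil j ≤ LinearMap.ker (killingForm ℂ L a) :=
    fun k hk a ha ↦ fil_le fun l hl b hb ↦ killingForm_eq_zero_of_lie_eq ha hb (by omega)
  have h2 : I.fil i ≤ LinearMap.ker (killingForm ℂ L b) := fil_le fun k hk a ha ↦ by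
    rw [LinearMap.mem_ker, killingForm_symm]
    exact h1 k hk a ha hb
  rw [killingForm_symm]
  exact h2 ha

lemma pow_ad_mem_fil {w : L} {i j : ℤ} (hw : w ∈ I.fil i) {v : L} (hv : v ∈ I.fil j) (k : ℕ) :
    (ad ℂ L w ^ k) v ∈ I.fil (j + k * i) := by
  induction k with
  | zero => simpa using hv
  | succ k ih =>
    rw [pow_succ', Module.End.mul_apply, ad_apply]
    convert lie_mem_fil hw ih using 2
    push_cast
    ring

lemma pow_ad_eq_zero_of_mem_fil_one {w : L} (hw : w ∈ I.fil 1) :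
    ad ℂ L w ^ (2 * I.bound + 1) = 0 := by
  ext v
  have hv : v ∈ I.fil (-I.bound) := I.fil_neg_bound ▸ Submodule.mem_top
  have := pow_ad_mem_fil hw hv (2 * I.bound + 1)
  rw [show (-(I.bound : ℤ) + (2 * I.bound + 1 : ℕ) * 1) = I.bound + 1 by push_cast; ring,
    fil_bound_add_one] at this
  exact this

lemma isNilpotent_ad_proj_zero {w : L} (hw : w ∈ I.fil 0) (hnil : IsNilpotent (ad ℂ L w)) :
    IsNilpotent (ad ℂ L (I.proj 0 w)) := by
  obtain ⟨n, hn⟩ := hnil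
  refine ⟨n, ?_⟩
  have hw0 : ⁅d, I.proj 0 w⁆ = ((0 : ℤ) : ℂ) • I.proj 0 w := I.lie_proj 0 w
  have key : ∀ (i : ℤ) (v : L), ⁅d, v⁆ = (i : ℂ) • v → ∀ k : ℕ,
      (ad ℂ L (I.proj 0 w) ^ k) v = I.proj i ((ad ℂ L w ^ k) v) := by
    intro i v hv k
    induction k with
    | zero => simp [I.proj_of_lie_eq hv]
    | succ k ih =>
      rw [pow_succ', Module.End.mul_apply, ih, pow_succ', Module.End.mul_apply, ad_apply, ad_apply,
        ← I.proj_lie hw0, add_zero]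
      have h1 := pow_ad_mem_fil hw (I.mem_fil_of_lie_eq hv le_rfl) k
      rw [mul_zero, add_zero] at h1
      have h2 := mem_fil.1 (lie_mem_fil (sub_proj_mem_fil hw) h1) i (by omega)
      rw [sub_lie, map_sub, sub_eq_zero] at h2
      exact h2.symm
  ext v
  rw [← I.sum_proj v, map_sum, map_sum]
  refine Finset.sum_congr rfl fun i _ ↦ ?_
  rw [key i _ (I.lie_proj i v), hn]
  simp

lemma killingForm_self_eq_zero {w : L} (hw : w ∈ I.fil 0) (hnil : IsNilpotent (ad ℂ L w)) :
    killingForm ℂ L d w = 0 := by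
  have h1 := killingForm_eq_zero_of_mem_fil I.self_mem_fil_zero (sub_proj_mem_fil hw) (by omega)
  rw [map_sub, sub_eq_zero] at h1
  rw [h1, killingForm_symm]
  refine killingForm_eq_zero_of_lie_eq_zero ?_ (isNilpotent_ad_proj_zero hw hnil)
  rw [← lie_skew, I.lie_proj]
  simp

lemma eq_zero_of_lie_eq_zero_of_mem_fil_one {σ v : L} (hσ : σ - d ∈ I.fil 1) (hv : v ∈ I.fil 1)
    (h : ⁅σ, v⁆ = 0) : v = 0 := by
  have key : ∀ k : ℕ, v ∈ I.fil (1 + k) := by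
    intro k
    induction k with
    | zero => simpa using hv
    | succ k ih =>
      have h1 := mem_fil.1 (lie_mem_fil hσ ih) (1 + k) (by omega)
      rw [sub_lie, h, zero_sub, map_neg, neg_eq_zero] at h1
      have h2 := I.proj_lie (a := d) (s := 0) (by simp) (1 + k) v
      rw [add_zero, h1, I.lie_proj, eq_comm, smul_eq_zero] at h2
      have h3 := h2.resolve_left (by exact_mod_cast (by omega : (1 + k : ℤ) ≠ 0))
      have h4 := sub_proj_mem_fil ih
      rw [h3, sub_zero] at h4
      convert h4 using 2
      push_cast
      ring
  have := key I.bound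
  rw [add_comm, fil_bound_add_one] at this
  exact this

lemma mem_fil_of_killingForm_eq_zero [IsKilling ℂ L] {i j : ℤ} (hij : i + j = 1) {v : L}
    (h : ∀ w ∈ I.fil j, killingForm ℂ L v w = 0) : v ∈ I.fil i := by
  refine mem_fil.2 fun k hk ↦ eq_zero_of_killingForm_eq_zero fun y ↦ ?_
  rw [← I.sum_proj y, map_sum, LinearMap.sum_apply]
  refine Finset.sum_eq_zero fun l _ ↦ ?_
  by_cases hl : l + k = 0
  · have h1 : killingForm ℂ L (I.proj l y) v = 0 := by
      rw [killingForm_symm]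
      exact h _ (I.mem_fil_of_lie_eq (I.lie_proj l y) (by omega))
    rw [← I.sum_proj v, map_sum, Finset.sum_eq_single k] at h1
    · exact h1
    · intro m _ hm
      exact killingForm_eq_zero_of_lie_eq (I.lie_proj l y) (I.lie_proj m v) (by omega)
    · intro hk
      rw [I.proj_eq_zero hk]
      simp
  · exact killingForm_eq_zero_of_lie_eq (I.lie_proj l y) (I.lie_proj k v) hl

end IntegralGrading

/-- The properties of the neutral element of an `𝔰𝔩₂`-triple completing the nilpotent element `x`
that are recorded by its adjoint action relative to the Jordan blocks of `ad x`. -/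
structure IsCharacteristic {L : Type*} [LieRing L] [LieAlgebra ℂ L] (x d : L) : Prop where
  isNilpotent_ad : IsNilpotent (ad ℂ L x)
  lie_eq : ⁅d, x⁆ = (2 : ℂ) • x
  le_of_mem_range : ∀ {k : ℕ} {i : ℤ} {v : L}, v ≠ 0 → ⁅x, v⁆ = 0 →
    v ∈ LinearMap.range (ad ℂ L x ^ k) → ⁅d, v⁆ = (i : ℂ) • v → (k : ℤ) ≤ i
  mem_range : ∀ {n : ℕ} {v : L}, ⁅x, v⁆ = 0 → ⁅d, v⁆ = (n : ℂ) • v →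
    v ∈ LinearMap.range (ad ℂ L x ^ n)
  neg_lt : ∀ {j : ℕ} {i : ℤ} {v : L}, v ≠ 0 → (ad ℂ L x ^ j) v = 0 → ⁅d, v⁆ = (i : ℂ) • v →
    -(j : ℤ) < i

lemma exists_isCharacteristic {L : Type*} [LieRing L] [LieAlgebra ℂ L] [FiniteDimensional ℂ L]
    [IsKilling ℂ L] {x y : L} (hx : IsNilpotent (ad ℂ L x)) (hy : ⁅⁅x, y⁆, x⁆ = (2 : ℂ) • x) :
    ∃ d, IsCharacteristic x d ∧ Nonempty (IntegralGrading d) ∧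
      ∀ (μ : ℂ) (v : L), ⁅⁅x, y⁆, v⁆ = μ • v → ⁅d, v⁆ = μ • v := by
  obtain ⟨d, hd, -, hμ⟩ := exists_semisimple_part ⁅x, y⁆
  have hH := ad_mul_sub_ad_mul x y
  have hN : ad ℂ L ⁅x, y⁆ * ad ℂ L x - ad ℂ L x * ad ℂ L ⁅x, y⁆ = 2 * ad ℂ L x := by
    rw [ad_mul_sub_ad_mul, hy, map_smul, two_smul, two_mul]
  have hweight : ∀ (μ : ℂ) (v : L), ⁅⁅x, y⁆, v⁆ = μ • v → ⁅d, v⁆ = μ • v := fun μ v hv ↦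
    (hμ μ v).2 ((mem_maxGenEigenspace _ _ _).2 ⟨1, by
      rw [pow_one, LinearMap.sub_apply, ad_apply, hv]
      simp⟩)
  refine ⟨d, ⟨hx, hweight _ _ hy, ?_, ?_, ?_⟩, exists_integralGrading ?_, hweight⟩
  · intro k i v h0 h1 h2 h3
    obtain ⟨m, hm, hm'⟩ := exists_nat_of_mem_maxGenEigenspace hH hN hx h1 h2 ((hμ _ _).1 h3) h0
    have : i = m := by exact_mod_cast hm'
    omega
  · intro n v h1 h2
    exact mem_range_pow_of_mem_maxGenEigenspace hH hN h1 ((hμ _ _).1 h2)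
  · intro j i v h0 h1 h2
    obtain ⟨m, hm, hm'⟩ := exists_int_of_mem_maxGenEigenspace hH hN hx h1 ((hμ _ _).1 h2) h0
    have : i = m := by exact_mod_cast hm'
    omega
  · rw [eq_top_iff, ← hd.iSup_eigenspace_eq_top]
    refine iSup_le fun μ v hv ↦ ?_
    by_cases h0 : v = 0
    · rw [h0]
      exact zero_mem _
    obtain ⟨n, hn⟩ := hx
    obtain ⟨m, -, rfl⟩ := exists_int_of_mem_maxGenEigenspace hH hN ⟨n, hn⟩ (j := n)
      (by rw [hn, LinearMap.zero_apply]) ((hμ _ _).1 (mem_eigenspace_iff.1 hv)) h0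
    exact Submodule.mem_iSup_of_mem m hv

namespace IsCharacteristic

variable {L : Type*} [LieRing L] [LieAlgebra ℂ L] {x d : L}

lemma lie_pow_apply (hc : IsCharacteristic x d) {i : ℤ} {v : L} (hv : ⁅d, v⁆ = (i : ℂ) • v)
    (k : ℕ) :
    ⁅d, (ad ℂ L x ^ k) v⁆ = ((i + 2 * k : ℤ) : ℂ) • (ad ℂ L x ^ k) v := by
  induction k with
  | zero => simpa using hv
  | succ k ih =>
    rw [pow_succ', Module.End.mul_apply, ad_apply,
      IntegralGrading.lie_lie_eq (i := 2) (by simpa using hc.lie_eq) ih]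
    push_cast
    ring_nf

lemma proj_pow_apply (hc : IsCharacteristic x d) (I : IntegralGrading d) (k : ℕ) (i : ℤ) (v : L) :
    I.proj (i + 2 * k) ((ad ℂ L x ^ k) v) = (ad ℂ L x ^ k) (I.proj i v) :=
  I.proj_map (fun _ _ hv ↦ hc.lie_pow_apply hv k) i v

lemma pow_apply_mem_fil_one (hc : IsCharacteristic x d) (I : IntegralGrading d) {k : ℕ} {z : L}
    (hz : (ad ℂ L x ^ (2 * k)) z = 0) : (ad ℂ L x ^ k) z ∈ I.fil 1 := by
  rw [← I.sum_proj z, map_sum]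
  refine sum_mem fun i _ ↦ ?_
  by_cases h0 : I.proj i z = 0
  · rw [h0, map_zero]
    exact zero_mem _
  refine I.mem_fil_of_lie_eq (hc.lie_pow_apply (I.lie_proj i z) k) ?_
  have := hc.neg_lt (j := 2 * k) h0 (by rw [← hc.proj_pow_apply I, hz, map_zero]) (I.lie_proj i z)
  push_cast at this
  omega

lemma exists_sum_of_mem_fil_one (hc : IsCharacteristic x d) (I : IntegralGrading d) {n : ℕ}
    (hn : ad ℂ L x ^ n = 0) {w : L}
    (hw : w ∈ I.fil 1) : ∃ z : Fin n → L, (∀ k : Fin n, (ad ℂ L x ^ (2 * (k : ℕ))) (z k) = 0) ∧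
      ∑ k : Fin n, (ad ℂ L x ^ (k : ℕ)) (z k) = w := by
  let P : Submodule ℂ L :=
    (⨅ k : Fin n, LinearMap.ker ((ad ℂ L x ^ (2 * (k : ℕ))) ∘ₗ LinearMap.proj k)).map
      (∑ k : Fin n, (ad ℂ L x ^ (k : ℕ)) ∘ₗ LinearMap.proj k)
  have hP : ∀ (k : ℕ) (q : L), (ad ℂ L x ^ (2 * k)) q = 0 → (ad ℂ L x ^ k) q ∈ P := by
    intro k q hq
    by_cases hk : k < n
    · refine ⟨Pi.single ⟨k, hk⟩ q, ?_, ?_⟩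
      · simp only [SetLike.mem_coe, Submodule.mem_iInf, LinearMap.mem_ker, LinearMap.comp_apply,
          LinearMap.proj_apply]
        intro j
        by_cases hj : j = ⟨k, hk⟩
        · subst hj
          simpa using hq
        · rw [Pi.single_eq_of_ne hj, map_zero]
      · rw [LinearMap.sum_apply, Finset.sum_eq_single ⟨k, hk⟩]
        · simp
        · intro j _ hj
          simp [Pi.single_eq_of_ne hj]
        · simp
    · rw [pow_eq_zero_of_le (by omega) hn]
      exact zero_mem P
  suffices h : ∀ (j : ℕ) (m : ℤ), 1 ≤ m → ∀ v : L, ⁅d, v⁆ = (m : ℂ) • v →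
      (ad ℂ L x ^ j) v = 0 → v ∈ P by
    have hmem : w ∈ P := IntegralGrading.fil_le
      (fun i hi v hv ↦ h n i hi v hv (by rw [hn, LinearMap.zero_apply])) hw
    obtain ⟨z, hz, rfl⟩ := hmem
    refine ⟨z, ?_, by simp⟩
    simpa using hz
  intro j
  induction j with
  | zero =>
    intro m _ v _ h0
    have : v = 0 := by simpa using h0
    rw [this]
    exact zero_mem P
  | succ j ih =>
    intro m hm v hv hj
    have h1 : ⁅x, (ad ℂ L x ^ j) v⁆ = 0 := by
      rwa [pow_succ', Module.End.mul_apply, ad_apply] at hj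
    obtain ⟨r, hr⟩ : ∃ r : ℕ, m = r := ⟨m.toNat, by omega⟩
    have h2 := hc.lie_pow_apply hv j
    obtain ⟨q, hq⟩ := hc.mem_range (n := r + 2 * j) h1 (by rw [h2, hr]; push_cast; rfl)
    have h3 : (ad ℂ L x ^ (r + 2 * j)) (I.proj (-m - 2 * j) q) = (ad ℂ L x ^ j) v := by
      rw [← hc.proj_pow_apply I, hq, I.proj_of_lie_eq h2, if_pos]
      push_cast
      omega
    generalize hq' : I.proj (-m - 2 * j) q = q' at h3
    have hdq : ⁅d, q'⁆ = ((-m - 2 * j : ℤ) : ℂ) • q' := hq' ▸ I.lie_proj _ q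
    have h4 : (ad ℂ L x ^ j) ((ad ℂ L x ^ (r + j)) q') = (ad ℂ L x ^ j) v := by
      rw [← h3, ← Module.End.mul_apply, ← pow_add]
      congr 2
      ring
    have h5 : (ad ℂ L x ^ (r + j)) q' ∈ P := by
      refine hP _ _ ?_
      rw [show 2 * (r + j) = (r - 1) + (j + 1) + (r + j) by omega, pow_add, pow_add,
        Module.End.mul_apply, Module.End.mul_apply, pow_succ', Module.End.mul_apply, h4, ad_apply,
        h1, map_zero]
    have h6 := ih m hm (v - (ad ℂ L x ^ (r + j)) q')
      (by
        rw [lie_sub, hv, hc.lie_pow_apply hdq, smul_sub]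
        congr 3
        push_cast
        omega)
      (by rw [map_sub, h4, sub_self])
    simpa using add_mem h6 h5

end IsCharacteristic

lemma exists_hasWeakDerivAtZero_pow {V : Type*} [AddCommGroup V] [Module ℂ V] (N M : Module.End ℂ V)
    (k : ℕ) (z : V) : ∃ w, HasWeakDerivAtZero (fun t : ℂ ↦ ((N + t • M) ^ k) z) w := by
  induction k with
  | zero => exact ⟨0, by simpa using HasWeakDerivAtZero.const z⟩
  | succ k ih =>
    obtain ⟨w, hw⟩ := ih
    simp only [pow_succ', Module.End.mul_apply]
    exact ⟨_, hw.pencil N M⟩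

lemma hasWeakDerivAtZero_pow_commutator {V : Type*} [AddCommGroup V] [Module ℂ V]
    (N A : Module.End ℂ V) (k : ℕ) (z : V) :
    HasWeakDerivAtZero (fun t : ℂ ↦ ((N + t • (A * N - N * A)) ^ k) z)
      (A ((N ^ k) z) - (N ^ k) (A z)) := by
  induction k with
  | zero => simpa using HasWeakDerivAtZero.const z
  | succ k ih =>
    have := ih.pencil N (A * N - N * A)
    simp only [pow_succ', Module.End.mul_apply]
    convert this using 1
    simp [Module.End.mul_apply]

section Generic

variable {L : Type*} [LieRing L] [LieAlgebra ℂ L]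

/-- A linear map whose rank measures how generic `x` is with respect to the subspace `U`. -/
noncomputable def genericityMap (n : ℕ) (U : Submodule ℂ L) (x : L) :
    (L × (Fin n → L)) →ₗ[ℂ] (L × ℂ) × ((Fin n → L) × (L ⧸ U)) :=
  ((ad ℂ L x).prod (killingForm ℂ L x)).prodMap
    ((LinearMap.pi fun k : Fin n ↦ (ad ℂ L x ^ (2 * (k : ℕ))) ∘ₗ LinearMap.proj k).prod
      (U.mkQ ∘ₗ ∑ k : Fin n, (ad ℂ L x ^ (k : ℕ)) ∘ₗ LinearMap.proj k))

lemma genericityMap_apply (n : ℕ) (U : Submodule ℂ L) (x c : L) (z : Fin n → L) :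
    genericityMap n U x (c, z) = ((⁅x, c⁆, killingForm ℂ L x c),
      (fun k : Fin n ↦ (ad ℂ L x ^ (2 * (k : ℕ))) (z k),
        U.mkQ (∑ k : Fin n, (ad ℂ L x ^ (k : ℕ)) (z k)))) := by
  simp only [genericityMap, LinearMap.prodMap_apply, LinearMap.prod_apply, Function.prod,
    LinearMap.comp_apply, LinearMap.sum_apply, LinearMap.proj_apply, ad_apply]
  rfl

lemma hasWeakDerivAtZero_genericityMap (n : ℕ) (U : Submodule ℂ L) (x v c : L) {z : Fin n → L}
    {w : ℕ → Fin n → L}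
    (hw : ∀ j k, HasWeakDerivAtZero (fun t : ℂ ↦ ((ad ℂ L x + t • ad ℂ L v) ^ j) (z k)) (w j k)) :
    HasWeakDerivAtZero (fun t : ℂ ↦ genericityMap n U (x + t • v) (c, z))
      ((⁅v, c⁆, killingForm ℂ L v c),
        (fun k : Fin n ↦ w (2 * k) k, U.mkQ (∑ k : Fin n, w k k))) := by
  simp only [genericityMap_apply, map_add (ad ℂ L), map_smul (ad ℂ L)]
  refine .prodMk (.prodMk ?_ ?_) (.prodMk (.pi fun k ↦ hw _ k) ((HasWeakDerivAtZero.sum _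
    fun k _ ↦ hw _ k).map _))
  · simpa using (HasWeakDerivAtZero.const c).pencil (ad ℂ L x) (ad ℂ L v)
  · simpa using (HasWeakDerivAtZero.const c).pencil (killingForm ℂ L x) (killingForm ℂ L v)

/-- An element of `U` at which `genericityMap` attains its maximal rank on `U`. -/
def IsGeneric (n : ℕ) (U : Submodule ℂ L) (x : L) : Prop :=
  x ∈ U ∧ ∀ y ∈ U, finrank ℂ (LinearMap.range (genericityMap n U y)) ≤
    finrank ℂ (LinearMap.range (genericityMap n U x))

variable [FiniteDimensional ℂ L]

lemma exists_isGeneric (n : ℕ) (U : Submodule ℂ L) : ∃ x, IsGeneric n U x := by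
  let S : Set ℕ := (fun x ↦ finrank ℂ (LinearMap.range (genericityMap n U x))) '' U
  have hS : BddAbove S := ⟨finrank ℂ ((L × ℂ) × ((Fin n → L) × (L ⧸ U))), by
    rintro _ ⟨x, -, rfl⟩
    exact Submodule.finrank_le _⟩
  obtain ⟨x, hx, hx'⟩ := Nat.sSup_mem (s := S) ⟨_, 0, U.zero_mem, rfl⟩ hS
  exact ⟨x, hx, fun y hy ↦ hx'.ge.trans' (le_csSup hS ⟨y, hy, rfl⟩)⟩

namespace IsGeneric

variable {n : ℕ} {U : Submodule ℂ L} {x : L}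

lemma mem_range (hx : IsGeneric n U x) {v c : L} (hv : v ∈ U) {z : Fin n → L} {w : ℕ → Fin n → L}
    (h0 : genericityMap n U x (c, z) = 0)
    (hw : ∀ j k, HasWeakDerivAtZero (fun t : ℂ ↦ ((ad ℂ L x + t • ad ℂ L v) ^ j) (z k)) (w j k)) :
    ((⁅v, c⁆, killingForm ℂ L v c), (fun k : Fin n ↦ w (2 * k) k, U.mkQ (∑ k : Fin n, w k k))) ∈
      LinearMap.range (genericityMap n U x) := by
  have := mem_range_of_hasWeakDerivAtZero (fun t ↦ genericityMap n U (x + t • v)) (c := (c, z))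
    (fun a ↦ ?_) (fun t ↦ ?_) (by simpa using h0) (hasWeakDerivAtZero_genericityMap n U x v c hw)
  · simpa using this
  · choose w' hw' using fun j k ↦ exists_hasWeakDerivAtZero_pow (ad ℂ L x) (ad ℂ L v) j (a.2 k)
    exact ⟨_, hasWeakDerivAtZero_genericityMap n U x v a.1 hw'⟩
  · rw [zero_smul, add_zero]
    exact hx.2 _ (U.add_mem hx.1 (U.smul_mem t hv))

lemma exists_lie_eq (hx : IsGeneric n U x) {v c : L} (hv : v ∈ U) (h1 : ⁅x, c⁆ = 0)
    (h2 : killingForm ℂ L x c = 0) :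
    ∃ b, ⁅x, b⁆ = ⁅v, c⁆ ∧ killingForm ℂ L x b = killingForm ℂ L v c := by
  obtain ⟨⟨b, z⟩, hb⟩ := hx.mem_range hv (c := c) (z := 0) (w := 0) (by
    rw [genericityMap_apply]
    simp [h1, h2]
    rfl) (fun j k ↦ by simpa using HasWeakDerivAtZero.const (0 : L))
  rw [genericityMap_apply, Prod.mk.injEq, Prod.mk.injEq] at hb
  exact ⟨b, hb.1⟩

lemma exists_sum_sub_mem (hx : IsGeneric n U x) {a : L} (ha : ⁅a, x⁆ ∈ U) {z : Fin n → L}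
    (hz : ∀ k : Fin n, (ad ℂ L x ^ (2 * (k : ℕ))) (z k) = 0)
    (hU : ∑ k : Fin n, (ad ℂ L x ^ (k : ℕ)) (z k) ∈ U) :
    ∃ y : Fin n → L, (∀ k : Fin n, (ad ℂ L x ^ (2 * (k : ℕ))) (y k) = 0) ∧
      ⁅a, ∑ k : Fin n, (ad ℂ L x ^ (k : ℕ)) (z k)⁆ -
        ∑ k : Fin n, (ad ℂ L x ^ (k : ℕ)) (y k) ∈ U := by
  obtain ⟨⟨b, y⟩, hb⟩ := hx.mem_range ha (c := 0) (z := z)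
    (by
      rw [genericityMap_apply, (Submodule.Quotient.mk_eq_zero U).2 hU |> (id : U.mkQ _ = 0 → _)]
      simp [hz]
      rfl)
    (fun j k ↦ by
      rw [← ad_mul_sub_ad_mul]
      exact hasWeakDerivAtZero_pow_commutator (ad ℂ L x) (ad ℂ L a) j (z k))
  rw [genericityMap_apply, Prod.mk.injEq, Prod.mk.injEq, Prod.mk.injEq] at hb
  refine ⟨fun k ↦ y k + ⁅a, z k⁆, fun k ↦ ?_, ?_⟩
  · have := congr_fun hb.2.1 k
    simp only [hz] at this
    rw [map_add, this]
    simp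
  · have := hb.2.2
    rw [← sub_eq_zero, ← map_sub, Submodule.mkQ_apply, Submodule.Quotient.mk_eq_zero] at this
    rw [← neg_mem_iff]
    convert this using 1
    simp only [map_add, Finset.sum_add_distrib, Finset.sum_sub_distrib, ad_apply, lie_sum]
    abel

end IsGeneric

end Generic

namespace IsGeneric

variable {L : Type*} [LieRing L] [LieAlgebra ℂ L] [FiniteDimensional ℂ L]
variable {H : L} {I : IntegralGrading H} {n : ℕ} {x d : L}

lemma lie_mem_sup (hx : IsGeneric n (I.fil 1) x) (hd : IsCharacteristic x d)
    (J : IntegralGrading d) (hn : ad ℂ L x ^ n = 0) {a w : L} (ha : ⁅a, x⁆ ∈ I.fil 1)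
    (hw : w ∈ I.fil 1) (hw' : w ∈ J.fil 1) : ⁅a, w⁆ ∈ I.fil 1 ⊔ J.fil 1 := by
  obtain ⟨z, hz, rfl⟩ := hd.exists_sum_of_mem_fil_one J hn hw'
  obtain ⟨y, hy, hy'⟩ := hx.exists_sum_sub_mem ha hz hw
  exact Submodule.mem_sup.2 ⟨_, hy', _, sum_mem fun k _ ↦ hd.pow_apply_mem_fil_one J (hy k),
    sub_add_cancel _ _⟩


lemma exists_lie_eq_of_mem (I : IntegralGrading H) (J : IntegralGrading d) {σ : L}
    (hσ : σ ∈ I.fil 0) (hσ' : σ - d ∈ J.fil 1) {w : L} (hw : w ∈ I.fil 1) (hw' : w ∈ J.fil 1) :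
    ∃ v, v ∈ I.fil 1 ∧ v ∈ J.fil 1 ∧ ⁅σ, v⁆ = w := by
  have hσ0 : σ ∈ J.fil 0 := by
    simpa using add_mem (IntegralGrading.fil_anti (by norm_num : (0 : ℤ) ≤ 1) hσ')
      J.self_mem_fil_zero
  have hmaps : ∀ v ∈ I.fil 1 ⊓ J.fil 1, ad ℂ L σ v ∈ I.fil 1 ⊓ J.fil 1 := fun v hv ↦
    ⟨by simpa using IntegralGrading.lie_mem_fil hσ hv.1,
      by simpa using IntegralGrading.lie_mem_fil hσ0 hv.2⟩
  have hinj : Function.Injective ((ad ℂ L σ).restrict hmaps) := by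
    refine (injective_iff_map_eq_zero _).2 fun v hv ↦ Subtype.ext ?_
    exact IntegralGrading.eq_zero_of_lie_eq_zero_of_mem_fil_one hσ' v.2.2 (congr_arg Subtype.val hv)
  obtain ⟨v, hv⟩ := LinearMap.injective_iff_surjective.1 hinj ⟨w, hw, hw'⟩
  exact ⟨v, v.2.1, v.2.2, congr_arg Subtype.val hv⟩

variable [IsKilling ℂ L]

lemma mem_fil_zero_of_lie_eq_zero (hx : IsGeneric n (I.fil 1) x) (hd : IsCharacteristic x d)
    (J : IntegralGrading d) {c : L} (hc : ⁅x, c⁆ = 0) : c ∈ I.fil 0 := by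
  refine I.mem_fil_of_killingForm_eq_zero (j := 1) (by norm_num) fun v hv ↦ ?_
  have key : ∀ (i : ℤ) (c : L), ⁅x, c⁆ = 0 → ⁅d, c⁆ = (i : ℂ) • c → killingForm ℂ L v c = 0 := by
    intro i c hc hdc
    by_cases h0 : c = 0
    · rw [h0, map_zero]
    have hi : 0 ≤ i := by
      simpa using hd.le_of_mem_range (k := 0) h0 hc ⟨c, by simp⟩ hdc
    obtain ⟨b, hb1, hb2⟩ := hx.exists_lie_eq hv hc
      (killingForm_eq_zero_of_lie_eq_zero hc hd.isNilpotent_ad)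
    have h1 : killingForm ℂ L ⁅d, x⁆ b = -killingForm ℂ L ⁅d, c⁆ v := by
      rw [killingForm_lie_left, killingForm_lie_left, hb1, ← lie_skew, map_neg]
    rw [hd.lie_eq, hdc, map_smul, map_smul, LinearMap.smul_apply, LinearMap.smul_apply, hb2,
      killingForm_symm c v, eq_neg_iff_add_eq_zero, ← add_smul, smul_eq_zero] at h1
    exact h1.resolve_left (by exact_mod_cast (by omega : 2 + i ≠ 0))
  rw [← J.sum_proj c, map_sum, LinearMap.sum_apply]
  refine Finset.sum_eq_zero fun i _ ↦ ?_
  rw [killingForm_symm]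
  refine key i _ ?_ (J.lie_proj i c)
  rw [← J.proj_lie (s := 2) (by simpa using hd.lie_eq), hc, map_zero]

lemma exists_sub_mem_fil_one (I : IntegralGrading H) (J : IntegralGrading d) :
    ∃ σ ∈ I.fil 0, σ - d ∈ J.fil 1 := by
  have h : d ∈ I.fil 0 ⊔ J.fil 1 := by
    refine mem_of_killingForm_eq_zero _ fun w hw ↦ J.killingForm_self_eq_zero ?_ ?_
    · refine J.mem_fil_of_killingForm_eq_zero (j := 1) (by norm_num) fun a ha ↦ ?_
      rw [killingForm_symm]
      exact hw a (Submodule.mem_sup_right ha)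
    · refine ⟨_, IntegralGrading.pow_ad_eq_zero_of_mem_fil_one (I := I) ?_⟩
      refine I.mem_fil_of_killingForm_eq_zero (j := 0) (by norm_num) fun a ha ↦ ?_
      rw [killingForm_symm]
      exact hw a (Submodule.mem_sup_left ha)
  obtain ⟨σ, hσ, q, hq, h⟩ := Submodule.mem_sup.1 h
  have hq' : σ - d = -q := by rw [← h, sub_add_cancel_left]
  exact ⟨σ, hσ, hq' ▸ neg_mem hq⟩

lemma mem_fil_zero_of_lie_mem (hx : IsGeneric n (I.fil 1) x) (hd : IsCharacteristic x d)
    (J : IntegralGrading d) (hn : ad ℂ L x ^ n = 0) {a : L} (ha : ⁅a, x⁆ ∈ I.fil 1) :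
    a ∈ I.fil 0 := by
  obtain ⟨σ, hσ, hσd⟩ := exists_sub_mem_fil_one I J
  have hσ0 : σ ∈ J.fil 0 := by
    simpa using add_mem (IntegralGrading.fil_anti (by norm_num : (0 : ℤ) ≤ 1) hσd)
      J.self_mem_fil_zero
  have horth : ∀ b w : L, ⁅b, x⁆ ∈ I.fil 1 → w ∈ I.fil 1 → w ∈ J.fil 1 →
      killingForm ℂ L b w = 0 := by
    intro b w hb hw hw'
    obtain ⟨v, hv, hv', rfl⟩ := exists_lie_eq_of_mem I J hσ hσd hw hw'
    obtain ⟨p, hp, q, hq, hpq⟩ := Submodule.mem_sup.1 (hx.lie_mem_sup hd J hn hb hv hv')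
    rw [← lie_skew, map_neg, ← killingForm_lie_left, ← hpq, map_add, LinearMap.add_apply,
      IntegralGrading.killingForm_eq_zero_of_mem_fil hp hσ (by norm_num),
      IntegralGrading.killingForm_eq_zero_of_mem_fil hq hσ0 (by norm_num), add_zero, neg_zero]
  have hmap : ∀ w ∈ I.fil 1, w ∈ J.fil 1 → w ∈ (I.fil 0).map (ad ℂ L x) := by
    intro w hw hw'
    refine mem_of_killingForm_eq_zero _ fun b hb ↦ ?_
    rw [killingForm_symm]
    refine horth b w (I.mem_fil_of_killingForm_eq_zero (j := 0) (by norm_num) fun c hc ↦ ?_) hw hw'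
    rw [killingForm_lie_left, killingForm_symm]
    exact hb _ ⟨c, hc, rfl⟩
  have ha' : a ∈ I.fil 0 ⊔ J.fil 0 := by
    refine mem_of_killingForm_eq_zero _ fun w hw ↦ horth a w ha ?_ ?_
    · refine I.mem_fil_of_killingForm_eq_zero (j := 0) (by norm_num) fun b hb ↦ ?_
      rw [killingForm_symm]
      exact hw b (Submodule.mem_sup_left hb)
    · refine J.mem_fil_of_killingForm_eq_zero (j := 0) (by norm_num) fun b hb ↦ ?_
      rw [killingForm_symm]
      exact hw b (Submodule.mem_sup_right hb)
  obtain ⟨p, hp, q, hq, rfl⟩ := Submodule.mem_sup.1 ha'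
  have hpx : ⁅p, x⁆ ∈ I.fil 1 := by simpa using IntegralGrading.lie_mem_fil hp hx.1
  have hqx : ⁅q, x⁆ ∈ I.fil 1 := by simpa using sub_mem ha hpx
  have hqx' : ⁅q, x⁆ ∈ J.fil 1 := by
    have := IntegralGrading.lie_mem_fil hq
      (J.mem_fil_of_lie_eq (i := 2) (by simpa using hd.lie_eq) le_rfl)
    exact IntegralGrading.fil_anti (by norm_num) this
  obtain ⟨b, hb, hb'⟩ := hmap _ hqx hqx'
  have hqb : q + b ∈ I.fil 0 := hx.mem_fil_zero_of_lie_eq_zero hd J (by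
    rw [lie_add, ← ad_apply ℂ L x b, hb', ← lie_skew, neg_add_cancel])
  have hq' : q ∈ I.fil 0 := by simpa using sub_mem hqb hb
  exact add_mem hp hq'

end IsGeneric

/-- Richardson's dense orbit theorem for the nonnegative part of a grading. -/
theorem IntegralGrading.exists_lie_eq_of_mem_fil_one {L : Type*} [LieRing L] [LieAlgebra ℂ L]
    [FiniteDimensional ℂ L] [IsKilling ℂ L] {H : L} (I : IntegralGrading H) :
    ∃ x ∈ I.fil 1, ∀ v ∈ I.fil 1, ∃ a ∈ I.fil 0, ⁅x, a⁆ = v := by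
  obtain ⟨x, hx⟩ := exists_isGeneric (2 * I.bound + 1) (I.fil 1)
  have hn := pow_ad_eq_zero_of_mem_fil_one hx.1
  obtain ⟨y, hy⟩ := exists_lie_lie_eq_two_smul ⟨_, hn⟩
  obtain ⟨d, hd, ⟨J⟩, -⟩ := exists_isCharacteristic ⟨_, hn⟩ hy
  refine ⟨x, hx.1, fun v hv ↦ ?_⟩
  refine mem_of_killingForm_eq_zero ((I.fil 0).map (ad ℂ L x)) fun w hw ↦ ?_
  refine killingForm_eq_zero_of_mem_fil hv (hx.mem_fil_zero_of_lie_mem hd J hn ?_) (by norm_num)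
  refine I.mem_fil_of_killingForm_eq_zero (j := 0) (by norm_num) fun c hc ↦ ?_
  rw [killingForm_lie_left, killingForm_symm]
  exact hw _ ⟨c, hc, rfl⟩

lemma finrank_map_add_finrank_inf_ker {V W : Type*} [AddCommGroup V] [Module ℂ V]
    [FiniteDimensional ℂ V] [AddCommGroup W] [Module ℂ W] (f : V →ₗ[ℂ] W) (A : Submodule ℂ V) :
    finrank ℂ (A.map f) + finrank ℂ (A ⊓ LinearMap.ker f : Submodule ℂ V) = finrank ℂ A := by
  rw [← LinearMap.finrank_range_add_finrank_ker (f.domRestrict A), LinearMap.range_domRestrict,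
    LinearMap.ker_domRestrict, ← Submodule.finrank_map_subtype_eq,
    Submodule.map_comap_subtype]

lemma finrank_map_mkQ_add_finrank {V : Type*} [AddCommGroup V] [Module ℂ V]
    [FiniteDimensional ℂ V] {A B : Submodule ℂ V} (h : B ≤ A) :
    finrank ℂ (A.map B.mkQ) + finrank ℂ B = finrank ℂ A := by
  rw [← finrank_map_add_finrank_inf_ker B.mkQ A, Submodule.ker_mkQ, inf_eq_right.2 h]

variable {L : Type*} [LieRing L] [LieAlgebra ℂ L] [FiniteDimensional ℂ L]

/-- If `e` acts injectively on the zero weight space, then the elements with dense orbit in the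
part of positive weights have weights at least two. -/
lemma IntegralGrading.mem_fil_two {e x d : L} (I : IntegralGrading d)
    (he : ⁅d, e⁆ = (2 : ℂ) • e) (h0 : ∀ z : L, ⁅d, z⁆ = 0 → ⁅e, z⁆ = 0 → z = 0)
    (hx : x ∈ I.fil 1) (hsurj : ∀ v ∈ I.fil 1, ∃ a ∈ I.fil 0, ⁅x, a⁆ = v) : x ∈ I.fil 2 := by
  by_contra hx2
  have he2 : e ∈ I.fil 2 := I.mem_fil_of_lie_eq (i := 2) (by simpa using he) le_rfl
  have h1 := finrank_map_add_finrank_inf_ker ((I.fil 3).mkQ ∘ₗ ad ℂ L e) (I.fil 0)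
  have h2 := finrank_map_add_finrank_inf_ker ((I.fil 3).mkQ ∘ₗ ad ℂ L x) (I.fil 0)
  have h3 := finrank_map_mkQ_add_finrank (fil_anti (I := I) (by norm_num : (2 : ℤ) ≤ 3))
  have h4 := finrank_map_mkQ_add_finrank (fil_anti (I := I) (by norm_num : (1 : ℤ) ≤ 3))
  have h5 : finrank ℂ ((I.fil 0).map ((I.fil 3).mkQ ∘ₗ ad ℂ L e)) ≤
      finrank ℂ ((I.fil 2).map (I.fil 3).mkQ) := by
    refine Submodule.finrank_mono ?_
    rw [Submodule.map_comp]
    refine Submodule.map_mono (Submodule.map_le_iff_le_comap.2 fun v hv ↦ ?_)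
    simpa using lie_mem_fil he2 hv
  have h6 : finrank ℂ (I.fil 0 ⊓ LinearMap.ker ((I.fil 3).mkQ ∘ₗ ad ℂ L e) : Submodule ℂ L) ≤
      finrank ℂ (I.fil 1) := by
    refine Submodule.finrank_mono fun v hv ↦ ?_
    have hv3 : ⁅e, v⁆ ∈ I.fil 3 := by
      simpa [Submodule.Quotient.mk_eq_zero] using hv.2
    have hv0 : I.proj 0 v = 0 := by
      refine h0 _ (by simpa using I.lie_proj 0 v) ?_
      rw [← I.proj_lie (s := 2) (by simpa using he)]
      exact mem_fil.1 hv3 _ (by norm_num)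
    simpa [hv0] using sub_proj_mem_fil hv.1
  have h7 : finrank ℂ ((I.fil 1).map (I.fil 3).mkQ) ≤
      finrank ℂ ((I.fil 0).map ((I.fil 3).mkQ ∘ₗ ad ℂ L x)) := by
    refine Submodule.finrank_mono ?_
    rw [Submodule.map_comp]
    refine Submodule.map_mono fun v hv ↦ ?_
    obtain ⟨a, ha, rfl⟩ := hsurj v hv
    exact ⟨a, ha, rfl⟩
  have h8 : I.fil 2 ⊔ Submodule.span ℂ {x} ≤
      I.fil 0 ⊓ LinearMap.ker ((I.fil 3).mkQ ∘ₗ ad ℂ L x) := by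
    refine sup_le (fun v hv ↦ ⟨fil_anti (by norm_num) hv, ?_⟩) ?_
    · simpa [Submodule.Quotient.mk_eq_zero] using lie_mem_fil hx hv
    · rw [Submodule.span_singleton_le_iff_mem]
      exact ⟨fil_anti (by norm_num) hx, by simp⟩
  have h9 : finrank ℂ (I.fil 2) <
      finrank ℂ (I.fil 0 ⊓ LinearMap.ker ((I.fil 3).mkQ ∘ₗ ad ℂ L x) : Submodule ℂ L) := by
    refine (Submodule.finrank_lt_finrank_of_lt ?_).trans_le (Submodule.finrank_mono h8)
    refine lt_of_le_of_ne le_sup_left fun h ↦ hx2 ?_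
    rw [h]
    exact Submodule.mem_sup_right (Submodule.mem_span_singleton_self x)
  omega

lemma IntegralGrading.eq_zero_of_lie_eq_self [IsKilling ℂ L] {e d : L} (I : IntegralGrading d)
    (he : ⁅d, e⁆ = (2 : ℂ) • e) (h0 : ∀ z : L, ⁅d, z⁆ = 0 → ⁅e, z⁆ = 0 → z = 0) {z : L}
    (hz : ⁅d, z⁆ = z) : z = 0 := by
  obtain ⟨x, hx, hsurj⟩ := I.exists_lie_eq_of_mem_fil_one
  have hx2 := I.mem_fil_two he h0 hx hsurj
  have hz' : ⁅d, z⁆ = ((1 : ℤ) : ℂ) • z := by simpa using hz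
  obtain ⟨a, ha, h⟩ := hsurj z (I.mem_fil_of_lie_eq hz' le_rfl)
  have hz2 := mem_fil.1 (lie_mem_fil hx2 ha) 1 (by norm_num)
  rwa [h, I.proj_of_lie_eq hz', if_pos rfl] at hz2

lemma isNilpotent_ad_of_lie_eq_zero [IsKilling ℂ L] {e z : L}
    (he : ∀ s : L, ⁅s, e⁆ = 0 → (ad ℂ L s).IsSemisimple → s = 0) (hz : ⁅e, z⁆ = 0) :
    IsNilpotent (ad ℂ L z) := by
  obtain ⟨s, hs, hnil, hμ⟩ := exists_semisimple_part z
  have hse := (hμ 0 e).2 ((mem_maxGenEigenspace _ _ _).2 ⟨1, by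
    rw [pow_one, zero_smul, sub_zero, ad_apply, ← lie_skew, hz, neg_zero]⟩)
  rw [zero_smul] at hse
  simpa [he s hse hs] using hnil

lemma IsCharacteristic.eq_zero_of_lie_eq_zero [IsKilling ℂ L] {e d z : L}
    (hd : IsCharacteristic e d)
    (he : ∀ s : L, ⁅s, e⁆ = 0 → (ad ℂ L s).IsSemisimple → s = 0) (hz : ⁅d, z⁆ = 0)
    (hez : ⁅e, z⁆ = 0) : z = 0 := by
  have hself : ∀ c : L, ⁅e, c⁆ = 0 → killingForm ℂ L c c = 0 := fun c hc ↦
    killingForm_eq_zero_of_lie_eq_zero (lie_self c) (isNilpotent_ad_of_lie_eq_zero he hc)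
  have horth : ∀ c : L, ⁅e, c⁆ = 0 → killingForm ℂ L z c = 0 := by
    intro c hc
    have h := hself (z + c) (by rw [lie_add, hez, hc, add_zero])
    rw [map_add, map_add, LinearMap.add_apply, LinearMap.add_apply, hself z hez, hself c hc,
      killingForm_symm c z] at h
    linear_combination h / 2
  obtain ⟨y, rfl⟩ := exists_lie_eq_of_killingForm_eq_zero horth
  by_contra h0
  have := hd.le_of_mem_range (k := 1) (i := 0) h0 hez ⟨y, by simp⟩ (by simpa using hz)
  omega

lemma exists_even_two_le_of_isDistinguished [IsKilling ℂ L] {e h f : L} (ht : IsSl2Triple h e f)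
    (hnil : IsNilpotent (ad ℂ L e))
    (hdist : ∀ s : L, ⁅s, e⁆ = 0 → (ad ℂ L s).IsSemisimple → s = 0) {m : ℂ} {z : L} (hz : z ≠ 0)
    (hze : ⁅z, e⁆ = 0) (hm : ⁅h, z⁆ = m • z) : ∃ n : ℕ, Even n ∧ 2 ≤ n ∧ m = n := by
  obtain ⟨d, hd, ⟨I⟩, hweight⟩ := exists_isCharacteristic (x := e) (y := f) hnil
    (by rw [ht.lie_e_f]; exact ht.lie_h_e_smul ℂ)
  rw [ht.lie_e_f] at hweight
  have hez : ⁅e, z⁆ = 0 := by rw [← lie_skew, hze, neg_zero]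
  have h0 : ∀ z : L, ⁅d, z⁆ = 0 → ⁅e, z⁆ = 0 → z = 0 := fun z hz hez ↦
    hd.eq_zero_of_lie_eq_zero hdist hz hez
  have P : ht.HasPrimitiveVectorWith z m := ⟨hz, hm, hez⟩
  obtain ⟨n, rfl⟩ := P.exists_nat
  have heven : Even n := by
    by_contra hodd
    obtain ⟨k, rfl⟩ := Nat.not_even_iff_odd.1 hodd
    refine P.pow_toEnd_f_ne_zero_of_eq_nat rfl (i := k) (by omega)
      (I.eq_zero_of_lie_eq_self hd.lie_eq h0 ?_)
    have := hweight _ _ (P.lie_h_pow_toEnd_f k)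
    rw [this]
    push_cast
    rw [show (2 * (k : ℂ) + 1 - 2 * k) = 1 by ring, one_smul]
  refine ⟨n, heven, ?_, rfl⟩
  by_contra hn
  obtain rfl : n = 0 := by
    obtain ⟨k, rfl⟩ := heven
    omega
  exact hz (h0 z (by simpa using hweight _ _ hm) hez)

end Auxiliary

/-- For a distinguished nilpotent `e`, every eigenvalue of `ad h` on `𝔤^e`
is a nonnegative even integer, `2` is an eigenvalue with eigenvector `e`, and `2` is the
smallest eigenvalue of `ad h` on `𝔤^e`. -/
theorem eigenvalues_even_and_two_le
    (L : Type*) [LieRing L] [LieAlgebra ℂ L] [FiniteDimensional ℂ L]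
    [LieAlgebra.IsSemisimple ℂ L] (e h f : L)
    (ht : IsSl2Triple h e f) (he : IsNilpotent (LieAlgebra.ad ℂ L e))
    (hdist : IsDistinguished L e) :
    (∀ m : ℂ, (∃ z : L, z ≠ 0 ∧ ⁅z, e⁆ = 0 ∧ ⁅h, z⁆ = m • z) →
      ∃ k : ℕ, Even k ∧ m = (k : ℂ)) ∧
    (e ≠ 0 ∧ ⁅h, e⁆ = (2 : ℂ) • e) ∧
    (∀ m : ℂ, (∃ z : L, z ≠ 0 ∧ ⁅z, e⁆ = 0 ∧ ⁅h, z⁆ = m • z) → (2 : ℂ) ≤ m) := by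
  refine ⟨fun m ⟨z, hz, hze, hm⟩ ↦ ?_, ⟨ht.e_ne_zero, ht.lie_h_e_smul ℂ⟩,
    fun m ⟨z, hz, hze, hm⟩ ↦ ?_⟩
  · obtain ⟨n, hn, -, hmn⟩ := exists_even_two_le_of_isDistinguished ht he hdist hz hze hm
    exact ⟨n, hn, hmn⟩
  · obtain ⟨n, -, hn, rfl⟩ := exists_even_two_le_of_isDistinguished ht he hdist hz hze hm
    exact_mod_cast hn
end
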